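/- arXiv:2301.07031 — 7 statements merged into one kernel-verified Lean document; each statement's English description precedes it below -/
import Mathlib

section
/- Let d ≥ 1 and let S ⊂ ℤ^d \ {0} be a finite symmetric set (S = -S), and let a : S → ℂ satisfy a_{-k} = conj(a_k), so that the trigonometric polynomial f(x) = Σ_{k ∈ S} a_k · exp(2πi⟨k, x⟩) defines a real-valued function on the torus 𝕋^d = ℝ^d/ℤ^d with mean value 0. Let Λ = {‖k‖ : k ∈ S} be the set of distinct Euclidean norms of frequencies in S. Then f has a zero in every closed ball (with respect to the torus metric) of radius r = d^{3/2} · Σ_{λ ∈ Λ} 1/λ; that is, for every x₀ ∈ 𝕋^d there exists y ∈ 𝕋^d with dist(y, x₀) ≤ d^{3/2} Σ_{λ ∈ Λ} 1/λ and f(y) = 0. -/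
open scoped Real

/-- The quotient (torus) distance on `ℝ^d / ℤ^d`, computed between lifts:
the infimum of Euclidean distances between `x` and all `ℤ^d`-translates of `y`. -/
noncomputable def torusDist {d : ℕ} (x y : EuclideanSpace ℝ (Fin d)) : ℝ :=
  ⨅ m : Fin d → ℤ, dist x (y + (WithLp.equiv 2 (Fin d → ℝ)).symm fun i => (m i : ℝ))

open MeasureTheory

namespace TrigZero

noncomputable def G {d : ℕ} (S : Finset (Fin d → ℤ)) (a : (Fin d → ℤ) → ℂ)
    (x : EuclideanSpace ℝ (Fin d)) : ℂ :=
  ∑ k ∈ S, a k * Complex.exp (2 * (π : ℂ) * Complex.I * ∑ i, (k i : ℂ) * (x i : ℂ))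

lemma G_cont {d : ℕ} (S : Finset (Fin d → ℤ)) (a : (Fin d → ℤ) → ℂ) : Continuous (G S a) := by
  unfold G
  fun_prop

/-- integration by parts against `1 + cos (β t)` -/
lemma one_dim (β h : ℝ) (c : ℂ) (hb : β * h = π) :
    ∫ t in (-h)..h, ((-(β ^ 2 : ℂ) * Complex.cos (β * t) + c ^ 2 * (1 + Complex.cos (β * t))) *
      Complex.exp (Complex.I * c * t)) = 0 := by
  have hder : ∀ t : ℝ, HasDerivAt (fun t : ℝ =>
      (-(β : ℂ) * Complex.sin (β * t) - Complex.I * c * (1 + Complex.cos (β * t))) *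
        Complex.exp (Complex.I * c * t))
      ((-(β ^ 2 : ℂ) * Complex.cos (β * t) + c ^ 2 * (1 + Complex.cos (β * t))) *
      Complex.exp (Complex.I * c * t)) t := by
    intro t
    have h0 : HasDerivAt (fun z : ℂ =>
      (-(β : ℂ) * Complex.sin (β * z) - Complex.I * c * (1 + Complex.cos (β * z))) *
        Complex.exp (Complex.I * c * z))
      ((-(β ^ 2 : ℂ) * Complex.cos (β * t) + c ^ 2 * (1 + Complex.cos (β * t))) *
      Complex.exp (Complex.I * c * t)) (t : ℂ) := by
      have hl : HasDerivAt (fun z : ℂ => (β : ℂ) * z) β (t : ℂ) := by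
        simpa using (hasDerivAt_id (t : ℂ)).const_mul (β : ℂ)
      have he : HasDerivAt (fun z : ℂ => Complex.I * c * z) (Complex.I * c) (t : ℂ) := by
        simpa using (hasDerivAt_id (t : ℂ)).const_mul (Complex.I * c)
      have := ((hl.csin.const_mul (-(β : ℂ))).sub
        ((hl.ccos.const_add 1).const_mul (Complex.I * c))).mul he.cexp
      refine this.congr_deriv ?_
      simp only [Pi.sub_apply]
      linear_combination (-c ^ 2 * (1 + Complex.cos (β * t)) *
        Complex.exp (Complex.I * c * t)) * Complex.I_sq
    exact h0.comp_ofReal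
  rw [intervalIntegral.integral_eq_sub_of_hasDerivAt (fun t _ => hder t)]
  · have e1 : (β : ℂ) * h = π := by exact_mod_cast hb
    have e2 : (β : ℂ) * ((-h : ℝ) : ℂ) = -π := by push_cast; rw [mul_neg, e1]
    rw [e1, e2]
    simp
  · apply Continuous.intervalIntegrable
    fun_prop

lemma one_dim' (β h : ℝ) (c : ℂ) (hb : β * h = π) (hh : 0 < h) (hβ : 0 < β) :
    ∫ t in Set.Icc (-h) h, ((1 - Real.cos (β * t) : ℝ) : ℂ) * Complex.exp (Complex.I * c * t) =
    (1 - 2 * c ^ 2 / β ^ 2) *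
    ∫ t in Set.Icc (-h) h, ((1 + Real.cos (β * t) : ℝ) : ℂ) * Complex.exp (Complex.I * c * t) := by
  have hle : -h ≤ h := by linarith
  have hβ' : (β : ℂ) ≠ 0 := by exact_mod_cast hβ.ne'
  rw [integral_Icc_eq_integral_Ioc, integral_Icc_eq_integral_Ioc,
    ← intervalIntegral.integral_of_le hle, ← intervalIntegral.integral_of_le hle]
  have h1 := one_dim β h c hb
  rw [← sub_eq_zero, ← intervalIntegral.integral_const_mul, ← intervalIntegral.integral_sub]
  · refine Eq.trans ?_ ((congrArg (fun z => 2 / (β : ℂ) ^ 2 * z) h1).trans (mul_zero _))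
    rw [← intervalIntegral.integral_const_mul]
    congr 1
    ext t
    push_cast
    field_simp
    ring
  · apply Continuous.intervalIntegrable
    fun_prop
  · apply Continuous.intervalIntegrable
    fun_prop

lemma one_dim_mass (β h : ℝ) (s : ℝ) (hb : β * h = π) (hh : 0 < h) (hβ : 0 < β) :
    ∫ t in Set.Icc (-h) h, (1 + s * Real.cos (β * t)) = 2 * h := by
  have hle : -h ≤ h := by linarith
  rw [integral_Icc_eq_integral_Ioc, ← intervalIntegral.integral_of_le hle]
  have hder : ∀ t : ℝ, HasDerivAt (fun t : ℝ => t + s / β * Real.sin (β * t))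
      (1 + s * Real.cos (β * t)) t := by
    intro t
    have hl : HasDerivAt (fun z : ℝ => β * z) β t := by
      simpa using (hasDerivAt_id t).const_mul β
    have := (hasDerivAt_id t).add (hl.sin.const_mul (s / β))
    refine this.congr_deriv ?_
    have hne := hβ.ne'
    field_simp
  rw [intervalIntegral.integral_eq_sub_of_hasDerivAt (fun t _ => hder t)]
  · have e2 : β * (-h) = -π := by rw [mul_neg, hb]
    rw [hb, e2]
    simp
    ring
  · apply Continuous.intervalIntegrable
    fun_prop

noncomputable def sg {d : ℕ} (i j : Fin d) : ℝ := if j = i then -1 else 1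

noncomputable def W {d : ℕ} (β : ℝ) (u : Fin d → ℝ) : ℝ :=
  ∑ i, ∏ j, (1 + sg i j * Real.cos (β * u j))

lemma W_nonneg {d : ℕ} (β : ℝ) (u : Fin d → ℝ) : 0 ≤ W β u := by
  unfold W sg
  refine Finset.sum_nonneg fun i _ => Finset.prod_nonneg fun j _ => ?_
  have := Real.cos_le_one (β * u j)
  have := Real.neg_one_le_cos (β * u j)
  split_ifs <;> linarith

lemma W_cont {d : ℕ} (β : ℝ) : Continuous (W β : (Fin d → ℝ) → ℝ) := by
  unfold W
  fun_prop

noncomputable def nu (d : ℕ) (h : ℝ) : Measure (Fin d → ℝ) :=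
  Measure.pi (fun _ : Fin d => (volume : Measure ℝ).restrict (Set.Icc (-h) h))

lemma nu_eq (d : ℕ) (h : ℝ) : nu d h =
    (volume : Measure (Fin d → ℝ)).restrict (Set.pi Set.univ fun _ => Set.Icc (-h) h) := by
  unfold nu
  rw [volume_pi, Measure.restrict_pi_pi]

lemma nu_int {d : ℕ} (h : ℝ) {E : Type*} [NormedAddCommGroup E]
    (g : (Fin d → ℝ) → E) (hg : Continuous g) : Integrable g (nu d h) := by
  rw [nu_eq]
  exact hg.continuousOn.integrableOn_compact (isCompact_univ_pi fun _ => isCompact_Icc)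

lemma W_mass {d : ℕ} (β h : ℝ) (hb : β * h = π) (hh : 0 < h) (hβ : 0 < β) :
    ∫ u, W β u ∂(nu d h) = d * (2 * h) ^ d := by
  unfold W
  rw [integral_finsetSum]
  · have : ∀ i : Fin d, ∫ u, ∏ j, (1 + sg i j * Real.cos (β * u j)) ∂(nu d h) = (2 * h) ^ d := by
      intro i
      unfold nu
      rw [integral_fintype_prod_eq_prod (𝕜 := ℝ) (fun j t => 1 + sg i j * Real.cos (β * t))]
      simp [one_dim_mass β h _ hb hh hβ]
    simp [this]
  · intro i _
    apply nu_int
    fun_prop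

/-- The multiplier -/
noncomputable def mm {d : ℕ} (β h : ℝ) (k : Fin d → ℤ) : ℂ :=
  ∫ u, (W β u : ℂ) * Complex.exp (2 * (π : ℂ) * Complex.I * ∑ i, (k i : ℂ) * (u i : ℂ)) ∂(nu d h)

lemma mm_zero {d : ℕ} (β h l : ℝ) (hb : β * h = π) (hh : 0 < h) (hβ : 0 < β)
    (hl : β ^ 2 * d = 8 * π ^ 2 * l ^ 2) (k : Fin d → ℤ) (hk : ∑ i, (k i : ℝ) ^ 2 = l ^ 2) :
    mm β h k = 0 := by
  have hβ' : (β : ℂ) ≠ 0 := by exact_mod_cast hβ.ne'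
  set Q : Fin d → ℂ := fun j => ∫ t in Set.Icc (-h) h, ((1 + Real.cos (β * t) : ℝ) : ℂ) *
    Complex.exp (Complex.I * (2 * π * k j) * t) with hQ
  have key : ∀ i : Fin d, ∫ u, (∏ j, (((1 + sg i j * Real.cos (β * u j) : ℝ) : ℂ) *
      Complex.exp (Complex.I * (2 * π * k j) * u j))) ∂(nu d h) =
      (1 - 2 * (2 * π * k i) ^ 2 / β ^ 2) * ∏ j, Q j := by
    intro i
    unfold nu
    rw [integral_fintype_prod_eq_prod (𝕜 := ℂ) (fun j (t : ℝ) =>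
      ((1 + sg i j * Real.cos (β * t) : ℝ) : ℂ) * Complex.exp (Complex.I * (2 * π * k j) * t))]
    rw [← Finset.mul_prod_erase _ _ (Finset.mem_univ i),
      ← Finset.mul_prod_erase _ Q (Finset.mem_univ i),
      ← mul_assoc (1 - 2 * (2 * (π : ℂ) * k i) ^ 2 / (β : ℂ) ^ 2)]
    refine congrArg₂ (· * ·) ?_ ?_
    · rw [hQ]
      simp only
      rw [← one_dim' β h _ hb hh hβ]
      simp [sg, sub_eq_add_neg]
    · apply Finset.prod_congr rfl
      intro j hj
      have : j ≠ i := (Finset.mem_erase.1 hj).1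
      simp [sg, this, hQ]
  have e : mm β h k = ∑ i, (1 - 2 * (2 * π * k i) ^ 2 / β ^ 2) * ∏ j, Q j := by
    rw [← Finset.sum_congr rfl (fun i _ => key i), ← integral_finsetSum]
    · unfold mm W
      congr 1
      ext u
      rw [Complex.ofReal_sum, Finset.sum_mul]
      apply Finset.sum_congr rfl
      intro i _
      rw [Finset.prod_mul_distrib, ← Complex.exp_sum, Complex.ofReal_prod, Finset.mul_sum]
      congr 2
      apply Finset.sum_congr rfl
      intro j _
      ring
    · intro i _
      apply nu_int
      fun_prop
  rw [e, ← Finset.sum_mul]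
  have hk' : ∑ i, (k i : ℂ) ^ 2 = (l : ℂ) ^ 2 := by exact_mod_cast hk
  have hl' : (β : ℂ) ^ 2 * d = 8 * π ^ 2 * l ^ 2 := by exact_mod_cast hl
  have : ∑ i, (1 - 2 * (2 * (π : ℂ) * k i) ^ 2 / (β : ℂ) ^ 2) = 0 := by
    have : ∀ i, 2 * (2 * (π : ℂ) * k i) ^ 2 / (β : ℂ) ^ 2 = 8 * π ^ 2 / β ^ 2 * (k i : ℂ) ^ 2 := by
      intro i; ring
    simp only [this, Finset.sum_sub_distrib, ← Finset.mul_sum, hk']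
    simp only [Finset.sum_const, Finset.card_univ, Fintype.card_fin, nsmul_eq_mul, mul_one]
    field_simp
    linear_combination hl'
  rw [this, zero_mul]

lemma G_conv {d : ℕ} (β h : ℝ) (S : Finset (Fin d → ℤ)) (a : (Fin d → ℤ) → ℂ)
    (x : EuclideanSpace ℝ (Fin d)) :
    G S (fun k => a k * mm β h k) x =
      ∫ u, (W β u : ℂ) * G S a (x + WithLp.toLp 2 u) ∂(nu d h) := by
  have hW := W_cont (d := d) β
  unfold G
  simp only [Finset.mul_sum (s := S)]
  rw [integral_finsetSum]
  · apply Finset.sum_congr rfl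
    intro k _
    unfold mm
    rw [mul_right_comm, ← integral_const_mul]
    congr 1
    ext u
    simp only [PiLp.add_apply, Complex.ofReal_add, mul_add, Finset.sum_add_distrib, Complex.exp_add]
    ring
  · intro k _
    apply nu_int
    fun_prop

lemma kernel {d : ℕ} (hd : 1 ≤ d) (l : ℝ) (hl : 0 < l) :
    ∃ m : (Fin d → ℤ) → ℂ, (∀ k, ∑ i, (k i : ℝ) ^ 2 = l ^ 2 → m k = 0) ∧
      ∀ (S : Finset (Fin d → ℤ)) (a : (Fin d → ℤ) → ℂ) (x : EuclideanSpace ℝ (Fin d)) (c : ℝ),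
        (∀ y, dist y x ≤ (d : ℝ) ^ ((3 : ℝ) / 2) * (1 / l) → c ≤ (G S a y).re) →
        c ≤ (G S (fun k => a k * m k) x).re := by
  have hd1 : (1 : ℝ) ≤ d := by exact_mod_cast hd
  have hd0 : (0 : ℝ) < d := by linarith
  set β : ℝ := Real.sqrt (8 * π ^ 2 * l ^ 2 / d) with hβd
  have hpos : 0 < 8 * π ^ 2 * l ^ 2 / d := by positivity
  have hβ : 0 < β := Real.sqrt_pos.2 hpos
  have hβ2 : β ^ 2 * d = 8 * π ^ 2 * l ^ 2 := by
    rw [hβd, Real.sq_sqrt hpos.le]; field_simp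
  set h : ℝ := π / β with hhd
  have hh : 0 < h := by positivity
  have hb : β * h = π := by rw [hhd]; field_simp
  have hh2 : 8 * l ^ 2 * h ^ 2 = d := by
    have h1 : β ^ 2 * h ^ 2 = π ^ 2 := by rw [← mul_pow, hb]
    have h2 : (8 * l ^ 2 * h ^ 2) * π ^ 2 = d * π ^ 2 := by
      rw [← h1]; linear_combination (-h ^ 2) * hβ2 + 8 * l ^ 2 * h ^ 2 * h1
    exact mul_right_cancel₀ (by positivity) h2
  set M : ℝ := d * (2 * h) ^ d with hM
  have hMpos : 0 < M := by positivity
  refine ⟨fun k => mm β h k * ((M⁻¹ : ℝ) : ℂ), fun k hk => ?_, fun S a x c hc => ?_⟩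
  · simp [mm_zero β h l hb hh hβ hβ2 k hk]
  have e1 : G S (fun k => a k * (mm β h k * ((M⁻¹ : ℝ) : ℂ))) x =
      ((M⁻¹ : ℝ) : ℂ) * G S (fun k => a k * mm β h k) x := by
    unfold G
    rw [Finset.mul_sum]
    apply Finset.sum_congr rfl
    intro k _
    ring
  rw [e1, Complex.re_ofReal_mul, inv_mul_eq_div, le_div_iff₀ hMpos, G_conv]
  have hW := W_cont (d := d) β
  have hG := G_cont S a
  have hGc : Continuous fun u : Fin d → ℝ => G S a (x + WithLp.toLp 2 u) := by
    apply hG.comp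
    fun_prop
  have e2 : (∫ u, (W β u : ℂ) * G S a (x + WithLp.toLp 2 u) ∂(nu d h)).re =
      ∫ u, W β u * (G S a (x + WithLp.toLp 2 u)).re ∂(nu d h) := by
    have hi : Integrable (fun u => (W β u : ℂ) * G S a (x + WithLp.toLp 2 u)) (nu d h) := by
      apply nu_int
      fun_prop
    have := integral_re hi
    simp only [RCLike.re_eq_complex_re, Complex.re_ofReal_mul] at this
    exact this.symm
  rw [e2, hM, ← W_mass (d := d) β h hb hh hβ, ← integral_const_mul]
  apply integral_mono_ae
  · apply nu_int
    fun_prop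
  · apply nu_int
    fun_prop
  rw [nu_eq]
  filter_upwards [ae_restrict_mem (MeasurableSet.univ_pi fun _ => measurableSet_Icc)] with u hu
  simp only [mul_comm c]
  apply mul_le_mul_of_nonneg_left _ (W_nonneg β u)
  apply hc
  have hn : dist (x + WithLp.toLp 2 u) x = Real.sqrt (∑ i, (u i) ^ 2) := by
    rw [dist_eq_norm, add_sub_cancel_left, EuclideanSpace.norm_eq]
    simp
  rw [hn]
  apply Real.sqrt_le_iff.2
  refine ⟨by positivity, ?_⟩
  have s1 : ∑ i, (u i) ^ 2 ≤ d * h ^ 2 := by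
    calc ∑ i, (u i) ^ 2 ≤ ∑ i : Fin d, h ^ 2 := by
          apply Finset.sum_le_sum
          intro i _
          have := hu i (Set.mem_univ i)
          exact sq_le_sq' this.1 this.2
      _ = d * h ^ 2 := by simp
  have s2 : ((d : ℝ) ^ ((3 : ℝ) / 2)) ^ 2 = d ^ 3 := by
    rw [← Real.rpow_natCast, ← Real.rpow_mul hd0.le]
    norm_num
  rw [mul_pow, s2]
  refine s1.trans ?_
  have : h ^ 2 = d / (8 * l ^ 2) := by rw [← hh2]; field_simp
  rw [this]
  have h3 : (d : ℝ) ^ 2 ≤ d ^ 3 := pow_le_pow_right₀ hd1 (by norm_num)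
  have : (d : ℝ) * (d / (8 * l ^ 2)) = d ^ 2 / 8 * (1 / l) ^ 2 := by field_simp
  rw [this]
  gcongr
  have : (0 : ℝ) ≤ d ^ 2 := by positivity
  linarith

lemma no_pos {d : ℕ} (hd : 1 ≤ d) (S : Finset (Fin d → ℤ)) (L : Finset ℝ) :
    ∀ (_ : ∀ l ∈ L, 0 < l) (a : (Fin d → ℤ) → ℂ) (x : EuclideanSpace ℝ (Fin d)) (c : ℝ)
    (_ : 0 < c) (_ : ∀ k ∈ S, a k ≠ 0 → Real.sqrt (∑ i, (k i : ℝ) ^ 2) ∈ L)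
    (_ : ∀ y, dist y x ≤ (d : ℝ) ^ ((3 : ℝ) / 2) * ∑ l ∈ L, 1 / l → c ≤ (G S a y).re), False := by
  induction L using Finset.induction_on with
  | empty =>
    intro _ a x c hc ha hG
    have h0 : G S a x = 0 := by
      unfold G
      apply Finset.sum_eq_zero
      intro k hk
      have : a k = 0 := by
        by_contra hne
        simpa using ha k hk hne
      simp [this]
    have := hG x (by simp)
    rw [h0] at this
    simp at this
    linarith
  | insert l L hl ih =>
    intro hL a x c hc ha hG
    have hl0 : 0 < l := hL l (Finset.mem_insert_self _ _)
    obtain ⟨m, hm, hT⟩ := kernel hd l hl0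
    refine ih (fun l' h' => hL l' (Finset.mem_insert_of_mem h')) (fun k => a k * m k) x c hc ?_ ?_
    · intro k hk hne
      have h1 := ha k hk (left_ne_zero_of_mul hne)
      rcases Finset.mem_insert.1 h1 with h2 | h2
      · exfalso
        apply right_ne_zero_of_mul hne
        apply hm
        rw [← h2, Real.sq_sqrt (by positivity)]
      · exact h2
    · intro y hy
      apply hT
      intro z hz
      apply hG
      rw [Finset.sum_insert hl, mul_add]
      exact (dist_triangle z y x).trans (add_le_add hz hy)

lemma re_neg {d : ℕ} (S : Finset (Fin d → ℤ)) (a : (Fin d → ℤ) → ℂ)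
    (x : EuclideanSpace ℝ (Fin d)) : G S (fun k => - a k) x = - G S a x := by
  unfold G
  simp

lemma no_pos' {d : ℕ} (hd : 1 ≤ d) (S : Finset (Fin d → ℤ)) (hS0 : (0 : Fin d → ℤ) ∉ S)
    (a : (Fin d → ℤ) → ℂ) (x : EuclideanSpace ℝ (Fin d))
    (hp : ∀ y ∈ Metric.closedBall x ((d : ℝ) ^ ((3 : ℝ) / 2) *
        ∑ l ∈ S.image (fun k => Real.sqrt (∑ i, (k i : ℝ) ^ 2)), 1 / l), 0 < (G S a y).re) :
    False := by
  set R := (d : ℝ) ^ ((3 : ℝ) / 2) *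
        ∑ l ∈ S.image (fun k => Real.sqrt (∑ i, (k i : ℝ) ^ 2)), 1 / l with hR
  have hlpos : ∀ l ∈ S.image (fun k => Real.sqrt (∑ i, (k i : ℝ) ^ 2)), 0 < l := by
    intro l hl
    obtain ⟨k, hk, rfl⟩ := Finset.mem_image.1 hl
    apply Real.sqrt_pos.2
    have hne : k ≠ 0 := fun h => hS0 (h ▸ hk)
    obtain ⟨i, hi⟩ := Function.ne_iff.1 hne
    apply Finset.sum_pos' (fun i _ => sq_nonneg _)
    refine ⟨i, Finset.mem_univ i, ?_⟩
    have : (k i : ℝ) ≠ 0 := by exact_mod_cast hi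
    positivity
  have hR0 : 0 ≤ R := by
    apply mul_nonneg (by positivity)
    apply Finset.sum_nonneg
    intro l hl
    have := hlpos l hl
    positivity
  obtain ⟨z, hz, hmin⟩ := (isCompact_closedBall x R).exists_isMinOn
    (Metric.nonempty_closedBall.2 hR0)
    (Complex.continuous_re.comp (G_cont S a)).continuousOn
  exact no_pos hd S _ hlpos a x (G S a z).re (hp z hz)
    (fun k hk _ => Finset.mem_image_of_mem _ hk) (fun y hy => hmin (Metric.mem_closedBall.2 hy))

lemma G_im {d : ℕ} (S : Finset (Fin d → ℤ)) (hSsym : ∀ k ∈ S, -k ∈ S)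
    (a : (Fin d → ℤ) → ℂ) (ha : ∀ k ∈ S, a (-k) = starRingEnd ℂ (a k))
    (x : EuclideanSpace ℝ (Fin d)) : (G S a x).im = 0 := by
  apply Complex.conj_eq_iff_im.1
  unfold G
  rw [map_sum]
  refine Finset.sum_bij' (fun k _ => -k) (fun k _ => -k) hSsym hSsym (by simp) (by simp) ?_
  intro k hk
  rw [ha k hk, map_mul, ← Complex.exp_conj]
  have h2 : (starRingEnd ℂ) 2 = 2 := Complex.conj_ofNat 2
  simp [Complex.conj_ofReal, h2]

end TrigZero

/-- **Theorem 1 (local sign changes of trigonometric polynomials).**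
A real-valued, mean-zero trigonometric polynomial on `𝕋^d` with frequency set `S`
has a zero in every closed torus ball of radius `d^{3/2} · Σ_{λ ∈ Λ} 1/λ`,
where `Λ = {‖k‖ : k ∈ S}` is the set of distinct Euclidean norms of frequencies. -/
theorem trig_poly_zero_in_ball {d : ℕ} (hd : 1 ≤ d)
    (S : Finset (Fin d → ℤ)) (hS0 : (0 : Fin d → ℤ) ∉ S)
    (hSsym : ∀ k ∈ S, -k ∈ S)
    (a : (Fin d → ℤ) → ℂ) (ha : ∀ k ∈ S, a (-k) = starRingEnd ℂ (a k))
    (f : EuclideanSpace ℝ (Fin d) → ℂ)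
    (hf : ∀ x, f x = ∑ k ∈ S, a k *
      Complex.exp (2 * (π : ℂ) * Complex.I * ∑ i, (k i : ℂ) * (x i : ℂ)))
    (x₀ : EuclideanSpace ℝ (Fin d)) :
    ∃ y : EuclideanSpace ℝ (Fin d),
      torusDist y x₀ ≤ (d : ℝ) ^ ((3 : ℝ) / 2) *
        ∑ l ∈ S.image (fun k => Real.sqrt (∑ i, (k i : ℝ) ^ 2)), 1 / l ∧
      f y = 0 := by
  have hfG : f = TrigZero.G S a := funext hf
  have hdist : ∀ y, torusDist y x₀ ≤ dist y x₀ := by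
    intro y
    unfold torusDist
    refine (ciInf_le ⟨0, ?_⟩ (0 : Fin d → ℤ)).trans (le_of_eq ?_)
    · rintro _ ⟨m, rfl⟩
      exact dist_nonneg
    · congr 1
      ext i
      simp
  have h1 := TrigZero.no_pos' hd S hS0 a x₀
  have h2 := TrigZero.no_pos' hd S hS0 (fun k => - a k) x₀
  set R := (d : ℝ) ^ ((3 : ℝ) / 2) *
        ∑ l ∈ S.image (fun k => Real.sqrt (∑ i, (k i : ℝ) ^ 2)), 1 / l with hR
  have h1' : ∃ y ∈ Metric.closedBall x₀ R, (TrigZero.G S a y).re ≤ 0 := by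
    by_contra hcon
    push Not at hcon
    exact h1 hcon
  have h2' : ∃ y ∈ Metric.closedBall x₀ R, 0 ≤ (TrigZero.G S a y).re := by
    by_contra hcon
    push Not at hcon
    refine h2 fun y hy => ?_
    rw [TrigZero.re_neg, Complex.neg_re]
    linarith [hcon y hy]
  obtain ⟨p, hp, hp0⟩ := h1'
  obtain ⟨q, hq, hq0⟩ := h2'
  obtain ⟨y, hy, hy0⟩ := (convex_closedBall x₀ R).isPreconnected.intermediate_value hp hq
    (Complex.continuous_re.comp (TrigZero.G_cont S a)).continuousOn ⟨hp0, hq0⟩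
  refine ⟨y, (hdist y).trans (Metric.mem_closedBall.1 hy), ?_⟩
  rw [hfG]
  exact Complex.ext hy0 (TrigZero.G_im S hSsym a ha y)
end

section
/- Let d ≥ 2, λ > 0, and let S ⊂ ℤ^d be a finite symmetric set (S = -S) with ‖k‖ = λ for every k ∈ S, and let a : S → ℂ satisfy a_{-k} = conj(a_k), so that f(x) = Σ_{k ∈ S} a_k · exp(2πi⟨k, x⟩) is a real-valued function on the torus 𝕋^d = ℝ^d/ℤ^d (equivalently, f is a real-valued eigenfunction of the Laplacian on 𝕋^d with −Δf = 4π²λ² f). If f is not identically zero, then f has a zero in every closed ball (torus metric) of radius d^{3/2}/λ. -/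
open scoped Real

open Filter Topology

lemma tendsto_cos_second_diff (c : ℝ) :
    Tendsto (fun t : ℝ => (2 * Real.cos (c * t) - 2) / t ^ 2) (𝓝[≠] 0) (𝓝 (-c ^ 2)) := by
  have h1 : Tendsto (fun t : ℝ => Real.sinc (c / 2 * t)) (𝓝[≠] 0) (𝓝 1) := by
    have h : Continuous (fun t : ℝ => Real.sinc (c / 2 * t)) :=
      Real.continuous_sinc.comp (by fun_prop)
    have := h.tendsto 0
    simp only [mul_zero, Real.sinc_zero] at this
    exact this.mono_left nhdsWithin_le_nhds
  have h2 : Tendsto (fun t : ℝ => -c ^ 2 * (Real.sinc (c / 2 * t)) ^ 2) (𝓝[≠] 0)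
      (𝓝 (-c ^ 2 * 1 ^ 2)) := (h1.pow 2).const_mul _
  have h3 : -c ^ 2 * 1 ^ 2 = -c ^ 2 := by ring
  rw [h3] at h2
  refine h2.congr' ?_
  filter_upwards [self_mem_nhdsWithin] with t ht
  have ht : t ≠ 0 := ht
  rcases eq_or_ne c 0 with rfl | hc
  · simp
  have hct : c / 2 * t ≠ 0 := by positivity
  rw [Real.sinc_of_ne_zero hct]
  have : Real.cos (c * t) = 1 - 2 * Real.sin (c / 2 * t) ^ 2 := by
    have := Real.cos_two_mul (c / 2 * t)
    rw [show 2 * (c / 2 * t) = c * t by ring, Real.cos_sq'] at this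
    linarith
  rw [this]
  field_simp
  ring

lemma prod_cos_second {d : ℕ} (w : ℝ) (x0 p : Fin d → ℝ) (i : Fin d) (t : ℝ) :
    (∏ j, Real.cos (w * ((p + Pi.single i t : Fin d → ℝ) j - x0 j)))
      + (∏ j, Real.cos (w * ((p - Pi.single i t : Fin d → ℝ) j - x0 j)))
      = 2 * Real.cos (w * t) * ∏ j, Real.cos (w * (p j - x0 j)) := by
  classical
  rw [← Finset.mul_prod_erase Finset.univ _ (Finset.mem_univ i),
    ← Finset.mul_prod_erase Finset.univ _ (Finset.mem_univ i),
    ← Finset.mul_prod_erase Finset.univ _ (Finset.mem_univ i)]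
  have h1 : ∏ j ∈ Finset.univ.erase i,
      Real.cos (w * ((p + Pi.single i t : Fin d → ℝ) j - x0 j)) =
      ∏ j ∈ Finset.univ.erase i, Real.cos (w * (p j - x0 j)) := by
    refine Finset.prod_congr rfl fun j hj => ?_
    simp [Pi.single_eq_of_ne (Finset.ne_of_mem_erase hj)]
  have h2 : ∏ j ∈ Finset.univ.erase i,
      Real.cos (w * ((p - Pi.single i t : Fin d → ℝ) j - x0 j)) =
      ∏ j ∈ Finset.univ.erase i, Real.cos (w * (p j - x0 j)) := by
    refine Finset.prod_congr rfl fun j hj => ?_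
    simp [Pi.single_eq_of_ne (Finset.ne_of_mem_erase hj)]
  rw [h1, h2]
  simp only [Pi.add_apply, Pi.sub_apply, Pi.single_eq_same]
  rw [show w * (p i + t - x0 i) = w * (p i - x0 i) + w * t by ring,
    show w * (p i - t - x0 i) = w * (p i - x0 i) - w * t by ring, Real.cos_add, Real.cos_sub]
  ring

/-- Barta-type argument on a cube. -/
lemma barta {d : ℕ} (r c : ℝ) (hr : 0 < r) (hc : d * (π / (2 * r)) ^ 2 < c)
    (x0 : Fin d → ℝ) (F : (Fin d → ℝ) → ℝ) (hF : Continuous F)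
    (hpos : ∀ x ∈ Metric.closedBall x0 r, 0 < F x)
    (hlim : ∀ p, Tendsto (fun t : ℝ =>
      (∑ i, (F (p + Pi.single i t) + F (p - Pi.single i t) - 2 * F p)) / t ^ 2)
      (𝓝[≠] 0) (𝓝 (-c * F p))) : False := by
  set w := π / (2 * r) with hw
  have hwr : w * r = π / 2 := by rw [hw]; field_simp
  set g : (Fin d → ℝ) → ℝ := fun x => ∏ j, Real.cos (w * (x j - x0 j)) with hg
  have hgc : Continuous g := by fun_prop
  have hg0 : g x0 = 1 := by simp [hg]
  have hx0 : x0 ∈ Metric.closedBall x0 r := Metric.mem_closedBall_self hr.le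
  obtain ⟨p, hp, hmax⟩ := (isCompact_closedBall x0 r).exists_isMaxOn ⟨x0, hx0⟩
    (f := fun x => g x / F x)
    (hgc.continuousOn.div hF.continuousOn fun x hx => (hpos x hx).ne')
  set M := g p / F p with hM
  have hmax' : ∀ x ∈ Metric.closedBall x0 r, g x / F x ≤ M := fun x hx => hmax hx
  have hMpos : 0 < M := by
    refine lt_of_lt_of_le ?_ (hmax' x0 hx0)
    rw [hg0]
    exact div_pos one_pos (hpos _ hx0)
  have hFp := hpos p hp
  have hgM : g p = M * F p := by rw [hM]; field_simp
  have hgp : 0 < g p := by rw [hgM]; positivity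
  have hpb : p ∈ Metric.ball x0 r := by
    rw [Metric.mem_ball, dist_pi_lt_iff hr]
    intro i
    have h1 : dist (p i) (x0 i) ≤ r := (dist_le_pi_dist p x0 i).trans hp
    refine lt_of_le_of_ne h1 fun h => ?_
    apply hgp.ne'
    apply Finset.prod_eq_zero (Finset.mem_univ i)
    rw [← Real.cos_abs, abs_mul, ← Real.dist_eq, h, abs_of_pos (by positivity), hwr,
      Real.cos_pi_div_two]
  have hev : ∀ᶠ t : ℝ in 𝓝[≠] 0, ∀ i : Fin d,
      p + Pi.single i t ∈ Metric.ball x0 r ∧ p - Pi.single i t ∈ Metric.ball x0 r := by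
    rw [eventually_all]
    intro i
    have hs : Continuous (fun t : ℝ => (Pi.single i t : Fin d → ℝ)) := by
      refine continuous_pi fun j => ?_
      rcases eq_or_ne j i with rfl | hj
      · simpa using continuous_id'
      · simpa [Pi.single_eq_of_ne hj] using continuous_const
    refine Filter.Eventually.filter_mono nhdsWithin_le_nhds ?_
    refine Filter.Eventually.and ?_ ?_
    · refine (continuous_const.add hs).continuousAt.eventually
        (Metric.isOpen_ball.mem_nhds ?_)
      simpa using hpb
    · refine (continuous_const.sub hs).continuousAt.eventually
        (Metric.isOpen_ball.mem_nhds ?_)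
      simpa using hpb
  have hle : ∀ x ∈ Metric.ball x0 r, g x ≤ M * F x := fun x hx => by
    have hx' := Metric.ball_subset_closedBall hx
    exact (div_le_iff₀ (hpos x hx')).1 (hmax' x hx')
  have hL : Tendsto (fun t : ℝ => (d * g p) * ((2 * Real.cos (w * t) - 2) / t ^ 2)) (𝓝[≠] 0)
      (𝓝 ((d * g p) * (-w ^ 2))) := (tendsto_cos_second_diff w).const_mul _
  have hR := (hlim p).const_mul M
  have key := le_of_tendsto_of_tendsto hL hR (by
    filter_upwards [hev] with t ht
    rw [← mul_div_assoc, ← mul_div_assoc]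
    refine div_le_div_of_nonneg_right ?_ (sq_nonneg t)
    rw [Finset.mul_sum]
    have : (d * g p) * (2 * Real.cos (w * t) - 2)
        = ∑ i : Fin d, (2 * Real.cos (w * t) * g p - 2 * g p) := by
      simp; ring
    rw [this]
    refine Finset.sum_le_sum fun i _ => ?_
    rw [← prod_cos_second w x0 p i t]
    have h1 := hle _ (ht i).1
    have h2 := hle _ (ht i).2
    simp only [hg] at h1 h2 hgM ⊢
    rw [hgM]
    linarith)
  have : M * (-c * F p) = -c * g p := by rw [hgM]; ring
  rw [this] at key
  nlinarith

lemma exists_zero_cube {d : ℕ} (r c : ℝ) (hr : 0 < r) (hc : d * (π / (2 * r)) ^ 2 < c)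
    (x0 : Fin d → ℝ) (F : (Fin d → ℝ) → ℝ) (hF : Continuous F)
    (hlim : ∀ p, Tendsto (fun t : ℝ =>
      (∑ i, (F (p + Pi.single i t) + F (p - Pi.single i t) - 2 * F p)) / t ^ 2)
      (𝓝[≠] 0) (𝓝 (-c * F p))) : ∃ y ∈ Metric.closedBall x0 r, F y = 0 := by
  have hcon : IsPreconnected (Metric.closedBall x0 r) :=
    (convex_closedBall x0 r).isPreconnected
  have hA : ∃ x ∈ Metric.closedBall x0 r, F x ≤ 0 := by
    by_contra! h
    exact barta r c hr hc x0 F hF h hlim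
  have hB : ∃ x ∈ Metric.closedBall x0 r, 0 ≤ F x := by
    by_contra! h
    refine barta r c hr hc x0 (fun x => - F x) hF.neg (fun x hx => neg_pos.2 (h x hx)) ?_
    intro p
    have := (hlim p).neg
    rw [show -c * -F p = -(-c * F p) by ring]
    refine this.congr fun t => ?_
    rw [← neg_div, ← Finset.sum_neg_distrib]
    congr 1
    exact Finset.sum_congr rfl fun i _ => by ring
  obtain ⟨x, hx, hx0⟩ := hA
  obtain ⟨y, hy, hy0⟩ := hB
  obtain ⟨z, hz, hz0⟩ := hcon.intermediate_value hx hy hF.continuousOn ⟨hx0, hy0⟩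
  exact ⟨z, hz, hz0⟩

/-- phases -/
lemma exp_second {d : ℕ} (k : Fin d → ℤ) (p : Fin d → ℝ) (i : Fin d) (t : ℝ) :
    Complex.exp (2 * (π : ℂ) * Complex.I *
        ∑ j, (k j : ℂ) * (((p + Pi.single i t : Fin d → ℝ) j : ℝ) : ℂ))
      + Complex.exp (2 * (π : ℂ) * Complex.I *
        ∑ j, (k j : ℂ) * (((p - Pi.single i t : Fin d → ℝ) j : ℝ) : ℂ))
      = ((2 * Real.cos (2 * π * k i * t) : ℝ) : ℂ) *
        Complex.exp (2 * (π : ℂ) * Complex.I * ∑ j, (k j : ℂ) * (p j : ℂ)) := by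
  have hs : ∑ j, (k j : ℂ) * (((Pi.single i t : Fin d → ℝ) j : ℝ) : ℂ) = k i * t := by
    rw [Finset.sum_eq_single i]
    · simp
    · intro j _ hj
      simp [Pi.single_eq_of_ne hj]
    · simp
  simp only [Pi.add_apply, Pi.sub_apply, Complex.ofReal_add, Complex.ofReal_sub, mul_add, mul_sub,
    Finset.sum_add_distrib, Finset.sum_sub_distrib, hs]
  rw [Complex.exp_add, sub_eq_add_neg, Complex.exp_add]
  push_cast
  rw [Complex.two_cos]
  rw [show (2 * (π : ℂ) * k i * t) * Complex.I = 2 * π * Complex.I * (k i * t) by ring,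
    show -(2 * (π : ℂ) * k i * t) * Complex.I = -(2 * π * Complex.I * (k i * t)) by ring]
  ring

theorem eigenfunction_torus_zero_in_ball {d : ℕ} (hd : 2 ≤ d) (lam : ℝ) (hlam : 0 < lam)
    (S : Finset (Fin d → ℤ)) (hSsym : ∀ k ∈ S, -k ∈ S)
    (hSnorm : ∀ k ∈ S, Real.sqrt (∑ i, (k i : ℝ) ^ 2) = lam)
    (a : (Fin d → ℤ) → ℂ) (ha : ∀ k ∈ S, a (-k) = starRingEnd ℂ (a k))
    (f : EuclideanSpace ℝ (Fin d) → ℂ)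
    (hf : ∀ x, f x = ∑ k ∈ S, a k *
      Complex.exp (2 * (π : ℂ) * Complex.I * ∑ i, (k i : ℂ) * (x i : ℂ)))
    (hf0 : ∃ x, f x ≠ 0)
    (x₀ : EuclideanSpace ℝ (Fin d)) :
    ∃ y : EuclideanSpace ℝ (Fin d),
      torusDist y x₀ ≤ (d : ℝ) ^ ((3 : ℝ) / 2) / lam ∧ f y = 0 := by
  have hdpos : (0 : ℝ) < d := by exact_mod_cast (by omega : 0 < d)
  have hd2 : (2 : ℝ) ≤ d := by exact_mod_cast hd
  set E : (Fin d → ℤ) → (Fin d → ℝ) → ℂ := fun k x =>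
    Complex.exp (2 * (π : ℂ) * Complex.I * ∑ i, (k i : ℂ) * (x i : ℂ)) with hE
  set G : (Fin d → ℝ) → ℂ := fun x => ∑ k ∈ S, a k * E k x with hG
  have hGf : ∀ x : Fin d → ℝ, f (WithLp.toLp 2 x) = G x := fun x => hf _
  -- `G` is real-valued
  have hreal : ∀ x, (G x).im = 0 := by
    intro x
    rw [← Complex.conj_eq_iff_im]
    simp only [hG, map_sum, map_mul]
    refine Finset.sum_nbij' (fun k => -k) (fun k => -k) hSsym hSsym (by simp) (by simp) ?_
    intro k hk
    rw [ha k hk]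
    congr 1
    simp only [hE, ← Complex.exp_conj, map_mul, map_sum, Complex.conj_I, Complex.conj_ofReal,
      map_ofNat, map_intCast, Pi.neg_apply, Int.cast_neg, neg_mul, Finset.sum_neg_distrib]
    congr 1
    ring
  have hEc : ∀ k, Continuous (E k) := fun k => by simp only [hE]; fun_prop
  have hGc : Continuous G := continuous_finsetSum _ fun k _ => (hEc k).const_smul (a k)
  have hr : 0 < d / lam := by positivity
  have hnorm : ∀ k ∈ S, ∑ i, (k i : ℝ) ^ 2 = lam ^ 2 := fun k hk => by
    rw [← hSnorm k hk, Real.sq_sqrt (Finset.sum_nonneg fun i _ => sq_nonneg _)]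
  have hlim : ∀ p, Tendsto (fun t : ℝ =>
      (∑ i, ((G (p + Pi.single i t)).re + (G (p - Pi.single i t)).re - 2 * (G p).re)) / t ^ 2)
      (𝓝[≠] 0) (𝓝 (-(4 * π ^ 2 * lam ^ 2) * (G p).re)) := by
    intro p
    have h1 : ∀ t : ℝ,
        (∑ i, ((G (p + Pi.single i t)).re + (G (p - Pi.single i t)).re - 2 * (G p).re)) / t ^ 2
        = ∑ i, ∑ k ∈ S, ((2 * Real.cos (2 * π * k i * t) - 2) / t ^ 2) * (a k * E k p).re := by
      intro t
      rw [Finset.sum_div]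
      refine Finset.sum_congr rfl fun i _ => ?_
      simp only [hG, Complex.re_sum]
      rw [Finset.mul_sum, ← Finset.sum_add_distrib, ← Finset.sum_sub_distrib, Finset.sum_div]
      refine Finset.sum_congr rfl fun k _ => ?_
      have := exp_second k p i t
      have h2 : a k * E k (p + Pi.single i t) + a k * E k (p - Pi.single i t)
          = ((2 * Real.cos (2 * π * k i * t) : ℝ) : ℂ) * (a k * E k p) := by
        rw [← mul_add]
        simp only [hE]
        rw [this]
        ring
      rw [← Complex.add_re, h2, Complex.re_ofReal_mul]
      ring
    simp only [h1]
    have h3 : -(4 * π ^ 2 * lam ^ 2) * (G p).re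
        = ∑ i, ∑ k ∈ S, (-(2 * π * k i) ^ 2) * (a k * E k p).re := by
      rw [Finset.sum_comm]
      simp only [hG, Complex.re_sum]
      rw [Finset.mul_sum]
      refine Finset.sum_congr rfl fun k hk => ?_
      rw [← Finset.sum_mul, ← hnorm k hk, Finset.mul_sum, ← Finset.sum_neg_distrib]
      congr 1
      exact Finset.sum_congr rfl fun i _ => by ring
    rw [h3]
    refine tendsto_finsetSum _ fun i _ => tendsto_finsetSum _ fun k _ => ?_
    exact (tendsto_cos_second_diff (2 * π * k i)).mul_const _
  have hc : d * (π / (2 * (d / lam))) ^ 2 < 4 * π ^ 2 * lam ^ 2 := by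
    have e : d * (π / (2 * (d / lam))) ^ 2 = (π ^ 2 * lam ^ 2) * (1 / (4 * d)) := by
      field_simp
      ring
    rw [e]
    have h0 : 0 < π ^ 2 * lam ^ 2 := by positivity
    have h1 : 1 / (4 * (d : ℝ)) < 4 := by
      rw [div_lt_iff₀ (by positivity)]
      linarith
    nlinarith
  obtain ⟨y, hy, hy0⟩ := exists_zero_cube (d / lam) _ hr hc (fun i => x₀ i)
    (fun x => (G x).re) (Complex.continuous_re.comp hGc) hlim
  refine ⟨WithLp.toLp 2 y, ?_, ?_⟩
  · have h1 : torusDist (WithLp.toLp 2 y) x₀ ≤ dist (WithLp.toLp 2 y) x₀ := by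
      refine (ciInf_le ⟨0, ?_⟩ (0 : Fin d → ℤ)).trans (le_of_eq ?_)
      · rintro _ ⟨m, rfl⟩
        exact dist_nonneg
      · congr 1
        ext i
        simp
    refine h1.trans ?_
    rw [EuclideanSpace.dist_eq]
    have h2 : ∑ i, dist (y i) (x₀ i) ^ 2 ≤ d * (d / lam) ^ 2 := by
      have : ∑ i : Fin d, (d / lam) ^ 2 = d * (d / lam) ^ 2 := by simp
      rw [← this]
      refine Finset.sum_le_sum fun i _ => ?_
      have := (dist_le_pi_dist y (fun i => x₀ i) i).trans hy
      exact pow_le_pow_left₀ dist_nonneg this 2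
    refine (Real.sqrt_le_sqrt h2).trans (le_of_eq ?_)
    rw [Real.sqrt_mul hdpos.le, Real.sqrt_sq hr.le, show (3 : ℝ) / 2 = 1 / 2 + 1 by norm_num,
      Real.rpow_add hdpos, Real.rpow_one, ← Real.sqrt_eq_rpow]
    ring
  · rw [hGf]
    exact Complex.ext hy0 (hreal y)
end

section
/- Let d ≥ 2 and let p ∈ ℝ[x₁, …, x_d] be a polynomial whose restriction to the unit sphere 𝕊^{d-1} ⊂ ℝ^d can be written as p(x)|_{𝕊^{d-1}} = Σ_{k ∈ S} a_k f_k(x), where S is a finite set of positive integers, a_k ∈ ℝ, and each f_k is a harmonic polynomial homogeneous of degree k (i.e. f_k ∈ ℝ[x₁,…,x_d] is homogeneous of degree k with Δf_k = 0); in particular p has mean value 0 on 𝕊^{d-1}. Then p|_{𝕊^{d-1}} has a zero in every geodesic ball of radius r = π² d · Σ_{k ∈ S} 1/k; that is, for every x ∈ 𝕊^{d-1} there exists y ∈ 𝕊^{d-1} with geodesic distance arccos⟨x, y⟩ ≤ π² d Σ_{k ∈ S} 1/k and p(y) = 0. -/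
open scoped Real
namespace GeoBall
open MeasureTheory Metric Set Filter Topology

abbrev E (d : ℕ) := EuclideanSpace ℝ (Fin d)

noncomputable def nrm {d : ℕ} (y : E d) : E d := ‖y‖⁻¹ • y

lemma measurable_nrm {d : ℕ} : Measurable (nrm : E d → E d) := by
  unfold nrm
  fun_prop

/-- a rotation invariant measure on the unit sphere. -/
noncomputable def sig (d : ℕ) : Measure (E d) :=
  (volume.restrict (closedBall (0 : E d) 1)).map nrm

instance (d : ℕ) : IsFiniteMeasure (sig d) := by
  unfold sig
  have : IsFiniteMeasure (volume.restrict (closedBall (0 : E d) 1)) :=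
    ⟨by simpa using measure_closedBall_lt_top⟩
  infer_instance

lemma sig_ae {d : ℕ} (hd : 2 ≤ d) : ∀ᵐ y ∂(sig d), y ∈ sphere (0 : E d) 1 := by
  have : Nonempty (Fin d) := ⟨⟨0, by omega⟩⟩
  unfold sig
  rw [ae_map_iff measurable_nrm.aemeasurable (p := fun y => y ∈ sphere (0 : E d) 1)
    (isClosed_sphere (x := (0 : E d)) (ε := 1)).measurableSet]
  apply ae_restrict_of_ae
  have : ∀ᵐ y : E d, y ≠ 0 := by
    simp [ae_iff]
  filter_upwards [this] with y hy
  simp [nrm, norm_smul, hy]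

lemma sig_restrict {d : ℕ} (hd : 2 ≤ d) : (sig d).restrict (sphere (0 : E d) 1) = sig d :=
  Measure.restrict_eq_self_of_ae_mem (sig_ae hd)

lemma sig_int {d : ℕ} (hd : 2 ≤ d) {g : E d → ℝ} (hg : Continuous g) : Integrable g (sig d) := by
  rw [← sig_restrict hd]
  exact hg.continuousOn.integrableOn_compact (isCompact_sphere _ _)

lemma sig_inv {d : ℕ} (g : E d ≃ₗᵢ[ℝ] E d) : MeasurePreserving g (sig d) (sig d) := by
  refine ⟨g.continuous.measurable, ?_⟩
  unfold sig
  have h1 : MeasurePreserving g (volume.restrict (closedBall (0 : E d) 1))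
      (volume.restrict (closedBall (0 : E d) 1)) := by
    have := g.measurePreserving.restrict_preimage
      (isClosed_closedBall (x := (0 : E d)) (ε := 1)).measurableSet
    have e : g ⁻¹' (closedBall (0 : E d) 1) = closedBall (0 : E d) 1 := by
      ext y; simp
    rwa [e] at this
  rw [Measure.map_map g.continuous.measurable measurable_nrm]
  have : (g : E d → E d) ∘ nrm = nrm ∘ g := by
    ext1 y; simp [nrm]
  rw [this, ← Measure.map_map measurable_nrm g.continuous.measurable, h1.map_eq]

lemma sig_inv_int {d : ℕ} (g : E d ≃ₗᵢ[ℝ] E d) (F : E d → ℝ) :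
    ∫ y, F (g y) ∂(sig d) = ∫ y, F y ∂(sig d) :=
  (sig_inv g).integral_comp g.toHomeomorph.measurableEmbedding F

lemma sig_pos {d : ℕ} (hd : 2 ≤ d) {g : E d → ℝ} (hg : Continuous g)
    (h0 : ∀ y, ‖y‖ = 1 → 0 ≤ g y) (x : E d) (hx : ‖x‖ = 1) (hgx : 0 < g x) :
    0 < ∫ y, g y ∂(sig d) := by
  rw [integral_pos_iff_support_of_nonneg_ae _ (sig_int hd hg)]
  · unfold sig
    have ho : IsOpen (Function.support g) := isOpen_ne.preimage hg
    rw [Measure.map_apply measurable_nrm ho.measurableSet,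
      Measure.restrict_apply (measurable_nrm ho.measurableSet)]
    apply Measure.measure_pos_of_mem_nhds (volume : Measure (E d)) (x := (1/2 : ℝ) • x)
    have hne : (1/2 : ℝ) • x ≠ 0 := by
      intro h; have := congrArg norm h; simp [norm_smul, hx] at this
    apply inter_mem
    · have hc : ContinuousAt (nrm : E d → E d) ((1/2 : ℝ) • x) := by
        unfold nrm
        have : ‖(1/2 : ℝ) • x‖ ≠ 0 := by simpa using hne
        fun_prop (disch := assumption)
      apply hc
      apply ho.mem_nhds
      have : nrm ((1/2 : ℝ) • x) = x := by
        simp [nrm, norm_smul, hx]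
      rw [this]
      exact hgx.ne'
    · apply Filter.mem_of_superset (isOpen_ball.mem_nhds _) ball_subset_closedBall
      simp [norm_smul, hx]; norm_num
  · filter_upwards [sig_ae hd] with y hy
    exact h0 y (by simpa using hy)

noncomputable def T {d : ℕ} (K : ℝ → ℝ) (f : E d → ℝ) (x : E d) : ℝ :=
  ∫ y, f y * K (inner ℝ x y) ∂(sig d)

lemma T_cont {d : ℕ} (hd : 2 ≤ d) {K : ℝ → ℝ} (hK : Continuous K) {f : E d → ℝ}
    (hf : Continuous f) : Continuous (T K f) := by
  unfold T
  rw [← sig_restrict hd]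
  apply continuous_parametric_integral_of_continuous _ (isCompact_sphere _ _)
  fun_prop

lemma ker_symm {d : ℕ} (K J : ℝ → ℝ) (x z : E d) (hxz : ‖x‖ = ‖z‖) :
    ∫ y, K (inner ℝ x y) * J (inner ℝ y z) ∂(sig d) =
    ∫ y, J (inner ℝ x y) * K (inner ℝ y z) ∂(sig d) := by
  let R := (Submodule.span ℝ {x - z})ᗮ.reflection
  have h1 : R x = z := Submodule.reflection_sub hxz
  have h2 : R z = x := by rw [← h1]; simp [R]
  rw [← sig_inv_int R (fun y => K (inner ℝ x y) * J (inner ℝ y z))]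
  congr 1; ext y
  have a1 : inner ℝ x (R y) = inner ℝ y z := by
    rw [← h2, R.inner_map_map, real_inner_comm]
  have a2 : inner ℝ (R y) z = inner ℝ x y := by
    rw [← h1, R.inner_map_map, real_inner_comm]
  simp only [a1, a2, mul_comm]

lemma T_T {d : ℕ} (hd : 2 ≤ d) {K J : ℝ → ℝ} (hK : Continuous K) (hJ : Continuous J) {f : E d → ℝ}
    (hf : Continuous f) (x : E d) :
    T K (T J f) x = ∫ z, f z * (∫ y, K (inner ℝ x y) * J (inner ℝ y z) ∂(sig d)) ∂(sig d) := by
  unfold T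
  have hint : Integrable (Function.uncurry (fun y z : E d =>
      f z * (K (inner ℝ x y) * J (inner ℝ y z)))) ((sig d).prod (sig d)) := by
    have h2 : (sig d).prod (sig d) =
        ((sig d).prod (sig d)).restrict (sphere (0 : E d) 1 ×ˢ sphere (0 : E d) 1) := by
      rw [← Measure.prod_restrict, sig_restrict hd]
    rw [h2]
    apply ContinuousOn.integrableOn_compact
    · exact (isCompact_sphere _ _).prod (isCompact_sphere _ _)
    · apply Continuous.continuousOn
      unfold Function.uncurry
      fun_prop
  simp_rw [← integral_const_mul]
  rw [← integral_integral_swap hint]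
  congr 1; ext y
  rw [← integral_mul_const]
  congr 1; ext z; ring

lemma T_comm {d : ℕ} (hd : 2 ≤ d) {K J : ℝ → ℝ} (hK : Continuous K) (hJ : Continuous J)
    {f : E d → ℝ} (hf : Continuous f) (x : E d) (hx : ‖x‖ = 1) :
    T K (T J f) x = T J (T K f) x := by
  rw [T_T hd hK hJ hf, T_T hd hJ hK hf]
  apply integral_congr_ae
  filter_upwards [sig_ae hd] with z hz
  rw [ker_symm K J x z (by rw [hx]; simpa using hz.symm)]

lemma T_pos {d : ℕ} (hd : 2 ≤ d) {K : ℝ → ℝ} (hK : Continuous K) {f : E d → ℝ}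
    (hf : Continuous f) {θ : ℝ} (hθ : 0 ≤ θ) (hK0 : ∀ t, -1 ≤ t → t ≤ 1 → 0 ≤ K t) (hK1 : 0 < K 1)
    (hsupp : ∀ t, -1 ≤ t → t ≤ 1 → K t ≠ 0 → Real.arccos t ≤ θ) (x : E d) (hx : ‖x‖ = 1)
    (hpos : ∀ y : E d, ‖y‖ = 1 → Real.arccos (inner ℝ x y) ≤ θ → 0 < f y) : 0 < T K f x := by
  unfold T
  apply sig_pos hd (by fun_prop) _ x hx
  · rw [real_inner_self_eq_norm_sq, hx]; norm_num
    refine mul_pos (hpos x hx ?_) hK1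
    rw [real_inner_self_eq_norm_sq, hx]; simpa
  · intro y hy
    have h := abs_le.mp (abs_real_inner_le_norm x y)
    rw [hx, hy] at h; norm_num at h
    by_cases hk : K (inner ℝ x y) = 0
    · simp [hk]
    · exact mul_nonneg (hpos y hy (hsupp _ h.1 h.2 hk)).le (hK0 _ h.1 h.2)

lemma arccos_tri {d : ℕ} (x y z : E d) (hx : ‖x‖ = 1) (hy : ‖y‖ = 1) (hz : ‖z‖ = 1) :
    Real.arccos (inner ℝ x z) ≤ Real.arccos (inner ℝ x y) + Real.arccos (inner ℝ y z) := by
  have := InnerProductGeometry.angle_le_angle_add_angle x y z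
  simpa [InnerProductGeometry.angle, hx, hy, hz] using this

lemma main_ind {d : ℕ} (hd : 2 ≤ d) (K : ℕ → ℝ → ℝ) (θ : ℕ → ℝ) (x : E d) (hx : ‖x‖ = 1)
    (S : Finset ℕ) :
    ∀ (f : ℕ → E d → ℝ), (∀ k ∈ S, Continuous (K k)) → (∀ k ∈ S, 0 ≤ θ k) →
    (∀ k ∈ S, ∀ t, -1 ≤ t → t ≤ 1 → 0 ≤ K k t) → (∀ k ∈ S, 0 < K k 1) →
    (∀ k ∈ S, ∀ t, -1 ≤ t → t ≤ 1 → K k t ≠ 0 → Real.arccos t ≤ θ k) →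
    (∀ k ∈ S, Continuous (f k)) → (∀ k ∈ S, ∀ x : E d, ‖x‖ = 1 → T (K k) (f k) x = 0) →
    (∀ y : E d, ‖y‖ = 1 → Real.arccos (inner ℝ x y) ≤ ∑ k ∈ S, θ k → 0 < ∑ k ∈ S, f k y) →
    False := by
  induction S using Finset.induction_on with
  | empty =>
    intro f _ _ _ _ _ _ _ h
    have := h x hx (by simp [hx])
    simp at this
  | insert k S hkS ih =>
    intro f h1 h2 h3 h4 h5 h6 h7 h8
    have hk : k ∈ insert k S := Finset.mem_insert_self _ _
    have hm : ∀ j ∈ S, j ∈ insert k S := fun j hj => Finset.mem_insert_of_mem hj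
    refine ih (fun j => T (K k) (f j)) (fun j hj => h1 j (hm j hj)) (fun j hj => h2 j (hm j hj))
      (fun j hj => h3 j (hm j hj)) (fun j hj => h4 j (hm j hj)) (fun j hj => h5 j (hm j hj))
      (fun j hj => T_cont hd (h1 k hk) (h6 j (hm j hj))) ?_ ?_
    · intro j hj y hy
      rw [T_comm hd (h1 j (hm j hj)) (h1 k hk) (h6 j (hm j hj)) y hy]
      unfold T
      apply integral_eq_zero_of_ae
      filter_upwards [sig_ae hd] with z hz
      have := h7 j (hm j hj) z (by simpa using hz)
      unfold T at this
      simp [this]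
    · intro y hy hxy
      have hsum : ∑ j ∈ S, T (K k) (f j) y = T (K k) (fun z => ∑ j ∈ insert k S, f j z) y := by
        have h0 := h7 k hk y hy
        have : ∑ j ∈ S, T (K k) (f j) y = ∑ j ∈ insert k S, T (K k) (f j) y := by
          rw [Finset.sum_insert hkS, h0, zero_add]
        rw [this]
        unfold T
        rw [← integral_finsetSum]
        · simp_rw [Finset.sum_mul]
        · intro j hj
          have := h6 j hj
          have := h1 k hk
          apply sig_int hd
          fun_prop
      rw [hsum]
      refine T_pos hd (h1 k hk) (continuous_finsetSum _ h6) (h2 k hk) (h3 k hk) (h4 k hk)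
        (h5 k hk) y hy ?_
      intro z hz hyz
      apply h8 z hz
      rw [Finset.sum_insert hkS]
      linarith [arccos_tri x y z hx hy hz]

/-- rotation in the `(i,j)` coordinate plane. -/
noncomputable def rotF {d : ℕ} (i j : Fin d) (s : ℝ) (y : E d) : E d :=
  WithLp.toLp 2 (fun m => if m = i then Real.cos s * y i - Real.sin s * y j
    else if m = j then Real.sin s * y i + Real.cos s * y j else y m)

lemma rotF_norm {d : ℕ} (i j : Fin d) (hij : i ≠ j) (s : ℝ) (y : E d) : ‖rotF i j s y‖ = ‖y‖ := by
  have h : ∑ m, (rotF i j s y m ^ 2 - y m ^ 2) = 0 := by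
    rw [Fintype.sum_eq_add i j hij]
    · simp only [rotF, if_true, hij.symm, if_false]
      linear_combination (y i ^ 2 + y j ^ 2) * Real.sin_sq_add_cos_sq s
    · rintro m ⟨h1, h2⟩
      simp [rotF, h1, h2]
  rw [Finset.sum_sub_distrib] at h
  rw [EuclideanSpace.norm_eq, EuclideanSpace.norm_eq]
  simp only [Real.norm_eq_abs, sq_abs]
  rw [sub_eq_zero.mp h]

noncomputable def rot {d : ℕ} (i j : Fin d) (hij : i ≠ j) (s : ℝ) : E d ≃ₗᵢ[ℝ] E d :=
  LinearIsometry.toLinearIsometryEquiv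
    { toFun := rotF i j s
      map_add' := by
        intro x y; ext m
        simp only [rotF, PiLp.add_apply]
        split_ifs <;> ring
      map_smul' := by
        intro c y; ext m
        simp only [rotF, PiLp.smul_apply, smul_eq_mul, RingHom.id_apply]
        split_ifs <;> ring
      norm_map' := rotF_norm i j hij s } rfl

lemma rot_apply {d : ℕ} (i j : Fin d) (hij : i ≠ j) (s : ℝ) (y : E d) :
    rot i j hij s y = rotF i j s y := rfl

lemma rotF_add {d : ℕ} (i j : Fin d) (hij : i ≠ j) (s h : ℝ) (y : E d) :
    rotF i j (s + h) y = rotF i j h (rotF i j s y) := by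
  ext m
  simp only [rotF, if_true, hij.symm, if_false, Real.cos_add, Real.sin_add]
  split_ifs <;> ring

lemma rotF_zero {d : ℕ} (i j : Fin d) (y : E d) : rotF i j 0 y = y := by
  ext m
  simp only [rotF, Real.cos_zero, Real.sin_zero]
  split_ifs with h1 h2
  · subst h1; ring
  · subst h2; ring
  · rfl

/-- `F` has derivative `D` along the rotation field in the `(i,j)` plane. -/
def RD {d : ℕ} (i j : Fin d) (F D : E d → ℝ) : Prop :=
  ∀ y, HasDerivAt (fun s => F (rotF i j s y)) (D y) 0

lemma RD.mul {d : ℕ} {i j : Fin d} {F D G H : E d → ℝ} (h1 : RD i j F D) (h2 : RD i j G H) :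
    RD i j (fun y => F y * G y) (fun y => D y * G y + F y * H y) := by
  intro y
  have := (h1 y).fun_mul (h2 y)
  simp only [rotF_zero] at this
  exact this

lemma RD.add {d : ℕ} {i j : Fin d} {F D G H : E d → ℝ} (h1 : RD i j F D) (h2 : RD i j G H) :
    RD i j (fun y => F y + G y) (fun y => D y + H y) := fun y => (h1 y).add (h2 y)

lemma RD.comp {d : ℕ} {i j : Fin d} {F D : E d → ℝ} (h1 : RD i j F D) {φ φ' : ℝ → ℝ}
    (h2 : ∀ t, HasDerivAt φ (φ' t) t) :
    RD i j (fun y => φ (F y)) (fun y => φ' (F y) * D y) := by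
  intro y
  have := (h2 (F (rotF i j 0 y))).comp (0:ℝ) (h1 y)
  simp only [rotF_zero] at this
  exact this

lemma RD_int {d : ℕ} (hd : 2 ≤ d) {i j : Fin d} (hij : i ≠ j) {F D : E d → ℝ} (h : RD i j F D)
    (hF : Continuous F) (hD : Continuous D) : ∫ y, D y ∂(sig d) = 0 := by
  obtain ⟨C, hC⟩ := (isCompact_sphere (0 : E d) 1).exists_bound_of_continuousOn hD.continuousOn
  have key := hasDerivAt_integral_of_dominated_loc_of_deriv_le (μ := sig d) (x₀ := (0:ℝ))
    (s := univ) (F := fun s y => F (rot i j hij s y)) (F' := fun s y => D (rot i j hij s y))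
    (bound := fun _ => C) univ_mem
    (Eventually.of_forall fun s => (hF.comp (rot i j hij s).continuous).aestronglyMeasurable)
    (sig_int hd (hF.comp (rot i j hij 0).continuous))
    (hD.comp (rot i j hij 0).continuous).aestronglyMeasurable
    (by
      filter_upwards [sig_ae hd] with y hy s _
      apply hC
      simpa using hy)
    (integrable_const C)
    (by
      refine Eventually.of_forall fun y s _ => ?_
      have h1 := h (rotF i j s y)
      have h2 : HasDerivAt (fun r : ℝ => r - s) 1 s := (hasDerivAt_id s).sub_const s
      have h1' : HasDerivAt (fun r => F (rotF i j r (rotF i j s y))) (D (rotF i j s y)) (s - s) := by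
        simpa using h1
      have h3 := HasDerivAt.comp (h := fun r : ℝ => r - s) s h1' h2
      refine (h3.congr_deriv ?_).congr_of_eventuallyEq (Eventually.of_forall fun r => ?_)
      · simp [rot_apply]
      · simp only [Function.comp, rot_apply]
        rw [← rotF_add i j hij]; congr 2; ring)
  have h2 := key.2
  have e : (fun s : ℝ => ∫ y, F (rot i j hij s y) ∂(sig d)) = fun _ => ∫ y, F y ∂(sig d) := by
    ext s; exact sig_inv_int _ _
  rw [e, sig_inv_int (rot i j hij 0) D] at h2
  exact h2.unique (hasDerivAt_const _ _)

open MvPolynomial in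
noncomputable def LP {d : ℕ} (i j : Fin d) (f : MvPolynomial (Fin d) ℝ) :
    MvPolynomial (Fin d) ℝ := X i * pderiv j f - X j * pderiv i f

lemma RD_coord {d : ℕ} {i j : Fin d} (hij : i ≠ j) (m : Fin d) :
    RD i j (fun y => y m) (fun y => (if m = j then y i else 0) - (if m = i then y j else 0)) := by
  intro y
  have hs := Real.hasDerivAt_sin 0
  have hc := Real.hasDerivAt_cos 0
  simp only [Real.cos_zero, Real.sin_zero] at hs hc
  simp only [rotF]
  by_cases h1 : m = i <;> by_cases h2 : m = j <;> simp only [if_pos, if_neg, h1, h2, not_false_eq_true, hij, hij.symm]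
  · exact absurd (h1.symm.trans h2) hij
  · exact ((hc.mul_const (y i)).sub (hs.mul_const (y j))).congr_deriv (by simp)
  · exact ((hs.mul_const (y i)).add (hc.mul_const (y j))).congr_deriv (by simp)
  · exact (hasDerivAt_const (0:ℝ) (y m)).congr_deriv (by simp)

lemma RD_poly {d : ℕ} {i j : Fin d} (hij : i ≠ j) (f : MvPolynomial (Fin d) ℝ) :
    RD i j (fun y => MvPolynomial.eval (fun m => y m) f)
      (fun y => MvPolynomial.eval (fun m => y m) (LP i j f)) := by
  induction f using MvPolynomial.induction_on with
  | C a =>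
    intro y
    simpa [LP] using hasDerivAt_const (0:ℝ) a
  | add p q hp hq =>
    convert hp.add hq using 2 with y
    · simp
    · simp [LP]; ring
  | mul_X p m hp =>
    convert hp.mul (RD_coord hij m) using 2 with y
    · simp
    · simp only [LP, MvPolynomial.pderiv_mul, MvPolynomial.pderiv_X, map_sub, map_mul, map_add,
        MvPolynomial.eval_X, Pi.single_apply]
      split_ifs <;> simp <;> ring

lemma poly_cont {d : ℕ} (f : MvPolynomial (Fin d) ℝ) :
    Continuous (fun y : E d => MvPolynomial.eval (fun m => y m) f) := by
  have h1 := MvPolynomial.continuous_eval f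
  have h2 : Continuous (fun y : E d => (fun m => y m : Fin d → ℝ)) := by fun_prop
  exact h1.comp h2

open MvPolynomial in
lemma sum_LP {d : ℕ} (k : ℕ) (f : MvPolynomial (Fin d) ℝ) (hf : f.IsHomogeneous k)
    (hh : ∑ i : Fin d, pderiv i (pderiv i f) = 0) :
    ∑ i, ∑ j, LP i j (LP i j f) = C (-2 * ((k:ℝ) * (k + d - 2))) * f := by
  have eu := hf.sum_X_mul_pderiv
  have eu2 : ∑ i, ∑ j, X i * X j * pderiv i (pderiv j f) = ((k : MvPolynomial (Fin d) ℝ) ^ 2 - k) * f := by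
    have h1 : ∑ i, X i * pderiv i (∑ j, X j * pderiv j f) = (k : MvPolynomial (Fin d) ℝ) ^ 2 * f := by
      rw [eu]
      have h0 : ∀ i, X i * pderiv i (k • f) = (k : MvPolynomial (Fin d) ℝ) * (X i * pderiv i f) := by
        intro i
        rw [map_nsmul, nsmul_eq_mul]; ring
      simp_rw [h0, ← Finset.mul_sum, eu, nsmul_eq_mul]; ring
    have h2 : ∀ i, X i * pderiv i (∑ j, X j * pderiv j f) =
        X i * pderiv i f + ∑ j, X i * X j * pderiv i (pderiv j f) := by
      intro i
      simp only [map_sum, pderiv_mul, pderiv_X, Finset.sum_add_distrib, mul_add, Pi.single_apply,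
        ite_mul, one_mul, zero_mul, Finset.mul_sum, mul_assoc]
      simp
    simp_rw [h2, Finset.sum_add_distrib, eu, nsmul_eq_mul] at h1
    linear_combination h1
  have hL : ∀ i j, LP i j (LP i j f) = X i ^ 2 * pderiv j (pderiv j f)
      + X j ^ 2 * pderiv i (pderiv i f) - X i * X j * pderiv i (pderiv j f)
      - X j * X i * pderiv j (pderiv i f) - X i * pderiv i f - X j * pderiv j f
      + (if i = j then 2 * (X i * pderiv i f) else 0) := by
    intro i j
    by_cases hij : i = j
    · subst hij
      simp [LP]; ring
    · simp only [LP, map_sub, pderiv_mul, pderiv_X, Pi.single_apply, hij, Ne.symm hij, if_true,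
        if_false]
      ring
  simp_rw [hL]
  simp only [Finset.sum_add_distrib, Finset.sum_sub_distrib, ← Finset.mul_sum, hh, eu, eu2]
  rw [Finset.sum_comm (f := fun i j => X j ^ 2 * pderiv i (pderiv i f)),
    Finset.sum_comm (f := fun i j => X j * X i * pderiv j (pderiv i f))]
  simp only [← Finset.mul_sum, hh, eu2]
  simp only [Finset.sum_ite_eq, Finset.mem_univ, if_true, ← Finset.mul_sum, eu]
  simp only [Finset.sum_const, Finset.card_univ, Fintype.card_fin, nsmul_eq_mul]
  rw [nsmul_eq_mul] at eu
  simp only [mul_left_comm _ (d : MvPolynomial (Fin d) ℝ) _, ← Finset.mul_sum]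
  simp only [eu, map_mul, map_neg, map_sub, map_add, map_natCast, map_ofNat]
  simp
  ring

lemma parts {d : ℕ} (hd : 2 ≤ d) {i j : Fin d} (hij : i ≠ j) {A A1 A2 B B1 B2 : E d → ℝ}
    (hA : Continuous A) (hA1 : Continuous A1) (hA2 : Continuous A2)
    (hB : Continuous B) (hB1 : Continuous B1) (hB2 : Continuous B2)
    (a1 : RD i j A A1) (a2 : RD i j A1 A2) (b1 : RD i j B B1) (b2 : RD i j B1 B2) :
    ∫ y, (A2 y * B y - A y * B2 y) ∂(sig d) = 0 := by
  have i1 := RD_int hd hij (a2.mul b1) (by fun_prop) (by fun_prop)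
  have i2 := RD_int hd hij (a1.mul b2) (by fun_prop) (by fun_prop)
  rw [← sub_zero (0:ℝ)]
  nth_rewrite 1 [← i1]
  rw [← i2, ← integral_sub]
  · congr 1; ext y; ring
  · apply sig_int hd; fun_prop
  · apply sig_int hd; fun_prop

lemma kill {d : ℕ} (hd : 2 ≤ d) (k : ℕ) (f : MvPolynomial (Fin d) ℝ) (hf : f.IsHomogeneous k)
    (hh : ∑ i : Fin d, MvPolynomial.pderiv i (MvPolynomial.pderiv i f) = 0)
    (φ φ1 φ2 : ℝ → ℝ) (h1 : ∀ t, HasDerivAt φ (φ1 t) t) (h2 : ∀ t, HasDerivAt φ1 (φ2 t) t)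
    (hc2 : Continuous φ2) (x : E d) (hx : ‖x‖ = 1) :
    T (fun t => (1 - t ^ 2) * φ2 t - (d - 1) * t * φ1 t + (k * (k + d - 2)) * φ t)
      (fun y => MvPolynomial.eval (fun m => y m) f) x = 0 := by
  have hc : Continuous φ := continuous_iff_continuousAt.mpr fun t => (h1 t).continuousAt
  have hc1 : Continuous φ1 := continuous_iff_continuousAt.mpr fun t => (h2 t).continuousAt
  let ev : MvPolynomial (Fin d) ℝ → E d → ℝ := fun q y => MvPolynomial.eval (fun m => y m) q
  let a : Fin d → Fin d → E d → ℝ := fun i j y => y i * x j - y j * x i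
  let b : Fin d → Fin d → E d → ℝ := fun i j y =>
    -(x i * y i) - (x j * y j) + (if i = j then 2 * (x i * y i) else 0)
  have hev : ∀ q, Continuous (ev q) := poly_cont
  have ha : ∀ i j, Continuous (a i j) := fun i j => by fun_prop
  have hb : ∀ i j, Continuous (b i j) := fun i j => by
    by_cases h : i = j <;> simp only [b, h, if_true, if_false] <;> fun_prop
  have hlin : ∀ i j, i ≠ j → RD i j (fun y => inner ℝ x y) (a i j) := by
    intro i j hij y
    have := HasDerivAt.fun_sum (u := Finset.univ)
      (fun m _ => ((RD_coord hij m) y).const_mul (x m))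
    refine (this.congr_deriv ?_).congr_of_eventuallyEq (Eventually.of_forall fun s => ?_)
    · simp [a, mul_sub, Finset.sum_sub_distrib]; ring
    · simp [PiLp.inner_apply, mul_comm]
  have haa : ∀ i j, i ≠ j → RD i j (a i j) (b i j) := by
    intro i j hij y
    have e1 := ((RD_coord hij i) y).mul_const (x j)
    have e2 := ((RD_coord hij j) y).mul_const (x i)
    refine (e1.sub e2).congr_deriv ?_
    simp [b, hij, hij.symm]; ring
  have hpart : ∀ i j, ∫ y, (ev (LP i j (LP i j f)) y * φ (inner ℝ x y)
      - ev f y * (φ2 (inner ℝ x y) * a i j y ^ 2 + φ1 (inner ℝ x y) * b i j y)) ∂(sig d) = 0 := by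
    intro i j
    by_cases hij : i = j
    · subst hij
      have : ∀ y, b i i y = 0 := fun y => by simp [b]; ring
      simp [this, a, ev, LP]
    · have ha' := ha i j
      have hb' := hb i j
      have r2 := (((hlin i j hij).comp h2).mul (haa i j hij))
      have := parts hd hij (hev f) (hev (LP i j f)) (hev (LP i j (LP i j f)))
        (B := fun y => φ (inner ℝ x y)) (by fun_prop) (by fun_prop) (by fun_prop)
        (RD_poly hij f) (RD_poly hij _) ((hlin i j hij).comp h1) r2
      rw [← this]
      congr 1; ext y; ring
  have hsum : ∑ i, ∑ j, ∫ y, (ev (LP i j (LP i j f)) y * φ (inner ℝ x y)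
      - ev f y * (φ2 (inner ℝ x y) * a i j y ^ 2 + φ1 (inner ℝ x y) * b i j y)) ∂(sig d) = 0 := by
    simp [hpart]
  have hI : ∀ i j, Integrable (fun y => (ev (LP i j (LP i j f)) y * φ (inner ℝ x y)
      - ev f y * (φ2 (inner ℝ x y) * a i j y ^ 2 + φ1 (inner ℝ x y) * b i j y))) (sig d) := by
    intro i j
    have hevf := hev f
    have hevLL := hev (LP i j (LP i j f))
    have ha' := ha i j
    have hb' := hb i j
    apply sig_int hd; fun_prop
  have hsum2 : ∑ i, ∑ j, ∫ y, (ev (LP i j (LP i j f)) y * φ (inner ℝ x y)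
      - ev f y * (φ2 (inner ℝ x y) * a i j y ^ 2 + φ1 (inner ℝ x y) * b i j y)) ∂(sig d) =
      ∫ y, ∑ i, ∑ j, (ev (LP i j (LP i j f)) y * φ (inner ℝ x y)
      - ev f y * (φ2 (inner ℝ x y) * a i j y ^ 2 + φ1 (inner ℝ x y) * b i j y)) ∂(sig d) := by
    rw [integral_finsetSum _ (fun i _ => integrable_finsetSum _ (fun j _ => hI i j))]
    congr 1; ext i
    rw [integral_finsetSum _ (fun j _ => hI i j)]
  rw [hsum2] at hsum
  have hfin : T (fun t => (1 - t ^ 2) * φ2 t - (d - 1) * t * φ1 t + (k * (k + d - 2)) * φ t)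
      (fun y => MvPolynomial.eval (fun m => y m) f) x = (-1/2) * ∫ y, ∑ i, ∑ j,
      (ev (LP i j (LP i j f)) y * φ (inner ℝ x y)
      - ev f y * (φ2 (inner ℝ x y) * a i j y ^ 2 + φ1 (inner ℝ x y) * b i j y)) ∂(sig d) := by
    rw [← integral_const_mul]
    unfold T
    apply integral_congr_ae
    filter_upwards [sig_ae hd] with y hy
    have hy' : ‖y‖ = 1 := by simpa using hy
    have s1 : ∑ i, ∑ j, ev (LP i j (LP i j f)) y = -2 * ((k:ℝ) * (k + d - 2)) * ev f y := by
      have := congrArg (fun q => ev q y) (sum_LP k f hf hh)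
      simpa only [ev, map_sum, map_mul, MvPolynomial.eval_C] using this
    have nx : ∑ i, x i ^ 2 = 1 := by
      have := EuclideanSpace.real_norm_sq_eq x
      rw [hx] at this; linarith
    have ny : ∑ i, y i ^ 2 = 1 := by
      have := EuclideanSpace.real_norm_sq_eq y
      rw [hy'] at this; linarith
    have ip : inner ℝ x y = ∑ i, x i * y i := by
      simp [PiLp.inner_apply, mul_comm]
    have s2 : ∑ i, ∑ j, a i j y ^ 2 = 2 * (1 - (inner ℝ x y) ^ 2) := by
      have e : ∀ i j, a i j y ^ 2 = y i ^ 2 * x j ^ 2 + x i ^ 2 * y j ^ 2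
          - 2 * ((x i * y i) * (x j * y j)) := by
        intro i j; simp only [a]; ring
      simp only [e, Finset.sum_sub_distrib, Finset.sum_add_distrib, ← Finset.mul_sum,
        ← Finset.sum_mul, nx, ny, ip]
      ring
    have s3 : ∑ i, ∑ j, b i j y = -2 * ((d:ℝ) - 1) * inner ℝ x y := by
      simp only [b, Finset.sum_add_distrib, Finset.sum_sub_distrib, Finset.sum_neg_distrib,
        Finset.sum_ite_eq, Finset.mem_univ, if_true, ← Finset.mul_sum, Finset.sum_const,
        Finset.card_univ, Fintype.card_fin, nsmul_eq_mul, ip]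
      simp only [mul_left_comm _ (d : ℝ) _, ← Finset.mul_sum]
      ring
    simp only [Finset.sum_sub_distrib, ← Finset.mul_sum, ← Finset.sum_mul, Finset.sum_add_distrib,
      s1, s2, s3]
    simp only [ev]
    ring
  rw [hfin, hsum, mul_zero]
lemma hasDerivAt_maxpow (n : ℕ) (t : ℝ) :
    HasDerivAt (fun t : ℝ => max t 0 ^ (n + 2)) ((n + 2) * max t 0 ^ (n + 1)) t := by
  rcases lt_trichotomy t 0 with h | h | h
  · have : (fun t : ℝ => max t 0 ^ (n + 2)) =ᶠ[𝓝 t] fun _ => 0 := by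
      filter_upwards [isOpen_Iio.mem_nhds h] with s hs
      rw [max_eq_right (le_of_lt hs)]; simp
    exact ((hasDerivAt_const t (0:ℝ)).congr_of_eventuallyEq this).congr_deriv
      (by rw [max_eq_right h.le]; simp)
  · subst h
    rw [← hasDerivWithinAt_univ, ← Iic_union_Ici (a := (0:ℝ))]
    apply HasDerivWithinAt.union
    · refine ((hasDerivWithinAt_const (0:ℝ) _ (0:ℝ)).congr ?_ ?_).congr_deriv ?_
      · intro s hs; rw [max_eq_right hs]; simp
      · simp
      · simp
    · refine ((hasDerivAt_pow (n + 2) (0:ℝ)).hasDerivWithinAt.congr ?_ ?_).congr_deriv ?_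
      · intro s hs; rw [max_eq_left hs]
      · simp
      · simp
  · have : (fun t : ℝ => max t 0 ^ (n + 2)) =ᶠ[𝓝 t] fun s => s ^ (n + 2) := by
      filter_upwards [isOpen_Ioi.mem_nhds h] with s hs
      rw [max_eq_left (le_of_lt hs)]
    exact ((hasDerivAt_pow (n + 2) t).congr_of_eventuallyEq this).congr_deriv
      (by rw [max_eq_left h.le]; simp)

lemma ker_exists {d : ℕ} (hd : 2 ≤ d) (k : ℕ) (hk : 0 < k) : ∃ K : ℝ → ℝ, Continuous K ∧
    (∀ t, -1 ≤ t → t ≤ 1 → 0 ≤ K t) ∧ 0 < K 1 ∧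
    (∀ t, -1 ≤ t → t ≤ 1 → K t ≠ 0 → Real.arccos t ≤ π ^ 2 * d * (1 / (k:ℝ))) ∧
    (∀ f : MvPolynomial (Fin d) ℝ, f.IsHomogeneous k →
      ∑ i : Fin d, MvPolynomial.pderiv i (MvPolynomial.pderiv i f) = 0 →
      ∀ x : E d, ‖x‖ = 1 → T K (fun y => MvPolynomial.eval (fun m => y m) f) x = 0) := by
  have hd' : (2:ℝ) ≤ d := by exact_mod_cast hd
  have hk' : (1:ℝ) ≤ k := by exact_mod_cast hk
  have hlam : (k:ℝ) ^ 2 ≤ k * (k + d - 2) := by nlinarith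
  rcases le_or_gt π (π ^ 2 * d * (1 / (k:ℝ))) with hc | hc
  · have hpos : (0:ℝ) < k * (k + d - 2) := by nlinarith
    refine ⟨fun t => (1 - t ^ 2) * (fun _ => 0) t - (d - 1) * t * (fun _ => 0) t
      + (k * (k + d - 2)) * (fun _ => 1) t, ?_, ?_, ?_, ?_, ?_⟩
    · fun_prop
    · intro t _ _; simpa using hpos.le
    · simpa using hpos
    · intro t _ _ _; exact (Real.arccos_le_pi t).trans hc
    · intro f hf hh x hx
      exact kill hd k f hf hh (fun _ => 1) (fun _ => 0) (fun _ => 0)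
        (fun t => hasDerivAt_const t _) (fun t => hasDerivAt_const t _) continuous_const x hx
  · set q : ℝ := d / k with hq
    have hqe : π ^ 2 * d * (1 / (k:ℝ)) = π ^ 2 * q := by rw [hq]; ring
    rw [hqe] at hc ⊢
    have hqp : 0 < q := by positivity
    have hqk : q * k = d := by rw [hq]; field_simp
    have hpi := Real.pi_gt_three
    have hq1 : q ^ 2 ≤ 1 := by
      have : π * q < 1 := by nlinarith
      nlinarith
    set t0 : ℝ := 1 - q ^ 2 with ht0
    have hcos : Real.cos (π ^ 2 * q) ≤ t0 := by
      have h := Real.cos_le_one_sub_mul_cos_sq (x := π ^ 2 * q) (by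
        rw [abs_of_nonneg (by positivity)]; exact hc.le)
      have e : 2 / π ^ 2 * (π ^ 2 * q) ^ 2 = 2 * π ^ 2 * q ^ 2 := by
        field_simp
      rw [e] at h
      have h9 : (1:ℝ) ≤ 2 * π ^ 2 := by nlinarith
      have := mul_le_mul_of_nonneg_right h9 (sq_nonneg q)
      linarith
    have hkey : ∀ t, t ≤ 1 → t0 < t → 0 < (1 - t ^ 2) * (6 * max (t - t0) 0)
        - (d - 1) * t * (3 * max (t - t0) 0 ^ 2) + (k * (k + d - 2)) * max (t - t0) 0 ^ 3 := by
      intro t ht1 ht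
      rw [max_eq_left (by linarith)]
      set v := t - t0 with hv
      have hvp : 0 < v := by linarith
      have ht00 : 0 ≤ t := by linarith
      have e : (1 - t ^ 2) * (6 * v) - (d - 1) * t * (3 * v ^ 2) + (k * (k + d - 2)) * v ^ 3
        = v * (6 * (1 - t ^ 2) - 3 * (d - 1) * t * v + (k * (k + d - 2)) * v ^ 2) := by ring
      rw [e]
      apply mul_pos hvp
      have a1 : 1 - t ≤ 1 - t ^ 2 := by nlinarith
      have a2 : 1 - t = q ^ 2 - v := by rw [hv, ht0]; ring
      have a3 : (d - 1) * t * v ≤ (d - 1) * v := by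
        have : 0 ≤ ((d:ℝ) - 1) * v := mul_nonneg (by linarith) hvp.le
        nlinarith
      have a4 : (k:ℝ) ^ 2 * v ^ 2 ≤ (k * (k + d - 2)) * v ^ 2 :=
        mul_le_mul_of_nonneg_right hlam (sq_nonneg v)
      have a5 : 0 < 6 * q ^ 2 - 3 * (d + 1) * v + k ^ 2 * v ^ 2 := by
        have : (d + 1) * v ≤ 3 / 2 * (q * k) * v := by
          rw [hqk]; nlinarith
        have : 0 < q ^ 2 := by positivity
        nlinarith [sq_nonneg (k * v - 9 / 4 * q)]
      nlinarith
    have hz : ∀ t, t ≤ t0 → (1 - t ^ 2) * (6 * max (t - t0) 0)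
        - (d - 1) * t * (3 * max (t - t0) 0 ^ 2) + (k * (k + d - 2)) * max (t - t0) 0 ^ 3 = 0 := by
      intro t ht
      rw [max_eq_right (by linarith)]; ring
    refine ⟨fun t => (1 - t ^ 2) * (fun t => 6 * max (t - t0) 0) t
        - (d - 1) * t * (fun t => 3 * max (t - t0) 0 ^ 2) t
        + (k * (k + d - 2)) * (fun t => max (t - t0) 0 ^ 3) t, ?_, ?_, ?_, ?_, ?_⟩
    · fun_prop
    · intro t _ h1
      rcases le_or_gt t t0 with h | h
      · exact (hz t h).ge
      · exact (hkey t h1 h).le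
    · exact hkey 1 le_rfl (by rw [ht0]; nlinarith)
    · intro t hm h1 hne
      have h : t0 < t := by
        by_contra h
        exact hne (hz t (not_lt.mp h))
      have := Real.arccos_le_arccos (hcos.trans h.le)
      rwa [Real.arccos_cos (by positivity) hc.le] at this
    · intro f hf hh x hx
      refine kill hd k f hf hh _ _ _ (fun t => ?_) (fun t => ?_) (by fun_prop) x hx
      · have := (hasDerivAt_maxpow 1 (t - t0)).comp_sub_const t t0
        exact this.congr_deriv (by norm_num)
      · have := ((hasDerivAt_maxpow 0 (t - t0)).comp_sub_const t t0).const_mul 3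
        exact this.congr_deriv (by norm_num; ring)

lemma sign_lemma {d : ℕ} (hd : 2 ≤ d) (g : E d → ℝ) (hg : Continuous g) (x : E d) (hx : ‖x‖ = 1)
    (r : ℝ) (hne : ∀ y : E d, ‖y‖ = 1 → Real.arccos (inner ℝ x y) ≤ r → g y ≠ 0) (hgx : 0 < g x)
    (y : E d) (hy : ‖y‖ = 1) (hyr : Real.arccos (inner ℝ x y) ≤ r) : 0 < g y := by
  by_contra hn
  have hn : g y ≤ 0 := not_lt.mp hn
  by_cases hyx : y = -x
  · have hr : π ≤ r := by
      have : inner ℝ x y = -1 := by rw [hyx, inner_neg_right, real_inner_self_eq_norm_sq, hx]; norm_num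
      rwa [this, Real.arccos_neg_one] at hyr
    have hpc : IsPreconnected (sphere (0 : E d) 1) := by
      apply isPreconnected_sphere
      rw [← Module.finrank_eq_rank]
      simp only [finrank_euclideanSpace, Fintype.card_fin]
      exact_mod_cast hd
    obtain ⟨z, hz, hz0⟩ := hpc.intermediate_value (by simpa using hy) (by simpa using hx)
      hg.continuousOn (⟨hn, hgx.le⟩ : (0:ℝ) ∈ Icc (g y) (g x))
    exact hne z (by simpa using hz) ((Real.arccos_le_pi _).trans hr) hz0
  · let w : ℝ → E d := fun s => x + s • (y - x)
    have hw : ∀ s ∈ Icc (0:ℝ) 1, w s ≠ 0 := by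
      rintro s ⟨h0, h1⟩ h
      have e : (1 - s) • x = -(s • y) := by
        simp only [w] at h
        rw [← sub_eq_zero, ← h]; module
      have e2 := congrArg norm e
      rw [norm_neg, norm_smul, norm_smul, hx, hy, Real.norm_of_nonneg h0,
        Real.norm_of_nonneg (by linarith)] at e2
      have hs : s = 1 / 2 := by linarith
      apply hyx
      rw [hs] at e
      have := congrArg (fun v => (2:ℝ) • v) e
      simp only [smul_smul, smul_neg] at this
      norm_num at this
      rw [this]; simp
    have hwc : ContinuousOn (fun s => g (nrm (w s))) (Icc 0 1) := by
      apply hg.comp_continuousOn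
      unfold nrm
      apply ContinuousOn.fun_smul
      · apply ContinuousOn.inv₀
        · simp only [w]; fun_prop
        · intro s hs; simpa using hw s hs
      · simp only [w]; fun_prop
    have e0 : nrm (w 0) = x := by simp [w, nrm, hx]
    have e1 : nrm (w 1) = y := by simp [w, nrm, hy]
    obtain ⟨s, hs, hs0⟩ := intermediate_value_Icc' (zero_le_one) hwc
      (⟨by rw [e1]; exact hn, by rw [e0]; exact hgx.le⟩ : (0:ℝ) ∈ Icc (g (nrm (w 1))) (g (nrm (w 0))))
    have hw0 := hw s hs
    have hwp : 0 < ‖w s‖ := norm_pos_iff.mpr hw0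
    refine hne (nrm (w s)) (by simp [nrm, norm_smul, hw0]) (le_trans (Real.arccos_le_arccos ?_) hyr) hs0
    have hn1 : ‖w s‖ ≤ 1 := by
      have : w s = (1 - s) • x + s • y := by simp only [w]; module
      rw [this]
      refine (norm_add_le _ _).trans ?_
      rw [norm_smul, norm_smul, hx, hy, Real.norm_of_nonneg hs.1,
        Real.norm_of_nonneg (by linarith [hs.2])]
      linarith
    have hin : inner ℝ x (w s) = 1 + s * (inner ℝ x y - 1) := by
      simp only [w, inner_add_right, inner_smul_right, inner_sub_right,
        real_inner_self_eq_norm_sq, hx]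
      norm_num
    have hb := abs_le.mp (abs_real_inner_le_norm x y)
    rw [hx, hy, one_mul] at hb
    have h3 : inner ℝ x y ≤ inner ℝ x (w s) := by rw [hin]; nlinarith [hs.1, hs.2]
    have e : inner ℝ x (nrm (w s)) = ‖w s‖⁻¹ * inner ℝ x (w s) := by
      simp [nrm, inner_smul_right]
    rw [e]
    rcases le_or_gt 0 (inner ℝ x (w s)) with hA | hA
    · have : 1 ≤ ‖w s‖⁻¹ := (one_le_inv₀ hwp).mpr hn1
      nlinarith
    · have hnw : ‖w s‖ ^ 2 = (1 - s) ^ 2 + s ^ 2 + 2 * s * (1 - s) * inner ℝ x y := by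
        have : w s = (1 - s) • x + s • y := by simp only [w]; module
        rw [this, norm_add_sq_real, norm_smul, norm_smul, hx, hy, inner_smul_left, inner_smul_right]
        simp
        ring
      rw [hin] at hA ⊢
      set c : ℝ := inner ℝ x y
      have hc0 : c < 0 := by nlinarith [hs.1, hs.2]
      have hsq : (1 + s * (c - 1)) ^ 2 ≤ (-c * ‖w s‖) ^ 2 := by
        rw [mul_pow, hnw]
        have p1 : 0 ≤ 1 - c ^ 2 := by nlinarith
        have p2 : 0 ≤ -(1 - s + 2 * s * c) := by nlinarith [hs.1, mul_nonneg hs.1 (neg_nonneg.mpr hc0.le)]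
        have p3 : 0 ≤ 1 - s := by linarith [hs.2]
        nlinarith [mul_nonneg (mul_nonneg p1 p2) p3]
      have h5 := (abs_le.mp (abs_le_of_sq_le_sq hsq (by nlinarith))).1
      rw [inv_mul_eq_div, le_div_iff₀ hwp]
      linarith

end GeoBall

theorem poly_restriction_zero_in_geodesic_ball {d : ℕ} (hd : 2 ≤ d)
    (p : MvPolynomial (Fin d) ℝ) (S : Finset ℕ) (hS : ∀ k ∈ S, 0 < k)
    (a : ℕ → ℝ) (f : ℕ → MvPolynomial (Fin d) ℝ)
    (hhom : ∀ k ∈ S, (f k).IsHomogeneous k)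
    (hharm : ∀ k ∈ S, ∑ i : Fin d, MvPolynomial.pderiv i (MvPolynomial.pderiv i (f k)) = 0)
    (hrestrict : ∀ x : EuclideanSpace ℝ (Fin d), ‖x‖ = 1 →
      MvPolynomial.eval (fun i => x i) p = ∑ k ∈ S, a k * MvPolynomial.eval (fun i => x i) (f k))
    (x : EuclideanSpace ℝ (Fin d)) (hx : ‖x‖ = 1) :
    ∃ y : EuclideanSpace ℝ (Fin d), ‖y‖ = 1 ∧
      Real.arccos (∑ i, x i * y i) ≤ π ^ 2 * d * ∑ k ∈ S, 1 / (k : ℝ) ∧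
      MvPolynomial.eval (fun i => y i) p = 0 := by
  by_contra hcon
  push Not at hcon
  have hip : ∀ y : EuclideanSpace ℝ (Fin d), inner ℝ x y = ∑ i, x i * y i := fun y => by
    simp [PiLp.inner_apply, mul_comm]
  have hr0 : 0 ≤ π ^ 2 * d * ∑ k ∈ S, 1 / (k : ℝ) := by positivity
  have hxne := hcon x hx (by
    rw [← hip, real_inner_self_eq_norm_sq, hx]; simpa using hr0)
  have hker : ∀ k : ℕ, ∃ K : ℝ → ℝ, k ∈ S → Continuous K ∧
    (∀ t, -1 ≤ t → t ≤ 1 → 0 ≤ K t) ∧ 0 < K 1 ∧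
    (∀ t, -1 ≤ t → t ≤ 1 → K t ≠ 0 → Real.arccos t ≤ π ^ 2 * d * (1 / (k:ℝ))) ∧
    (∀ f : MvPolynomial (Fin d) ℝ, f.IsHomogeneous k →
      ∑ i : Fin d, MvPolynomial.pderiv i (MvPolynomial.pderiv i f) = 0 →
      ∀ x : EuclideanSpace ℝ (Fin d), ‖x‖ = 1 →
        GeoBall.T K (fun y => MvPolynomial.eval (fun m => y m) f) x = 0) := by
    intro k
    by_cases hk : k ∈ S
    · obtain ⟨K, hK⟩ := GeoBall.ker_exists hd k (hS k hk)
      exact ⟨K, fun _ => hK⟩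
    · exact ⟨0, fun h => absurd h hk⟩
  choose K hK using hker
  -- the sign of `p` at `x`
  obtain ⟨e, he⟩ : ∃ e : ℝ, 0 < e * MvPolynomial.eval (fun i => x i) p :=
    ⟨MvPolynomial.eval (fun i => x i) p, mul_self_pos.mpr hxne⟩
  have hene : e ≠ 0 := by rintro rfl; simp at he
  refine GeoBall.main_ind hd K (fun k => π ^ 2 * d * (1 / (k:ℝ))) x hx S
    (fun k y => (e * a k) * MvPolynomial.eval (fun i => y i) (f k))
    (fun k hk => (hK k hk).1) (fun k hk => by positivity) (fun k hk => (hK k hk).2.1)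
    (fun k hk => (hK k hk).2.2.1) (fun k hk => (hK k hk).2.2.2.1)
    (fun k hk => continuous_const.mul (GeoBall.poly_cont _)) ?_ ?_
  · intro k hk z hz
    have h0 := (hK k hk).2.2.2.2 (f k) (hhom k hk) (hharm k hk) z hz
    unfold GeoBall.T at h0 ⊢
    simp_rw [mul_assoc]
    rw [MeasureTheory.integral_const_mul, MeasureTheory.integral_const_mul, h0]
    simp
  · intro y hy hyr
    rw [← Finset.mul_sum] at hyr
    have hpos := GeoBall.sign_lemma hd (fun y => e * MvPolynomial.eval (fun i => y i) p)
      (continuous_const.mul (GeoBall.poly_cont p)) x hx _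
      (fun z hz hzr => mul_ne_zero hene (hcon z hz (by rwa [← hip]))) he y hy hyr
    simp only at hpos
    rw [hrestrict y hy, Finset.mul_sum] at hpos
    simpa only [mul_assoc] using hpos
end

section
/- Let d ≥ 2, k ≥ 1, and let f ∈ ℝ[x₁, …, x_d] be a nonzero harmonic polynomial homogeneous of degree k (f homogeneous of degree k with Δf = 0). Then the restriction of f to the unit sphere 𝕊^{d-1} has a zero in every geodesic ball of radius 2πd/k; that is, for every x ∈ 𝕊^{d-1} there exists y ∈ 𝕊^{d-1} with arccos⟨x, y⟩ ≤ 2πd/k and f(y) = 0. -/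
open scoped Real

lemma second_deriv_le {u u' : ℝ → ℝ} {L : ℝ} (h1 : ∀ᶠ s in nhds (0:ℝ), HasDerivAt u (u' s) s)
    (h2 : HasDerivAt u' L 0) (hm : IsLocalMax u 0) : L ≤ 0 := by
  by_contra hL
  push Not at hL
  have e1 : deriv u =ᶠ[nhds 0] u' := h1.mono fun s hs => hs.deriv
  have e2 : deriv (deriv u) 0 = L := by rw [e1.deriv_eq]; exact h2.deriv
  have hmin : IsLocalMin u 0 := by
    apply isLocalMin_of_deriv_deriv_pos
    · rw [e2]; exact hL
    · exact hm.deriv_eq_zero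
    · exact h1.self_of_nhds.continuousAt
  have hc : u =ᶠ[nhds 0] fun _ => u 0 := by
    filter_upwards [hm, hmin] with s a b using le_antisymm a b
  have : deriv u =ᶠ[nhds 0] deriv (fun _ => u 0) := hc.deriv
  have h3 := this.deriv_eq
  rw [e2] at h3
  simp at h3
  linarith

lemma poly_deriv {d : ℕ} (f : MvPolynomial (Fin d) ℝ) (i : Fin d) (y : Fin d → ℝ) (s : ℝ) :
    HasDerivAt (fun s => MvPolynomial.eval (y + s • Pi.single i (1:ℝ)) f)
      (MvPolynomial.eval (y + s • Pi.single i (1:ℝ)) (MvPolynomial.pderiv i f)) s := by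
  induction f using MvPolynomial.induction_on with
  | C a => simpa using hasDerivAt_const s a
  | add p q hp hq => simpa only [map_add] using! hp.add hq
  | mul_X p j hp =>
    have hX : HasDerivAt (fun s => (y + s • Pi.single i (1:ℝ) : Fin d → ℝ) j)
      ((Pi.single i (1:ℝ) : Fin d → ℝ) j) s := by
      simpa using ((hasDerivAt_id s).mul_const ((Pi.single i (1:ℝ) : Fin d → ℝ) j)).const_add (y j)
    have := hp.mul hX
    simp only [MvPolynomial.eval_mul, MvPolynomial.eval_X]
    refine HasDerivAt.congr_deriv this ?_
    by_cases h : j = i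
    · subst h; simp [Derivation.leibniz]; ring
    · have h2 : (MvPolynomial.pderiv i) (MvPolynomial.X j : MvPolynomial (Fin d) ℝ) = 0 :=
        MvPolynomial.pderiv_X_of_ne h
      simp [Derivation.leibniz, h2, h]; ring

lemma hom_eval {d k : ℕ} (f : MvPolynomial (Fin d) ℝ) (hf : f.IsHomogeneous k) (r : ℝ) (y : Fin d → ℝ) :
    MvPolynomial.eval (r • y) f = r ^ k * MvPolynomial.eval y f := by
  rw [MvPolynomial.eval_eq, MvPolynomial.eval_eq, Finset.mul_sum]
  refine Finset.sum_congr rfl fun m hm => ?_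
  have := hf (MvPolynomial.mem_support_iff.1 hm)
  simp only [Pi.smul_apply, smul_eq_mul, mul_pow, Finset.prod_mul_distrib]
  rw [Finset.prod_pow_eq_pow_sum]
  have h2 : ∑ i ∈ m.support, m i = k := by
    rw [← this]; simp [Finsupp.weight_apply, Finsupp.sum]
  rw [h2]; ring

/-- first derivative of model -/
noncomputable def phi1 (T X Y : ℝ) (m : ℕ) (q : ℝ) (s : ℝ) : ℝ :=
  (m * (T + s * X) ^ (m-1) * X) * (1 + 2 * s * Y + s^2) ^ q
    + (T + s * X) ^ m * ((2 * Y + 2 * s) * q * (1 + 2 * s * Y + s^2) ^ (q-1))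

lemma phi_d1 (T X Y : ℝ) (m : ℕ) (q : ℝ) (s : ℝ) (h : (1 + 2 * s * Y + s^2) ≠ 0) :
    HasDerivAt (fun s : ℝ => (T + s * X) ^ m * (1 + 2 * s * Y + s^2) ^ q) (phi1 T X Y m q s) s := by
  have a : HasDerivAt (fun s : ℝ => T + s * X) X s := by
    simpa using ((hasDerivAt_id s).mul_const X).const_add T
  have b : HasDerivAt (fun s : ℝ => 1 + 2 * s * Y + s^2) (2 * Y + 2 * s) s := by
    have := ((((hasDerivAt_id s).const_mul 2).mul_const Y).const_add 1).add ((hasDerivAt_id s).pow 2)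
    exact this.congr_deriv (by simp)
  exact (a.pow m).mul (b.rpow_const (p := q) (Or.inl h))

lemma phi_d2 (T X Y : ℝ) (m : ℕ) (q : ℝ) :
    HasDerivAt (phi1 T X Y m q) (m * (m-1) * X^2 * T^(m-2) + 4 * q * m * X * Y * T^(m-1)
      + T^m * (2 * q + 4 * q * (q-1) * Y^2)) 0 := by
  have a : HasDerivAt (fun s : ℝ => T + s * X) X 0 := by
    simpa using ((hasDerivAt_id (0:ℝ)).mul_const X).const_add T
  have b : HasDerivAt (fun s : ℝ => 1 + 2 * s * Y + s^2) (2 * Y + 2 * 0) 0 := by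
    have := ((((hasDerivAt_id (0:ℝ)).const_mul 2).mul_const Y).const_add 1).add ((hasDerivAt_id (0:ℝ)).pow 2)
    exact this.congr_deriv (by simp)
  have c : HasDerivAt (fun s : ℝ => 2 * Y + 2 * s) 2 0 := by
    simpa using ((hasDerivAt_id (0:ℝ)).const_mul 2).const_add (2*Y)
  have h : (1 + 2 * (0:ℝ) * Y + 0^2) ≠ 0 := by norm_num
  have := ((((a.pow (m-1)).const_mul (m:ℝ)).mul_const X).mul (b.rpow_const (p := q) (Or.inl h))).add
    ((a.pow m).mul ((c.mul_const q).mul (b.rpow_const (p := q-1) (Or.inl h))))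
  refine HasDerivAt.congr_deriv this ?_
  simp
  rcases m with _ | _ | m
  · simp; ring
  · simp; ring
  · simp; ring

lemma core {d k : ℕ} (f : MvPolynomial (Fin d) ℝ)
    (hhom : f.IsHomogeneous k)
    (hharm : ∑ i : Fin d, MvPolynomial.pderiv i (MvPolynomial.pderiv i f) = 0)
    (x : Fin d → ℝ) (hx : ∑ i, x i ^ 2 = 1) (p : ℕ) (a : ℝ) (C : Set (Fin d → ℝ))
    (hC : IsClosed C) (hCs : ∀ y ∈ C, ∑ i, y i ^ 2 = 1) (hxC : x ∈ C) (ha : a < 1)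
    (hpos : ∀ y ∈ C, 0 < MvPolynomial.eval y f)
    (hloc : ∀ y₀ ∈ C, a < (∑ i, x i * y₀ i) ^ (2 * p) →
      ∀ᶠ y in nhds y₀, (√(∑ i, y i ^ 2))⁻¹ • y ∈ C)
    (hΦ : ∀ y₀ ∈ C, a < (∑ i, x i * y₀ i) ^ (2 * p) →
      0 < 2 * p * (2 * p - 1) * (∑ i, x i * y₀ i) ^ (2 * p - 2)
        - (2 * p * (2 * p + d - 2) - k * (k + d - 2)) * (∑ i, x i * y₀ i) ^ (2 * p)
        - k * (k + d - 2 : ℝ) * a) : False := by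
  have hcomp : IsCompact C := by
    apply (isCompact_univ_pi (fun _ : Fin d => isCompact_Icc (a := (-1:ℝ)) (b := 1))).of_isClosed_subset hC
    intro y hy i _
    have h1 := hCs y hy
    have h2 : y i ^ 2 ≤ 1 := by
      rw [← h1]
      exact Finset.single_le_sum (f := fun i => y i ^ 2) (fun i _ => sq_nonneg _) (Finset.mem_univ i)
    exact abs_le.1 (by rwa [← sq_le_one_iff_abs_le_one])
  have hcf : Continuous fun y : Fin d → ℝ => MvPolynomial.eval y f := MvPolynomial.continuous_eval f
  obtain ⟨y₀, hy₀, hmax⟩ := hcomp.exists_isMaxOn ⟨x, hxC⟩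
    (f := fun y => ((∑ i, x i * y i) ^ (2 * p) - a) / MvPolynomial.eval y f)
    (ContinuousOn.div (by fun_prop) hcf.continuousOn fun y hy => (hpos y hy).ne')
  set c := ((∑ i, x i * y₀ i) ^ (2 * p) - a) / MvPolynomial.eval y₀ f with hc
  have hcpos : 0 < c := by
    have h1 := hmax hxC
    simp only [Set.mem_ofPred_eq] at h1
    refine lt_of_lt_of_le ?_ h1
    apply div_pos _ (hpos x hxC)
    have : ∑ i, x i * x i = 1 := by rw [← hx]; simp [sq]
    rw [this]; simpa using ha
  have hat : a < (∑ i, x i * y₀ i) ^ (2 * p) := by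
    by_contra h
    push Not at h
    have : c ≤ 0 := div_nonpos_of_nonpos_of_nonneg (by linarith) (hpos y₀ hy₀).le
    linarith
  have hy1 := hCs y₀ hy₀
  have hle : ∀ y ∈ C, (∑ i, x i * y i) ^ (2 * p) - a - c * MvPolynomial.eval y f ≤ 0 := by
    intro y hy
    have h1 := hmax hy
    simp only [Set.mem_ofPred_eq] at h1
    rw [div_le_iff₀ (hpos y hy)] at h1
    linarith
  set U : (Fin d → ℝ) → ℝ := fun y => (∑ i, x i * y i) ^ (2 * p) * (∑ i, y i ^ 2) ^ (((k:ℝ) - 2 * p) / 2)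
    - a * (∑ i, y i ^ 2) ^ ((k:ℝ) / 2) - c * MvPolynomial.eval y f with hU
  have hU0 : U y₀ = 0 := by
    simp only [hU, hy1, Real.one_rpow, hc]
    have := (hpos y₀ hy₀).ne'
    field_simp
    ring
  have hev : ∀ᶠ y in nhds y₀, U y ≤ 0 := by
    have hp0 : ∀ᶠ y in nhds y₀, 0 < ∑ i, y i ^ 2 := by
      have : Continuous fun y : Fin d → ℝ => ∑ i, y i ^ 2 := by fun_prop
      exact this.continuousAt.eventually (lt_mem_nhds (by simp [hy1]))
    filter_upwards [hloc y₀ hy₀ hat, hp0] with y hy hR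
    set R := ∑ i, y i ^ 2 with hRdef
    have hs : 0 < √R := Real.sqrt_pos.2 hR
    have h1 := hle _ hy
    have h2 : ∑ i, x i * ((√R)⁻¹ • y) i = (√R)⁻¹ * ∑ i, x i * y i := by
      rw [Finset.mul_sum]; refine Finset.sum_congr rfl fun i _ => ?_
      simp; ring
    rw [h2, hom_eval f hhom] at h1
    have h3 : R ^ ((k:ℝ) / 2) = (√R) ^ k := by
      rw [Real.sqrt_eq_rpow, ← Real.rpow_natCast, ← Real.rpow_mul hR.le]; congr 1; ring
    have h4 : R ^ (((k:ℝ) - 2 * p) / 2) = (√R) ^ k * ((√R)⁻¹) ^ (2 * p) := by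
      rw [sub_div, Real.rpow_sub hR, h3, inv_pow, div_eq_mul_inv]
      congr 2
      rw [Real.sqrt_eq_rpow, ← Real.rpow_natCast, ← Real.rpow_mul hR.le]; congr 1; push_cast; ring
    have h5 : U y = (√R) ^ k * (((√R)⁻¹ * ∑ i, x i * y i) ^ (2 * p) - a
        - c * ((√R)⁻¹ ^ k * MvPolynomial.eval y f)) := by
      simp only [hU]
      rw [← hRdef, h3, h4, mul_pow]
      have : (√R) ^ k * (√R)⁻¹ ^ k = 1 := by rw [← mul_pow, mul_inv_cancel₀ hs.ne', one_pow]
      linear_combination (c * MvPolynomial.eval y f) * this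
    rw [h5]
    exact mul_nonpos_of_nonneg_of_nonpos (by positivity) h1
  set T := ∑ i, x i * y₀ i with hT
  have key : ∀ i, ((2 * p : ℕ) * ((2 * p : ℕ) - 1) * x i ^2 * T^(2 * p -2)
      + 4 * (((k:ℝ) - 2 * p) / 2) * (2 * p : ℕ) * x i * y₀ i * T^(2 * p -1)
      + T^(2 * p) * (2 * (((k:ℝ) - 2 * p) / 2) + 4 * (((k:ℝ) - 2 * p) / 2) * ((((k:ℝ) - 2 * p) / 2)-1) * y₀ i ^2))
      - a * (2 * ((k:ℝ)/2) + 4 * ((k:ℝ)/2) * ((k:ℝ)/2-1) * y₀ i ^2)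
      - c * MvPolynomial.eval y₀ (MvPolynomial.pderiv i (MvPolynomial.pderiv i f)) ≤ 0 := by
    intro i
    have hline : Filter.Tendsto (fun s : ℝ => y₀ + s • Pi.single i (1:ℝ)) (nhds 0) (nhds y₀) := by
      have : Continuous (fun s : ℝ => y₀ + s • (Pi.single i (1:ℝ) : Fin d → ℝ)) := by fun_prop
      simpa using this.tendsto 0
    have e1 : ∀ s : ℝ, ∑ j, x j * (y₀ + s • (Pi.single i (1:ℝ) : Fin d → ℝ)) j = T + s * x i := by
      intro s
      simp only [Pi.add_apply, Pi.smul_apply, smul_eq_mul, mul_add, Finset.sum_add_distrib, ← hT]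
      congr 1
      simp [Pi.single_apply, mul_comm]
    have e2 : ∀ s : ℝ, ∑ j, (y₀ + s • (Pi.single i (1:ℝ) : Fin d → ℝ)) j ^ 2 = 1 + 2 * s * y₀ i + s ^ 2 := by
      intro s
      simp only [Pi.add_apply, Pi.smul_apply, smul_eq_mul, add_sq, Finset.sum_add_distrib, hy1]
      congr 2
      · simp [Pi.single_apply]; ring
      · simp [Pi.single_apply]
    have hmx : IsLocalMax (fun s : ℝ => U (y₀ + s • Pi.single i (1:ℝ))) 0 := by
      have : ∀ᶠ s in nhds (0:ℝ), U (y₀ + s • Pi.single i (1:ℝ)) ≤ 0 := hline.eventually hev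
      filter_upwards [this] with s hs
      simpa [hU0] using hs
    have hUe : (fun s : ℝ => U (y₀ + s • Pi.single i (1:ℝ))) = fun s =>
        (T + s * x i) ^ (2 * p) * (1 + 2 * s * y₀ i + s ^ 2) ^ (((k:ℝ) - 2 * p) / 2)
        - a * ((T + s * x i) ^ 0 * (1 + 2 * s * y₀ i + s ^ 2) ^ ((k:ℝ) / 2))
        - c * MvPolynomial.eval (y₀ + s • Pi.single i (1:ℝ)) f := by
      funext s
      simp only [hU, e1, e2]; simp
    rw [hUe] at hmx
    have hne : ∀ᶠ s in nhds (0:ℝ), 1 + 2 * s * y₀ i + s ^ 2 ≠ 0 := by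
      have : Continuous fun s : ℝ => 1 + 2 * s * y₀ i + s ^ 2 := by fun_prop
      exact this.continuousAt.eventually_ne (by simp)
    have hf2 := poly_deriv (MvPolynomial.pderiv i f) i y₀ 0
    have := second_deriv_le (hne.mono fun s hs =>
      ((phi_d1 T (x i) (y₀ i) (2 * p) (((k:ℝ) - 2 * p) / 2) s hs).sub
        ((phi_d1 T (x i) (y₀ i) 0 ((k:ℝ) / 2) s hs).const_mul a)).sub
        ((poly_deriv f i y₀ s).const_mul c))
      (((phi_d2 T (x i) (y₀ i) (2 * p) (((k:ℝ) - 2 * p) / 2)).sub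
        ((phi_d2 T (x i) (y₀ i) 0 ((k:ℝ) / 2)).const_mul a)).sub
        (hf2.const_mul c)) hmx
    simpa using this
  have hsum := Finset.sum_nonpos fun i (_ : i ∈ Finset.univ) => key i
  have hlap : ∑ i, MvPolynomial.eval y₀ (MvPolynomial.pderiv i (MvPolynomial.pderiv i f)) = 0 := by
    rw [← map_sum, hharm, map_zero]
  have hfin := hΦ y₀ hy₀ hat
  have hTp : (p:ℝ) * (T * T ^ (2 * p - 1)) = p * T ^ (2 * p) := by
    rcases p with _ | p
    · simp
    · congr 1
      rw [← pow_succ']; congr 1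
  have hexp : ∀ q m A B D : ℝ, ∑ i, ((m * (m-1) * x i ^2 * A + 4 * q * m * x i * y₀ i * B
      + D * (2 * q + 4 * q * (q-1) * y₀ i ^2)) - a * (2 * ((k:ℝ)/2) + 4 * ((k:ℝ)/2) * ((k:ℝ)/2-1) * y₀ i ^2)
      - c * MvPolynomial.eval y₀ (MvPolynomial.pderiv i (MvPolynomial.pderiv i f)))
      = m * (m-1) * A + 4 * q * m * (T * B) + D * (2 * q * d + 4 * q * (q-1))
        - a * (k * d + k * (k - 2)) := by
    intro q m A B D
    have r1 : ∀ i, ((m * (m-1) * x i ^2 * A + 4 * q * m * x i * y₀ i * B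
      + D * (2 * q + 4 * q * (q-1) * y₀ i ^2)) - a * (2 * ((k:ℝ)/2) + 4 * ((k:ℝ)/2) * ((k:ℝ)/2-1) * y₀ i ^2)
      - c * MvPolynomial.eval y₀ (MvPolynomial.pderiv i (MvPolynomial.pderiv i f)))
      = (m * (m-1) * A) * x i ^2 + (4 * q * m * B) * (x i * y₀ i)
        + (D * (4 * q * (q-1)) - a * (k * (k - 2))) * y₀ i ^ 2 + (D * (2 * q) - a * k)
        - c * MvPolynomial.eval y₀ (MvPolynomial.pderiv i (MvPolynomial.pderiv i f)) := by
      intro i; ring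
    simp only [r1, Finset.sum_add_distrib, Finset.sum_sub_distrib, ← Finset.mul_sum, hx, hy1, hlap, ← hT]
    simp
    ring
  rw [hexp] at hsum
  push_cast at hsum
  have : 4 * (((k:ℝ) - 2 * p) / 2) * (2 * p) * (T * T ^ (2 * p - 1)) = 4 * (((k:ℝ) - 2 * p) / 2) * 2 * (p * T ^ (2 * p)) := by
    rw [← hTp]; ring
  rw [this] at hsum
  nlinarith [hsum, hfin]

lemma numeric {d k : ℕ} (hd : 2 ≤ d) (hk : 2 * d < k) : ∃ p : ℕ, 0 < p ∧
    ∀ w τ : ℝ, τ = 1 - (2 * d / k : ℝ) ^ 2 → τ ≤ w → w ≤ 1 →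
      0 < 2 * p * (2 * p - 1) * w ^ (p - 1)
        - (2 * p * (2 * p + d - 2) - k * (k + d - 2)) * w ^ p - k * (k + d - 2 : ℝ) * τ ^ p := by
  have hd' : (2:ℝ) ≤ d := by exact_mod_cast hd
  have hk' : (2 * d + 1:ℝ) ≤ k := by exact_mod_cast hk
  have hk0 : (0:ℝ) < k := by linarith
  have hd0 : (0:ℝ) < d := by linarith
  have hpos : (0:ℝ) < (k:ℝ)^2 / (8 * d) := by positivity
  refine ⟨⌈(k:ℝ)^2 / (8 * d)⌉₊, Nat.ceil_pos.2 hpos, ?_⟩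
  have hp1 := Nat.le_ceil ((k:ℝ)^2 / (8 * d))
  have hp2 := Nat.ceil_lt_add_one hpos.le
  have hp3 := Nat.ceil_pos.2 hpos
  generalize ⌈(k:ℝ)^2 / (8 * d)⌉₊ = p at *
  obtain ⟨n, rfl⟩ : ∃ n, p = n + 1 := ⟨p - 1, by omega⟩
  clear hp3
  intro w τ hτ hw hw1
  rw [div_le_iff₀ (by positivity)] at hp1
  have hp2' : ((n + 1 : ℕ) : ℝ) * (8 * d) < k ^ 2 + 8 * d := by
    have := mul_lt_mul_of_pos_right hp2 (show (0:ℝ) < 8 * d by positivity)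
    rwa [add_mul, div_mul_cancel₀ _ (by positivity), one_mul] at this
  simp only [Nat.add_sub_cancel]
  have hnp : (1:ℝ) ≤ ((n + 1 : ℕ) : ℝ) := by push_cast; linarith [(Nat.cast_nonneg n : (0:ℝ) ≤ n)]
  generalize hP : ((n + 1 : ℕ) : ℝ) = P at *
  set δ : ℝ := (2 * d / k : ℝ) ^ 2 with hδ
  have hδk : δ * k ^ 2 = 4 * d ^ 2 := by rw [hδ]; field_simp; ring
  have hδ0 : 0 < δ := by positivity
  have hδ1 : δ < 1 := by
    rw [hδ, sq_lt_one_iff₀ (by positivity), div_lt_one hk0]; linarith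
  have hτ0 : 0 < τ := by linarith
  have hτ1 : τ < 1 := by linarith
  have hPδ : (d:ℝ) ≤ 2 * (P * δ) := by
    have : (k:ℝ)^2 * δ ≤ P * (8 * d) * δ := mul_le_mul_of_nonneg_right hp1 hδ0.le
    have h2 : 4 * d * (d:ℝ) ≤ 4 * d * (2 * (P * δ)) := by nlinarith
    exact le_of_mul_le_mul_left h2 (by positivity)
  -- Bernoulli
  have hbern : τ ^ (n + 1) ≤ 1 / 2 := by
    have h1 : 1 + ((n + 1 : ℕ) : ℝ) * δ ≤ (1 + δ) ^ (n + 1) := one_add_mul_le_pow (by linarith) _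
    rw [hP] at h1
    have h2 : τ ^ (n + 1) * (1 + δ) ^ (n + 1) ≤ 1 := by
      rw [← mul_pow]; exact pow_le_one₀ (by positivity) (by rw [hτ]; nlinarith)
    have h3 : 0 < τ ^ (n + 1) := by positivity
    nlinarith
  have hlam : (k:ℝ)^2 ≤ k * (k + d - 2) := by nlinarith
  set lam : ℝ := k * (k + d - 2) with hlamdef
  have E1 : 0 < 2 * P * (2 * P - 1) - 2 * P * (2 * P + d - 2) * τ := by
    have : 0 < (2 * P - 1) - (2 * P + d - 2) * τ := by
      rw [hτ]; nlinarith
    nlinarith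
  have E2 : 0 < 2 * P * (2 * P - 1) - (2 * P * (2 * P + d - 2) - lam) - lam * τ ^ (n + 1) := by
    have h1 : lam * τ ^ (n + 1) ≤ lam * (1 / 2) := mul_le_mul_of_nonneg_left hbern (by nlinarith)
    have h2 : 2 * P * (d - 1) < (k:ℝ)^2 / 2 := by
      have : 2 * P * d < (k:ℝ)^2 / 4 + 2 * d := by linarith
      nlinarith
    nlinarith
  have hw0 : 0 < w := by linarith
  obtain ⟨α, β, hα, hβ, hαβ, hwe⟩ : ∃ α β : ℝ, 0 ≤ α ∧ 0 ≤ β ∧ α + β = 1 ∧ α * τ + β = w := by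
    have h1 : 0 < 1 - τ := by linarith
    refine ⟨(1 - w) / (1 - τ), (w - τ) / (1 - τ), div_nonneg (by linarith) h1.le,
      div_nonneg (by linarith) h1.le, by field_simp; ring, by field_simp; ring⟩
  have hconv := (convexOn_zpow (𝕜 := ℝ) (-(n:ℤ))).2 (Set.mem_Ioi.2 hτ0) (Set.mem_Ioi.2 one_pos) hα hβ hαβ
  simp only [smul_eq_mul, zpow_neg, zpow_natCast, one_pow, inv_one, mul_one, hwe] at hconv
  have hlin : 0 < 2 * P * (2 * P - 1) - (2 * P * (2 * P + d - 2) - lam) * w - lam * τ ^ (n + 1) * (w ^ n)⁻¹ := by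
    have h1 : lam * τ ^ (n + 1) * (w ^ n)⁻¹ ≤ lam * τ ^ (n + 1) * (α * (τ ^ n)⁻¹ + β) :=
      mul_le_mul_of_nonneg_left hconv (mul_nonneg (by nlinarith) (by positivity))
    have h2 : τ ^ (n + 1) * (τ ^ n)⁻¹ = τ := by rw [pow_succ]; field_simp
    have h3 : 0 < α * (2 * P * (2 * P - 1) - 2 * P * (2 * P + d - 2) * τ)
      + β * (2 * P * (2 * P - 1) - (2 * P * (2 * P + d - 2) - lam) - lam * τ ^ (n + 1)) := by
      rcases hα.lt_or_eq with h | h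
      · have := mul_pos h E1
        have := mul_nonneg hβ E2.le
        linarith
      · have : β = 1 := by linarith
        rw [← h, this]; linarith
    have h4 : α * (2 * P * (2 * P - 1) - 2 * P * (2 * P + d - 2) * τ)
      + β * (2 * P * (2 * P - 1) - (2 * P * (2 * P + d - 2) - lam) - lam * τ ^ (n + 1))
      = 2 * P * (2 * P - 1) - (2 * P * (2 * P + d - 2) - lam) * w - lam * τ ^ (n + 1) * (α * (τ ^ n)⁻¹ + β) := by
      rw [← hwe]
      linear_combination (2 * P * (2 * P - 1)) * hαβ + lam * α * h2
    linarith
  have hwn : 0 < w ^ n := by positivity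
  have := mul_pos hwn hlin
  have h5 : w ^ n * (w ^ n)⁻¹ = 1 := mul_inv_cancel₀ hwn.ne'
  have h6 : 2 * P * (2 * P - 1) * w ^ n - (2 * P * (2 * P + d - 2) - lam) * w ^ (n + 1) - lam * τ ^ (n + 1)
     = w ^ n * (2 * P * (2 * P - 1) - (2 * P * (2 * P + d - 2) - lam) * w - lam * τ ^ (n + 1) * (w ^ n)⁻¹) := by
    linear_combination (lam * τ ^ (n + 1)) * h5
  rw [h6]; exact this

lemma norm_cont {d : ℕ} (y₀ : Fin d → ℝ) (h : ∑ i, y₀ i ^ 2 = 1) :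
    Filter.Tendsto (fun y : Fin d → ℝ => (√(∑ i, y i ^ 2))⁻¹ • y) (nhds y₀) (nhds y₀) := by
  have : ContinuousAt (fun y : Fin d → ℝ => (√(∑ i, y i ^ 2))⁻¹ • y) y₀ := by
    have h1 : ContinuousAt (fun y : Fin d → ℝ => √(∑ i, y i ^ 2)) y₀ :=
      Continuous.continuousAt (by fun_prop)
    exact ContinuousAt.smul (h1.inv₀ (by simp [h])) continuousAt_id
  have h2 := this.tendsto
  simpa [h] using h2

lemma norm_sq {d : ℕ} (y : Fin d → ℝ) (h : 0 < ∑ i, y i ^ 2) :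
    ∑ i, ((√(∑ i, y i ^ 2))⁻¹ • y) i ^ 2 = 1 := by
  simp only [Pi.smul_apply, smul_eq_mul, mul_pow, ← Finset.mul_sum, inv_pow]
  rw [Real.sq_sqrt h.le]; exact inv_mul_cancel₀ h.ne'

lemma norm_ev {d : ℕ} (y₀ : Fin d → ℝ) (h : ∑ i, y₀ i ^ 2 = 1) :
    ∀ᶠ y in nhds y₀, ∑ i, ((√(∑ i, y i ^ 2))⁻¹ • y) i ^ 2 = 1 := by
  have : Continuous fun y : Fin d → ℝ => ∑ i, y i ^ 2 := by fun_prop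
  have hp0 : ∀ᶠ y in nhds y₀, 0 < ∑ i, y i ^ 2 :=
    this.continuousAt.eventually (lt_mem_nhds (by simp [h]))
  exact hp0.mono fun y hy => norm_sq y hy

lemma sphere_case {d k : ℕ} (hd : 2 ≤ d) (hk : 1 ≤ k) (f : MvPolynomial (Fin d) ℝ)
    (hhom : f.IsHomogeneous k)
    (hharm : ∑ i : Fin d, MvPolynomial.pderiv i (MvPolynomial.pderiv i f) = 0)
    (x : Fin d → ℝ) (hx : ∑ i, x i ^ 2 = 1) (hfx : 0 < MvPolynomial.eval x f)
    (hne : ∀ y : Fin d → ℝ, ∑ i, y i ^ 2 = 1 → MvPolynomial.eval y f ≠ 0) : False := by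
  have hcf : Continuous fun y : Fin d → ℝ => MvPolynomial.eval y f := MvPolynomial.continuous_eval f
  have hd' : (2:ℝ) ≤ d := by exact_mod_cast hd
  have hk' : (1:ℝ) ≤ k := by exact_mod_cast hk
  have hnz : ∀ y : Fin d → ℝ, ∑ i, y i ^ 2 = 1 → y ≠ 0 := by
    rintro y hy rfl; simp at hy
  refine core f hhom hharm x hx 0 0 {y | ∑ i, y i ^ 2 = 1}
    (isClosed_eq (by fun_prop) continuous_const) (fun y hy => hy) hx one_pos ?_ ?_ ?_
  · intro y hy
    by_contra hneg
    push Not at hneg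
    have hpc : IsPreconnected ({0}ᶜ : Set (Fin d → ℝ)) :=
      (isConnected_compl_singleton_of_one_lt_rank (by simp; omega) 0).isPreconnected
    obtain ⟨z, hz, hz0⟩ := hpc.intermediate_value (hnz y hy) (hnz x hx) hcf.continuousOn ⟨hneg, hfx.le⟩
    have hzp : 0 < ∑ i, z i ^ 2 := by
      obtain ⟨i, hi⟩ := Function.ne_iff.1 hz
      exact Finset.sum_pos' (fun i _ => sq_nonneg _) ⟨i, Finset.mem_univ _, by simp at hi; positivity⟩
    apply hne _ (norm_sq z hzp)
    rw [hom_eval f hhom]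
    simp only at hz0
    rw [hz0, mul_zero]
  · intro y hy _
    exact norm_ev y hy
  · intro y hy _
    simp
    nlinarith

lemma cap_case {d k : ℕ} (hd : 2 ≤ d) (hk : 2 * d < k) (f : MvPolynomial (Fin d) ℝ)
    (hhom : f.IsHomogeneous k)
    (hharm : ∑ i : Fin d, MvPolynomial.pderiv i (MvPolynomial.pderiv i f) = 0)
    (x : Fin d → ℝ) (hx : ∑ i, x i ^ 2 = 1) (hfx : 0 < MvPolynomial.eval x f)
    (t₀ : ℝ) (ht0 : 0 < t₀) (ht1 : t₀ < 1) (ht : t₀ ^ 2 = 1 - (2 * d / k : ℝ) ^ 2)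
    (hne : ∀ y : Fin d → ℝ, ∑ i, y i ^ 2 = 1 → t₀ ≤ ∑ i, x i * y i →
      MvPolynomial.eval y f ≠ 0) : False := by
  have hcf : Continuous fun y : Fin d → ℝ => MvPolynomial.eval y f := MvPolynomial.continuous_eval f
  obtain ⟨p, hp, hnum⟩ := numeric hd hk
  have hxx : ∑ i, x i * x i = 1 := by rw [← hx]; simp [sq]
  have hCS : ∀ y : Fin d → ℝ, ∑ i, y i ^ 2 = 1 → ∑ i, x i * y i ≤ 1 := by
    intro y hy
    have := Finset.sum_mul_sq_le_sq_mul_sq Finset.univ x y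
    rw [hx, hy] at this
    nlinarith
  have hclosed : IsClosed {y : Fin d → ℝ | ∑ i, y i ^ 2 = 1 ∧ t₀ ≤ ∑ i, x i * y i} := by
    apply IsClosed.and
    · exact isClosed_eq (by fun_prop) continuous_const
    · exact isClosed_le continuous_const (by fun_prop)
  refine core f hhom hharm x hx p ((t₀ ^ 2) ^ p) {y | ∑ i, y i ^ 2 = 1 ∧ t₀ ≤ ∑ i, x i * y i}
    hclosed
    (fun y hy => hy.1) ⟨hx, by rw [hxx]; exact ht1.le⟩ (pow_lt_one₀ (by positivity) (by nlinarith) hp.ne') ?_ ?_ ?_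
  · rintro y ⟨hy, hty⟩
    by_contra hneg
    push Not at hneg
    have hy1 := hCS y hy
    have hcont : Continuous fun s : ℝ => MvPolynomial.eval ((1 - s) • x + s • y) f :=
      hcf.comp (by fun_prop)
    obtain ⟨s, ⟨hs0, hs1⟩, hs⟩ := intermediate_value_Icc' (zero_le_one (α := ℝ)) hcont.continuousOn
      (show (0:ℝ) ∈ _ from ⟨by simpa using hneg, by simpa using hfx.le⟩)
    simp only at hs
    set z := (1 - s) • x + s • y with hz
    have hxz : ∑ i, x i * z i = (1 - s) + s * ∑ i, x i * y i := by
      have : ∀ i, x i * z i = (1 - s) * (x i ^ 2) + s * (x i * y i) := by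
        intro i; simp [hz]; ring
      simp only [this, Finset.sum_add_distrib, ← Finset.mul_sum, hx, mul_one]
    have hzz : ∑ i, z i ^ 2 = (1 - s) ^ 2 + s ^ 2 + 2 * s * (1 - s) * ∑ i, x i * y i := by
      have : ∀ i, z i ^ 2 = (1 - s) ^ 2 * (x i ^ 2) + s ^ 2 * y i ^ 2 + 2 * s * (1 - s) * (x i * y i) := by
        intro i; simp [hz]; ring
      simp only [this, Finset.sum_add_distrib, ← Finset.mul_sum, hx, hy, mul_one]
    have h1s : 0 ≤ 1 - s := by linarith
    have hss : 0 ≤ s * (1 - s) := mul_nonneg hs0 h1s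
    have hzp : 0 < ∑ i, z i ^ 2 := by
      have := mul_nonneg hss (ht0.le.trans hty)
      rw [hzz]; nlinarith
    have hz1 : ∑ i, z i ^ 2 ≤ 1 := by
      have := mul_nonneg hss (sub_nonneg.2 hy1)
      rw [hzz]; nlinarith
    have hxzt : t₀ ≤ ∑ i, x i * z i := by
      have := mul_nonneg hs0 (sub_nonneg.2 hty)
      rw [hxz]; nlinarith
    refine hne _ (norm_sq z hzp) ?_ ?_
    · have h2 : ∑ i, x i * ((√(∑ i, z i ^ 2))⁻¹ • z) i = (√(∑ i, z i ^ 2))⁻¹ * ∑ i, x i * z i := by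
        rw [Finset.mul_sum]; refine Finset.sum_congr rfl fun i _ => ?_
        simp; ring
      rw [h2]
      have h3 : 1 ≤ (√(∑ i, z i ^ 2))⁻¹ := by
        rw [one_le_inv₀ (Real.sqrt_pos.2 hzp)]
        exact Real.sqrt_le_one.2 hz1
      nlinarith
    · rw [hom_eval f hhom, hs, mul_zero]
  · rintro y₀ ⟨hy, hty⟩ hlt
    have hlt' : t₀ < ∑ i, x i * y₀ i := by
      rw [← pow_mul] at hlt
      exact lt_of_pow_lt_pow_left₀ _ (ht0.le.trans hty) hlt
    have hc : Continuous fun y : Fin d → ℝ => ∑ i, x i * y i := by fun_prop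
    have h1 := (norm_cont y₀ hy).eventually (hc.continuousAt.eventually (lt_mem_nhds hlt'))
    filter_upwards [norm_ev y₀ hy, h1] with y h2 h3
    exact ⟨h2, h3.le⟩
  · rintro y₀ ⟨hy, hty⟩ hlt
    have hy1 := hCS y₀ hy
    have := hnum ((∑ i, x i * y₀ i) ^ 2) (t₀ ^ 2) ht (by gcongr) (by nlinarith)
    rw [← pow_mul, ← pow_mul, Nat.mul_sub] at this
    exact this

open scoped Real

/-- A nonzero harmonic polynomial `f`, homogeneous of degree `k ≥ 1` in `d ≥ 2`
variables, restricted to the unit sphere `𝕊^{d-1}` (a degree-`k` spherical harmonic),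
has a zero in every geodesic ball of radius `2πd/k`. -/
theorem harmonic_poly_zero_in_geodesic_ball {d k : ℕ} (hd : 2 ≤ d) (hk : 1 ≤ k)
    (f : MvPolynomial (Fin d) ℝ) (hf0 : f ≠ 0)
    (hhom : f.IsHomogeneous k)
    (hharm : ∑ i : Fin d, MvPolynomial.pderiv i (MvPolynomial.pderiv i f) = 0)
    (x : EuclideanSpace ℝ (Fin d)) (hx : ‖x‖ = 1) :
    ∃ y : EuclideanSpace ℝ (Fin d), ‖y‖ = 1 ∧
      Real.arccos (∑ i, x i * y i) ≤ 2 * π * d / k ∧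
      MvPolynomial.eval (fun i => y i) f = 0 := by
  by_contra hcon
  push Not at hcon
  have hd' : (2:ℝ) ≤ d := by exact_mod_cast hd
  have hk' : (1:ℝ) ≤ k := by exact_mod_cast hk
  have hk0 : (0:ℝ) < k := by linarith
  have hcon' : ∀ y : Fin d → ℝ, ∑ i, y i ^ 2 = 1 →
      Real.arccos (∑ i, x i * y i) ≤ 2 * π * d / k → MvPolynomial.eval y f ≠ 0 := by
    intro y hy hyx
    refine hcon (WithLp.toLp 2 y) ?_ hyx
    rw [EuclideanSpace.norm_eq]; simp [hy]
  have hx1 : ∑ i, x i ^ 2 = 1 := by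
    have := EuclideanSpace.norm_sq_eq x
    rw [hx] at this
    simpa using this.symm
  have hxx : ∑ i, x i * x i = 1 := by rw [← hx1]; simp [sq]
  have hfx : MvPolynomial.eval (fun i => x i) f ≠ 0 := by
    apply hcon' _ hx1
    rw [hxx, Real.arccos_one]; positivity
  -- choose the sign
  obtain ⟨g, hg1, hg2, hg3, hg4⟩ : ∃ g : MvPolynomial (Fin d) ℝ, g.IsHomogeneous k ∧
      (∑ i : Fin d, MvPolynomial.pderiv i (MvPolynomial.pderiv i g) = 0) ∧
      0 < MvPolynomial.eval (fun i => x i) g ∧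
      ∀ y : Fin d → ℝ, MvPolynomial.eval y f ≠ 0 → MvPolynomial.eval y g ≠ 0 := by
    rcases lt_or_gt_of_ne hfx with h | h
    · exact ⟨-f, hhom.neg, by simp [hharm], by simpa using h, fun y hy => by simpa using hy⟩
    · exact ⟨f, hhom, hharm, h, fun y hy => hy⟩
  rcases le_or_gt k (2 * d) with hkd | hkd
  · refine sphere_case hd hk g hg1 hg2 (fun i => x i) hx1 hg3 fun y hy => hg4 y (hcon' y hy ?_)
    refine (Real.arccos_le_pi _).trans ?_
    have : (k:ℝ) ≤ 2 * d := by exact_mod_cast hkd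
    rw [le_div_iff₀ hk0]
    nlinarith [Real.pi_pos]
  · have hkd' : (2 * d : ℝ) < k := by exact_mod_cast hkd
    have hδ : (2 * d / k : ℝ) < 1 := by rw [div_lt_one hk0]; exact hkd'
    have hδ0 : (0:ℝ) < 2 * d / k := by positivity
    have hτ : 0 < 1 - (2 * d / k : ℝ) ^ 2 := by nlinarith
    refine cap_case hd hkd g hg1 hg2 (fun i => x i) hx1 hg3 (√(1 - (2 * d / k : ℝ) ^ 2))
      (Real.sqrt_pos.2 hτ) ?_ (Real.sq_sqrt hτ.le) fun y hy hty => hg4 y (hcon' y hy ?_)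
    · rw [Real.sqrt_lt' one_pos]; nlinarith [sq_pos_of_pos hδ0]
    · refine (Real.arccos_le_arccos hty).trans ?_
      set t₀ := √(1 - (2 * d / k : ℝ) ^ 2) with ht0
      have h1 := Real.mul_le_sin (Real.arccos_nonneg t₀) (Real.arccos_le_pi_div_two.2 (Real.sqrt_nonneg _))
      rw [Real.sin_arccos, Real.sq_sqrt hτ.le, sub_sub_cancel, Real.sqrt_sq hδ0.le] at h1
      have hpi := Real.pi_pos
      have h2 : Real.arccos t₀ ≤ π * d / k := by
        have := mul_le_mul_of_nonneg_left h1 (show 0 ≤ π / 2 by positivity)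
        have e1 : π / 2 * (2 / π * Real.arccos t₀) = Real.arccos t₀ := by field_simp
        have e2 : π / 2 * (2 * d / k) = π * d / k := by ring
        rwa [e1, e2] at this
      refine h2.trans ?_
      gcongr
      linarith
end

section
/- Let d ∈ {2, 3} and n ∈ ℕ. Suppose for each 1 ≤ k ≤ n that φ_k : ℝ^d → ℝ is a smooth function satisfying Δφ_k = −λ_k φ_k on all of ℝ^d, where λ_k > 0 and Δ denotes the Euclidean Laplacian (sum of second partial derivatives). Let a₁, …, a_n ∈ ℝ and f(x) = Σ_{k=1}^n a_k φ_k(x). Then f has a zero in every closed ball B ⊂ ℝ^d of radius r = 2π · Σ_{k=1}^n 1/√(λ_k); that is, for every z ∈ ℝ^d there exists y with ‖y − z‖ ≤ 2π Σ_{k=1}^n λ_k^{-1/2} and f(y) = 0. -/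
open scoped Real

/-- The Euclidean Laplacian `Δf(x) = Σᵢ ∂²f/∂xᵢ²(x)` of `f : ℝ^d → ℝ`. -/
noncomputable def euclidLaplacian {d : ℕ} (f : EuclideanSpace ℝ (Fin d) → ℝ)
    (x : EuclideanSpace ℝ (Fin d)) : ℝ :=
  ∑ i, fderiv ℝ (fun y => fderiv ℝ f y (EuclideanSpace.single i 1)) x (EuclideanSpace.single i 1)

open MeasureTheory Finset

lemma aux_abstract {d : ℕ} {ι : Type*} [DecidableEq ι]
    (w : ι → EuclideanSpace ℝ (Fin d) → ℝ) (R : ι → ℝ)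
    (hwc : ∀ k, Continuous (w k)) (hw0 : ∀ k y, 0 ≤ w k y) (hwp : ∀ k, 0 < w k 0)
    (hws : ∀ k y, R k < ‖y‖ → w k y = 0) (s : Finset ι) :
    ∀ ψ : ι → EuclideanSpace ℝ (Fin d) → ℝ, (∀ k, Continuous (ψ k)) →
      (∀ k x, ∫ y, w k y * ψ k (x + y) = 0) →
      ∀ z, ¬ ∀ y, ‖y - z‖ ≤ ∑ k ∈ s, R k → 0 < ∑ k ∈ s, ψ k y := by
  have hR : ∀ k, 0 ≤ R k := fun k => by
    by_contra h
    have := hws k 0 (by simpa using h)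
    linarith [hwp k]
  have hcs : ∀ k, HasCompactSupport (w k) := fun k =>
    HasCompactSupport.intro (isCompact_closedBall (0 : EuclideanSpace ℝ (Fin d)) (R k))
      (fun y hy => hws k y (by simpa using hy))
  have hcont : ∀ (j : ι) (g : EuclideanSpace ℝ (Fin d) → ℝ), Continuous g →
      Continuous (fun x => ∫ y, w j y * g (x + y)) := by
    intro j g hg
    have : (fun x => ∫ y, w j y * g (x + y)) = fun x =>
        ∫ y in Metric.closedBall (0 : EuclideanSpace ℝ (Fin d)) (R j), w j y * g (x + y) := by
      funext x
      symm
      apply setIntegral_eq_integral_of_forall_compl_eq_zero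
      intro y hy
      rw [hws j y (by simpa using hy), zero_mul]
    rw [this]
    apply continuous_parametric_integral_of_continuous
    · have := hwc j
      fun_prop
    · exact isCompact_closedBall _ _
  induction s using Finset.induction_on with
  | empty =>
    intro ψ _ _ z h
    simpa using h z (by simp)
  | insert j s hj ih =>
    intro ψ hψ hk z h
    refine ih (fun k x => ∫ y, w j y * ψ k (x + y)) (fun k => hcont j _ (hψ k)) ?_ z ?_
    · intro k x
      simp_rw [← integral_const_mul]
      rw [integral_integral_swap_of_hasCompactSupport]
      · have : ∀ u, ∫ y, w k y * (w j u * ψ k (x + y + u)) = 0 := by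
          intro u
          have h1 : ∀ y, w k y * (w j u * ψ k (x + y + u)) = w j u * (w k y * ψ k ((x + u) + y)) := by
            intro y
            rw [add_right_comm x y u]; ring
          simp_rw [h1, integral_const_mul, hk, mul_zero]
        simp_rw [this]; simp
      · have h1 := hwc k
        have h2 := hwc j
        have h3 := hψ k
        simp only [Function.uncurry_def]
        fun_prop
      · apply HasCompactSupport.intro ((isCompact_closedBall (0 : EuclideanSpace ℝ (Fin d)) (R k)).prod
          (isCompact_closedBall (0 : EuclideanSpace ℝ (Fin d)) (R j)))
        rintro ⟨y, u⟩ hyu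
        simp only [Function.uncurry_def]
        by_cases hy : ‖y‖ ≤ R k
        · have hu : R j < ‖u‖ := by
            by_contra hu
            exact hyu ⟨by simpa using hy, by simpa using hu⟩
          rw [hws j u hu]; simp
        · rw [hws k y (not_le.mp hy)]; simp
    · intro x hx
      have hint : ∀ k, Integrable (fun y => w j y * ψ k (x + y)) := fun k => by
        apply Continuous.integrable_of_hasCompactSupport
        · have h1 := hwc j
          have h2 := hψ k
          fun_prop
        · exact (hcs j).mul_right
      have e : ∑ k ∈ s, ∫ y, w j y * ψ k (x + y)
          = ∫ y, w j y * ∑ k ∈ insert j s, ψ k (x + y) := by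
        simp_rw [Finset.mul_sum]
        rw [integral_finsetSum _ (fun k _ => hint k), Finset.sum_insert hj, hk, zero_add]
      have hpos : ∀ y, ‖y‖ ≤ R j → 0 < ∑ k ∈ insert j s, ψ k (x + y) := by
        intro y hy
        apply h
        rw [Finset.sum_insert hj]
        calc ‖x + y - z‖ = ‖y + (x - z)‖ := by congr 1; abel
          _ ≤ ‖y‖ + ‖x - z‖ := norm_add_le _ _
          _ ≤ _ := add_le_add hy hx
      change 0 < ∑ k ∈ s, ∫ y, w j y * ψ k (x + y)
      rw [e]
      apply Continuous.integral_pos_of_hasCompactSupport_nonneg_nonzero (x := 0)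
      · have h1 := hwc j
        have h2 := hψ
        fun_prop
      · exact (hcs j).mul_right
      · intro y
        by_cases hy : ‖y‖ ≤ R j
        · exact mul_nonneg (hw0 j y) (hpos y hy).le
        · simp [hws j y (not_le.mp hy)]
      · exact (mul_pos (hwp j) (hpos 0 (by simpa using hR j))).ne'

/-- truncated quadratic -/
noncomputable def bq {d : ℕ} (R : ℝ) (x : EuclideanSpace ℝ (Fin d)) : ℝ := max (R ^ 2 - ‖x‖ ^ 2) 0

lemma bq_cont {d : ℕ} (R : ℝ) : Continuous (bq (d := d) R) := by
  unfold bq; fun_prop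

lemma bq_zero {d : ℕ} {R : ℝ} (hR : 0 ≤ R) (x : EuclideanSpace ℝ (Fin d)) (h : R < ‖x‖) :
    bq R x = 0 := by
  unfold bq
  apply max_eq_right
  nlinarith

lemma max_pow_deriv (m : ℕ) (v : ℝ) :
    HasDerivAt (fun v : ℝ => (max v 0) ^ (m + 2)) ((m + 2 : ℕ) * (max v 0) ^ (m + 1)) v := by
  rcases lt_trichotomy v 0 with h | h | h
  · have : (fun v : ℝ => (max v 0) ^ (m + 2)) =ᶠ[nhds v] fun _ => 0 := by
      filter_upwards [gt_mem_nhds h] with u hu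
      rw [max_eq_right hu.le]; simp
    rw [max_eq_right h.le]
    simpa using (hasDerivAt_const v (0 : ℝ)).congr_of_eventuallyEq this
  · subst h
    have h0 : HasDerivAt (fun v : ℝ => v * |v|) 0 0 := by
      rw [hasDerivAt_iff_tendsto_slope]
      have : Filter.Tendsto (fun v : ℝ => |v|) (nhdsWithin 0 {0}ᶜ) (nhds 0) := by
        have := (continuous_abs (G := ℝ)).tendsto 0
        simp only [abs_zero] at this
        exact this.mono_left nhdsWithin_le_nhds
      refine this.congr' ?_
      filter_upwards [self_mem_nhdsWithin] with u hu
      have hu' : u ≠ 0 := hu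
      simp [slope_def_field]
      field_simp
    have hsq : HasDerivAt (fun v : ℝ => (max v 0) ^ 2) 0 0 := by
      have h2 : (fun v : ℝ => (max v 0) ^ 2) = fun v => (v * |v| + v ^ 2) / 2 := by
        funext u
        rcases le_total u 0 with h | h
        · rw [max_eq_right h, abs_of_nonpos h]; ring
        · rw [max_eq_left h, abs_of_nonneg h]; ring
      rw [h2]
      have := (h0.add ((hasDerivAt_id (0 : ℝ)).pow 2)).div_const 2
      simpa using this
    rw [hasDerivAt_iff_isLittleO_nhds_zero] at hsq ⊢
    simp only [zero_add, max_self, ne_eq, OfNat.ofNat_ne_zero, not_false_eq_true, zero_pow,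
      sub_zero, smul_zero, Nat.add_eq_zero_iff, and_false, one_ne_zero, mul_zero] at hsq ⊢
    have hb : (fun u : ℝ => (max u 0) ^ m) =O[nhds 0] (fun _ => (1 : ℝ)) := by
      have : Continuous (fun u : ℝ => (max u 0) ^ m) := by fun_prop
      exact (this.tendsto 0).isBigO_one ℝ
    have := hb.mul_isLittleO hsq
    simpa [pow_add] using this
  · have : (fun v : ℝ => (max v 0) ^ (m + 2)) =ᶠ[nhds v] fun v => v ^ (m + 2) := by
      filter_upwards [lt_mem_nhds h] with u hu
      rw [max_eq_left hu.le]
    rw [max_eq_left h.le]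
    exact (hasDerivAt_pow (m + 2) v).congr_of_eventuallyEq this

lemma coord_line {d : ℕ} (i : Fin d) (x : EuclideanSpace ℝ (Fin d)) :
    HasLineDerivAt ℝ (fun x : EuclideanSpace ℝ (Fin d) => x i) 1 x (EuclideanSpace.single i 1) := by
  unfold HasLineDerivAt
  have : HasDerivAt (fun t : ℝ => x i + t) 1 0 := (hasDerivAt_id (0 : ℝ)).const_add _
  simpa using this

lemma bq_line {d : ℕ} (R : ℝ) (m : ℕ) (i : Fin d) (x : EuclideanSpace ℝ (Fin d)) :
    HasLineDerivAt ℝ (fun x => bq R x ^ (m + 2)) ((m + 2 : ℕ) * bq R x ^ (m + 1) * (-2 * x i))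
      x (EuclideanSpace.single i 1) := by
  have h1 : HasFDerivAt (fun x : EuclideanSpace ℝ (Fin d) => R ^ 2 - ‖x‖ ^ 2)
      (-(2 • (innerSL ℝ x))) x := by
    simpa using (hasStrictFDerivAt_norm_sq x).hasFDerivAt.const_sub (R ^ 2)
  have h2 := ((max_pow_deriv m _).comp_hasFDerivAt x h1).hasLineDerivAt (EuclideanSpace.single i 1)
  have h3 : ((m + 2 : ℕ) * bq R x ^ (m + 1) * (-2 * x i)) =
      (((m + 2 : ℕ) * max (R ^ 2 - ‖x‖ ^ 2) 0 ^ (m + 1)) • -(2 • (innerSL ℝ) x))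
        (EuclideanSpace.single i 1) := by
    simp [bq, EuclideanSpace.inner_single_right]
  rw [h3]
  exact h2

lemma ibp {d : ℕ} (u u' g g' : EuclideanSpace ℝ (Fin d) → ℝ) (v : EuclideanSpace ℝ (Fin d))
    (hu : Continuous u) (hu' : Continuous u') (hg : Continuous g) (hg' : Continuous g')
    (hc : HasCompactSupport u) (hc' : HasCompactSupport u')
    (h1 : ∀ x, HasLineDerivAt ℝ u (u' x) x v) (h2 : ∀ x, HasLineDerivAt ℝ g (g' x) x v) :
    ∫ x, u x * g' x = - ∫ x, u' x * g x := by
  have := integral_bilinear_hasLineDerivAt_right_eq_neg_left_of_integrable (μ := volume)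
    (f := u) (f' := u') (g := g) (g' := g') (v := v) (B := ContinuousLinearMap.mul ℝ ℝ)
    ?_ ?_ ?_ (fun x _ => h1 x) (fun x _ => h2 x)
  · simpa using this
  · exact (hu'.mul hg).integrable_of_hasCompactSupport hc'.mul_right
  · exact (hu.mul hg').integrable_of_hasCompactSupport hc.mul_right
  · exact (hu.mul hg).integrable_of_hasCompactSupport hc.mul_right

noncomputable def ww (d : ℕ) (R lam : ℝ) (x : EuclideanSpace ℝ (Fin d)) : ℝ :=
  bq R x ^ 2 * (lam * bq R x ^ 2 - (8 * d + 48) * bq R x + 48 * R ^ 2)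

lemma ww_kill {d : ℕ} {R lam : ℝ} (hR : 0 ≤ R) (g : EuclideanSpace ℝ (Fin d) → ℝ)
    (hg : ContDiff ℝ (⊤ : ℕ∞) g) (he : ∀ x, euclidLaplacian g x = -lam * g x) :
    ∫ y, ww d R lam y * g y = 0 := by
  have hb := bq_cont (d := d) R
  have hcs : ∀ F : EuclideanSpace ℝ (Fin d) → ℝ, (∀ x, bq R x = 0 → F x = 0) →
      HasCompactSupport F := fun F hF =>
    HasCompactSupport.intro (isCompact_closedBall (0 : EuclideanSpace ℝ (Fin d)) R)
      (fun y hy => hF y (bq_zero hR y (by simpa using hy)))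
  have hg1 : ∀ v, ContDiff ℝ (⊤ : ℕ∞) (fun y => fderiv ℝ g y v) := fun v =>
    (hg.fderiv_right (by simp)).clm_apply contDiff_const
  have hg2 : ∀ v, ContDiff ℝ (⊤ : ℕ∞) (fun x => fderiv ℝ (fun y => fderiv ℝ g y v) x v) := fun v =>
    ((hg1 v).fderiv_right (by simp)).clm_apply contDiff_const
  have key : ∀ i : Fin d, ∫ x, bq R x ^ 4 * fderiv ℝ (fun y => fderiv ℝ g y (EuclideanSpace.single i 1)) x
      (EuclideanSpace.single i 1) = ∫ x, (48 * x i ^ 2 * bq R x ^ 2 - 8 * bq R x ^ 3) * g x := by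
    intro i
    rw [ibp (fun x => bq R x ^ 4) (fun x => -8 * x i * bq R x ^ 3)
      (fun y => fderiv ℝ g y (EuclideanSpace.single i 1)) _ (EuclideanSpace.single i 1),
      ibp (fun x => -8 * x i * bq R x ^ 3) (fun x => (48 * x i ^ 2 * bq R x ^ 2 - 8 * bq R x ^ 3))
      g _ (EuclideanSpace.single i 1), neg_neg]
    · fun_prop
    · fun_prop
    · exact hg.continuous
    · exact (hg1 _).continuous
    · exact hcs _ (fun x hx => by simp [hx])
    · exact hcs _ (fun x hx => by simp [hx])
    · intro x
      have h1 := bq_line R 1 i x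
      have h2 := coord_line i x
      unfold HasLineDerivAt at h1 h2 ⊢
      have h3 := (h2.const_mul (-8)).mul h1
      refine HasDerivAt.congr_deriv h3 ?_
      simp
      ring
    · intro x
      exact ((hg.differentiable (by simp)) x).hasFDerivAt.hasLineDerivAt _
    · fun_prop
    · fun_prop
    · exact (hg1 _).continuous
    · exact (hg2 _).continuous
    · exact hcs _ (fun x hx => by simp [hx])
    · exact hcs _ (fun x hx => by simp [hx])
    · intro x
      have h1 := bq_line R 2 i x
      convert h1 using 1
      push_cast
      ring
    · intro x
      exact (((hg1 _).differentiable (by simp)) x).hasFDerivAt.hasLineDerivAt _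
  have hgc := hg.continuous
  have hsum : ∫ x, bq R x ^ 4 * euclidLaplacian g x =
      ∫ x, ∑ i, (48 * x i ^ 2 * bq R x ^ 2 - 8 * bq R x ^ 3) * g x := by
    unfold euclidLaplacian
    simp_rw [Finset.mul_sum]
    rw [integral_finsetSum, integral_finsetSum]
    · exact Finset.sum_congr rfl (fun i _ => key i)
    · intro i _
      apply Continuous.integrable_of_hasCompactSupport
      · fun_prop
      · exact hcs _ (fun x hx => by simp [hx])
    · intro i _
      apply Continuous.integrable_of_hasCompactSupport
      · exact (hb.pow 4).mul (hg2 _).continuous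
      · exact hcs _ (fun x hx => by simp [hx])
  have hpt : ∀ x, ww d R lam x * g x =
      (∑ i, (48 * x i ^ 2 * bq R x ^ 2 - 8 * bq R x ^ 3) * g x) - bq R x ^ 4 * euclidLaplacian g x := by
    intro x
    rw [he, ← Finset.sum_mul, Finset.sum_sub_distrib, ← Finset.sum_mul, ← Finset.mul_sum]
    have hn : ∑ i, x i ^ 2 = ‖x‖ ^ 2 := by
      rw [EuclideanSpace.norm_sq_eq]; simp
    rw [hn]
    simp only [Finset.sum_const, Finset.card_univ, Fintype.card_fin, nsmul_eq_mul]
    unfold ww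
    rcases le_total (R ^ 2 - ‖x‖ ^ 2) 0 with h | h
    · have : bq R x = 0 := max_eq_right h
      rw [this]; ring
    · have : bq R x = R ^ 2 - ‖x‖ ^ 2 := max_eq_left h
      have h2 : ‖x‖ ^ 2 = R ^ 2 - bq R x := by rw [this]; ring
      rw [h2]; ring
  simp_rw [hpt]
  rw [integral_sub, hsum, sub_self]
  · apply Continuous.integrable_of_hasCompactSupport
    · fun_prop
    · exact hcs _ (fun x hx => by simp [hx])
  · apply Continuous.integrable_of_hasCompactSupport
    · unfold euclidLaplacian
      exact (hb.pow 4).mul (continuous_finsetSum _ (fun i _ => (hg2 _).continuous))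
    · exact hcs _ (fun x hx => by simp [hx])

lemma ww_quad {d : ℕ} (hd : d ≤ 3) {R lam b : ℝ} (hl : 0 < lam) (hb : 0 ≤ b)
    (hRl : lam * R ^ 2 = 4 * π ^ 2) :
    0 < lam * b ^ 2 - (8 * d + 48) * b + 48 * R ^ 2 := by
  have hpi : 9 < π ^ 2 := by nlinarith [Real.pi_gt_three]
  have hd' : (d : ℝ) ≤ 3 := by exact_mod_cast hd
  have h1 : 0 < lam * b ^ 2 - 72 * b + 48 * R ^ 2 := by
    have : 0 < lam * (lam * b ^ 2 - 72 * b + 48 * R ^ 2) := by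
      nlinarith [sq_nonneg (lam * b - 36)]
    exact pos_of_mul_pos_right this hl.le
  nlinarith

/-- **Theorem 3.** A linear combination `f = Σ_{k=1}^n a_k φ_k` of smooth global
Laplacian eigenfunctions `−Δφ_k = λ_k φ_k` on `ℝ^d`, `d ∈ {2,3}`, has a zero in every
closed ball of radius `2π · Σ_{k=1}^n λ_k^{-1/2}`. -/
theorem linear_combination_eigenfunctions_zero_in_ball {d : ℕ} (hd : d = 2 ∨ d = 3)
    (n : ℕ) (φ : Fin n → EuclideanSpace ℝ (Fin d) → ℝ)
    (lam : Fin n → ℝ) (hlam : ∀ k, 0 < lam k)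
    (hφ : ∀ k, ContDiff ℝ (⊤ : ℕ∞) (φ k))
    (heig : ∀ k x, euclidLaplacian (φ k) x = -lam k * φ k x)
    (a : Fin n → ℝ) (f : EuclideanSpace ℝ (Fin d) → ℝ)
    (hf : ∀ x, f x = ∑ k, a k * φ k x)
    (z : EuclideanSpace ℝ (Fin d)) :
    ∃ y : EuclideanSpace ℝ (Fin d),
      ‖y - z‖ ≤ 2 * π * ∑ k, 1 / Real.sqrt (lam k) ∧ f y = 0 := by
  by_contra hcon
  have hd3 : d ≤ 3 := by omega
  have hfc : Continuous f := by
    have : f = fun x => ∑ k, a k * φ k x := funext hf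
    rw [this]
    exact continuous_finsetSum _ (fun k _ => continuous_const.mul (hφ k).continuous)
  set R : Fin n → ℝ := fun k => 2 * π * (1 / Real.sqrt (lam k)) with hRdef
  have hRpos : ∀ k, 0 < R k := fun k => by
    have := Real.sqrt_pos.mpr (hlam k)
    have := Real.pi_pos
    simp only [hRdef]
    positivity
  have hRl : ∀ k, lam k * R k ^ 2 = 4 * π ^ 2 := fun k => by
    have h1 := Real.sqrt_pos.mpr (hlam k)
    have h2 := Real.sq_sqrt (hlam k).le
    simp only [hRdef]
    rw [mul_pow, div_pow, h2]
    have := (hlam k).ne'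
    field_simp
    ring
  have hsumR : 2 * π * ∑ k, 1 / Real.sqrt (lam k) = ∑ k, R k := by
    rw [Finset.mul_sum]
  rw [hsumR] at hcon
  have main : ∀ c : Fin n → ℝ, ¬ ∀ y, ‖y - z‖ ≤ ∑ k, R k → 0 < ∑ k, c k * φ k y := by
    intro c
    apply aux_abstract (fun k => ww d (R k) (lam k)) R
    · intro k
      have := bq_cont (d := d) (R k)
      unfold ww
      fun_prop
    · intro k y
      exact mul_nonneg (sq_nonneg _) (ww_quad hd3 (hlam k) (le_max_right _ _) (hRl k)).le
    · intro k
      refine mul_pos (pow_pos ?_ 2) (ww_quad hd3 (hlam k) (le_max_right _ _) (hRl k))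
      have := hRpos k
      unfold bq
      apply lt_max_of_lt_left
      simp
      positivity
    · intro k y hy
      unfold ww
      rw [bq_zero (hRpos k).le y hy]
      ring
    · intro k
      exact continuous_const.mul (hφ k).continuous
    · intro k x
      have h1 : ∀ y, ww d (R k) (lam k) y * (c k * φ k (x + y)) =
          c k * (ww d (R k) (lam k) y * φ k (x + y)) := fun y => by ring
      simp_rw [h1]
      rw [integral_const_mul, ww_kill (hRpos k).le (fun y => φ k (x + y)), mul_zero]
      · exact (hφ k).comp (contDiff_const.add contDiff_id)
      · intro y
        rw [← heig k (x + y)]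
        unfold euclidLaplacian
        refine Finset.sum_congr rfl (fun i _ => ?_)
        have h2 : (fun y => fderiv ℝ (fun y => φ k (x + y)) y (EuclideanSpace.single i 1)) =
            fun y => (fun u => fderiv ℝ (φ k) u (EuclideanSpace.single i 1)) (x + y) := by
          funext u
          rw [fderiv_comp_add_left]
        rw [h2, fderiv_comp_add_left (f := fun u => fderiv ℝ (φ k) u (EuclideanSpace.single i 1)) x]
  have hne : ∀ y, ‖y - z‖ ≤ ∑ k, R k → f y ≠ 0 := fun y hy h0 => hcon ⟨y, hy, h0⟩
  have hS : 0 ≤ ∑ k, R k := Finset.sum_nonneg (fun k _ => (hRpos k).le)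
  have hpre : IsPreconnected (Metric.closedBall z (∑ k, R k)) :=
    (convex_closedBall z _).isPreconnected
  have hzm : z ∈ Metric.closedBall z (∑ k, R k) := Metric.mem_closedBall_self hS
  have hsame : ∀ y, ‖y - z‖ ≤ ∑ k, R k → ∀ x, ‖x - z‖ ≤ ∑ k, R k → f y < 0 → 0 < f x → False := by
    intro y hy x hx h1 h2
    obtain ⟨u, hu, hu0⟩ := hpre.intermediate_value (a := y) (b := x)
      (by simpa [dist_eq_norm] using hy) (by simpa [dist_eq_norm] using hx)
      hfc.continuousOn ⟨h1.le, h2.le⟩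
    exact hne u (by simpa [dist_eq_norm] using hu) hu0
  have hz : ‖z - z‖ ≤ ∑ k, R k := by simpa using hS
  rcases lt_or_gt_of_ne (hne z hz) with h | h
  · apply main (fun k => -a k)
    intro y hy
    have : f y < 0 := by
      rcases lt_or_gt_of_ne (hne y hy) with h' | h'
      · exact h'
      · exact (hsame z hz y hy h h').elim
    rw [hf] at this
    simpa [Finset.sum_neg_distrib] using this
  · apply main a
    intro y hy
    rw [← hf]
    rcases lt_or_gt_of_ne (hne y hy) with h' | h'
    · exact (hsame y hy z hz h' h).elim
    · exact h'
end

section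
/- Let d ∈ {2, 3}, λ > 0, and let φ : ℝ^d → ℝ be a smooth function satisfying Δφ = −λφ on all of ℝ^d, where Δ is the Euclidean Laplacian. Then φ has a zero in every closed ball of radius 2π/√λ; that is, for every z ∈ ℝ^d there exists y with ‖y − z‖ ≤ 2π λ^{-1/2} and φ(y) = 0. -/
open scoped Real

open Filter Topology

lemma second_deriv_nonpos (h h' : ℝ → ℝ) (c : ℝ) (hm : IsLocalMax h 0)
    (h1 : ∀ t, HasDerivAt h (h' t) t) (h2 : HasDerivAt h' c 0) : c ≤ 0 := by
  by_contra! hc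
  have hd : deriv h = h' := funext fun t => (h1 t).deriv
  have hmin : IsLocalMin h 0 := by
    apply isLocalMin_of_deriv_deriv_pos
    · rw [hd, h2.deriv]; exact hc
    · exact hm.deriv_eq_zero
    · exact (h1 0).continuousAt
  have hcst : h =ᶠ[𝓝 0] fun _ => h 0 := by
    filter_upwards [hm, hmin] with t a b
    exact le_antisymm a b
  have e1 := hcst.deriv
  rw [hd] at e1
  have e2 := e1.deriv_eq
  rw [h2.deriv] at e2
  simp at e2
  linarith

lemma eig_pos_false {d : ℕ} (hd0 : 0 < d) (hd : d ≤ 3)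
    (lam : ℝ) (hlam : 0 < lam)
    (φ : EuclideanSpace ℝ (Fin d) → ℝ) (hφ : ContDiff ℝ (⊤ : ℕ∞) φ)
    (heig : ∀ x, euclidLaplacian φ x = -lam * φ x)
    (z : EuclideanSpace ℝ (Fin d))
    (hpos : ∀ y, ‖y - z‖ ≤ 2 * π / Real.sqrt lam → 0 < φ y) : False := by
  have hdR : (0 : ℝ) < d := by exact_mod_cast hd0
  have hdR3 : (d : ℝ) ≤ 3 := by exact_mod_cast hd
  set s := Real.sqrt (d * lam) with hs
  have hs0 : 0 < s := Real.sqrt_pos.2 (by positivity)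
  have hs2 : s ^ 2 = d * lam := Real.sq_sqrt (by positivity)
  set k := s / 4 with hk
  set L := 2 * π / s with hL
  have hL0 : 0 < L := by positivity
  have hkL : k * L = π / 2 := by rw [hk, hL]; field_simp; norm_num
  have hk0 : 0 < k := by positivity
  set K : Set (EuclideanSpace ℝ (Fin d)) := {y | ∀ i, |y i - z i| ≤ L} with hK
  have hKball : ∀ y ∈ K, ‖y - z‖ ≤ 2 * π / Real.sqrt lam := by
    intro y hy
    rw [EuclideanSpace.norm_eq]
    apply Real.sqrt_le_iff.2 ⟨by positivity, ?_⟩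
    calc ∑ i, ‖(y - z) i‖ ^ 2 ≤ ∑ i : Fin d, L ^ 2 := by
          apply Finset.sum_le_sum
          intro i _
          have := hy i
          simp only [PiLp.sub_apply, Real.norm_eq_abs]
          gcongr
      _ = (2 * π / Real.sqrt lam) ^ 2 := by
          simp only [Finset.sum_const, Finset.card_univ, Fintype.card_fin, nsmul_eq_mul]
          rw [hL, div_pow, div_pow, hs2, Real.sq_sqrt hlam.le]
          field_simp
  have hKpos : ∀ y ∈ K, 0 < φ y := fun y hy => hpos y (hKball y hy)
  have hKc : IsCompact K := by
    apply Metric.isCompact_of_isClosed_isBounded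
    · rw [hK, Set.ofPred_forall]
      exact isClosed_iInter fun i => isClosed_le (by fun_prop) (by fun_prop)
    · apply (Metric.isBounded_closedBall (x := z) (r := 2 * π / Real.sqrt lam)).subset
      intro y hy
      rw [Metric.mem_closedBall, dist_eq_norm]
      exact hKball y hy
  have hzK : z ∈ K := by intro i; simpa using hL0.le
  let w : EuclideanSpace ℝ (Fin d) → ℝ := fun y => ∏ i, Real.cos (k * (y i - z i))
  have hwc : Continuous w := by
    apply continuous_finsetProd; intro i _; fun_prop
  obtain ⟨x0, hx0, hmax⟩ := hKc.exists_isMaxOn ⟨z, hzK⟩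
    (f := fun y => w y / φ y)
    (hwc.continuousOn.div hφ.continuous.continuousOn fun y hy => (hKpos y hy).ne')
  set M := w x0 / φ x0 with hM
  have hwz : w z = 1 := by simp [w]
  have hM0 : 0 < M := by
    have h1 : w z / φ z ≤ M := hmax hzK
    have h2 : 0 < w z / φ z := by rw [hwz]; exact div_pos one_pos (hKpos z hzK)
    linarith
  have hφx := hKpos x0 hx0
  have hwx : w x0 = M * φ x0 := by rw [hM]; field_simp
  have hwx0 : 0 < w x0 := by rw [hwx]; positivity
  have hint : ∀ i, |x0 i - z i| < L := by
    intro i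
    refine lt_of_le_of_ne (hx0 i) fun he => ?_
    have : Real.cos (k * (x0 i - z i)) = 0 := by
      rw [← Real.cos_abs, abs_mul, abs_of_pos hk0, he, hkL, Real.cos_pi_div_two]
    exact hwx0.ne' (Finset.prod_eq_zero (Finset.mem_univ i) this)
  have hKn : K ∈ 𝓝 x0 := by
    have : ∀ᶠ y : EuclideanSpace ℝ (Fin d) in 𝓝 x0, ∀ i, |y i - z i| < L := by
      rw [eventually_all]
      intro i
      have hc : Continuous fun y : EuclideanSpace ℝ (Fin d) => |y i - z i| := by fun_prop
      exact hc.continuousAt.eventually (gt_mem_nhds (hint i))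
    filter_upwards [this] with y hy i
    exact (hy i).le
  have hg : IsLocalMax (fun y => w y - M * φ y) x0 := by
    filter_upwards [hKn] with y hy
    have h1 : w y / φ y ≤ M := hmax hy
    rw [div_le_iff₀ (hKpos y hy)] at h1
    rw [hwx]; linarith
  have key : ∀ i : Fin d, -(k ^ 2 * w x0) - M * fderiv ℝ (fun y => fderiv ℝ φ y
      (EuclideanSpace.single i 1)) x0 (EuclideanSpace.single i 1) ≤ 0 := by
    intro i
    set e : EuclideanSpace ℝ (Fin d) := EuclideanSpace.single i 1 with he
    set C := ∏ j ∈ Finset.univ.erase i, Real.cos (k * (x0 j - z j)) with hC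
    have hline : ∀ t : ℝ, HasDerivAt (fun t : ℝ => x0 + t • e) e t := by
      intro t
      simpa using ((hasDerivAt_id t).smul_const e).const_add x0
    have hwl : ∀ t : ℝ, w (x0 + t • e) = Real.cos (k * (x0 i + t - z i)) * C := by
      intro t
      simp only [w]
      rw [← Finset.mul_prod_erase _ _ (Finset.mem_univ i)]
      congr 1
      · simp [he]
      · apply Finset.prod_congr rfl
        intro j hj
        have : j ≠ i := (Finset.mem_erase.1 hj).1
        simp [he, this]
    have hw0 : w x0 = Real.cos (k * (x0 i - z i)) * C := by simpa using hwl 0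
    have hlin : ∀ t : ℝ, HasDerivAt (fun t : ℝ => k * (x0 i + t - z i)) k t := by
      intro t
      simpa using (((hasDerivAt_id t).const_add (x0 i)).sub_const (z i)).const_mul k
    have hdφ : Differentiable ℝ φ := hφ.differentiable (by simp)
    have hdφ2 : Differentiable ℝ (fun y => fderiv ℝ φ y e) := by
      have : ContDiff ℝ 1 (fderiv ℝ φ) := hφ.fderiv_right (by
        have : ((1 + 1 : ℕ∞) : WithTop ℕ∞) ≤ ((⊤ : ℕ∞) : WithTop ℕ∞) := WithTop.coe_le_coe.2 le_top
        simpa using this)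
      exact (this.clm_apply contDiff_const).differentiable (by simp)
    apply second_deriv_nonpos (fun t => w (x0 + t • e) - M * φ (x0 + t • e))
      (fun t => (-Real.sin (k * (x0 i + t - z i)) * k) * C - M * fderiv ℝ φ (x0 + t • e) e)
    · have hcl : ContinuousAt (fun t : ℝ => x0 + t • e) 0 := (hline 0).continuousAt
      have hg' : IsLocalMax (fun y => w y - M * φ y) (x0 + (0 : ℝ) • e) := by simpa using hg
      exact hcl.eventually hg'
    · intro t
      simp only [hwl]
      refine ((hlin t).cos.mul_const C).sub (HasDerivAt.const_mul M ?_)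
      exact (hdφ (x0 + t • e)).hasFDerivAt.comp_hasDerivAt t (hline t)
    · have h1 := (((hlin 0).sin.neg.mul_const k).mul_const C)
      have hF : HasFDerivAt (fun y => fderiv ℝ φ y e) (fderiv ℝ (fun y => fderiv ℝ φ y e) x0)
          (x0 + (0 : ℝ) • e) := by
        simpa using (hdφ2 x0).hasFDerivAt
      have h2 := (hF.comp_hasDerivAt (0 : ℝ) (hline 0)).const_mul M
      refine (h1.sub h2).congr_deriv ?_
      rw [hw0, add_zero]; ring
  have hsum := Finset.sum_nonpos (s := Finset.univ) fun i _ => key i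
  rw [Finset.sum_sub_distrib, ← Finset.mul_sum] at hsum
  have hE := heig x0
  unfold euclidLaplacian at hE
  rw [hE] at hsum
  simp only [Finset.sum_const, Finset.card_univ, Fintype.card_fin, nsmul_eq_mul] at hsum
  have hk2 : k ^ 2 = d * lam / 16 := by rw [hk, div_pow, hs2]; norm_num
  have h3 : M * (-lam * φ x0) = - lam * w x0 := by rw [hwx]; ring
  rw [h3, hk2] at hsum
  have h4 : (d : ℝ) * d ≤ 9 := by nlinarith
  have h5 : 0 < lam * w x0 := by positivity
  nlinarith

/-- A smooth global eigenfunction `−Δφ = λφ` on `ℝ^d`, `d ∈ {2,3}`, `λ > 0`,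
has a zero in every closed ball of radius `2π/√λ`. -/
theorem global_eigenfunction_zero_in_ball {d : ℕ} (hd : d = 2 ∨ d = 3)
    (lam : ℝ) (hlam : 0 < lam)
    (φ : EuclideanSpace ℝ (Fin d) → ℝ) (hφ : ContDiff ℝ (⊤ : ℕ∞) φ)
    (heig : ∀ x, euclidLaplacian φ x = -lam * φ x)
    (z : EuclideanSpace ℝ (Fin d)) :
    ∃ y : EuclideanSpace ℝ (Fin d), ‖y - z‖ ≤ 2 * π / Real.sqrt lam ∧ φ y = 0 := by
  by_contra! hne
  have hR : 0 ≤ 2 * π / Real.sqrt lam := by positivity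
  have hconn : IsPreconnected (Metric.closedBall z (2 * π / Real.sqrt lam)) :=
    (convex_closedBall z _).isPreconnected
  have hmem : ∀ y, ‖y - z‖ ≤ 2 * π / Real.sqrt lam ↔
      y ∈ Metric.closedBall z (2 * π / Real.sqrt lam) := by
    intro y; rw [Metric.mem_closedBall, dist_eq_norm]
  have hivt : ∀ a b, ‖a - z‖ ≤ 2 * π / Real.sqrt lam → ‖b - z‖ ≤ 2 * π / Real.sqrt lam →
      φ a < 0 → 0 < φ b → False := by
    intro a b ha hb h1 h2
    obtain ⟨y, hy, hy0⟩ := hconn.intermediate_value ((hmem a).1 ha) ((hmem b).1 hb)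
      hφ.continuous.continuousOn ⟨h1.le, h2.le⟩
    exact hne y ((hmem y).2 hy) hy0
  have hz : ‖z - z‖ ≤ 2 * π / Real.sqrt lam := by simpa using hR
  rcases lt_or_gt_of_ne (hne z hz) with h | h
  · refine eig_pos_false (by omega) (by omega) lam hlam (fun y => -φ y) hφ.neg ?_ z ?_
    · intro x
      have := heig x
      unfold euclidLaplacian at this ⊢
      simp only [fderiv_fun_neg, ContinuousLinearMap.neg_apply, Finset.sum_neg_distrib, this]
      ring
    · intro y hy
      rcases lt_or_gt_of_ne (hne y hy) with h' | h'
      · simpa using h'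
      · exact (hivt z y hz hy h h').elim
  · refine eig_pos_false (by omega) (by omega) lam hlam φ hφ heig z ?_
    intro y hy
    rcases lt_or_gt_of_ne (hne y hy) with h' | h'
    · exact (hivt y z hy hz h' h).elim
    · exact h'
end

section
/- Let λ > 0, let x ∈ ℝ³ and r > 0, and let φ be a smooth real-valued function defined on an open neighborhood of the closed ball B(x, r) ⊂ ℝ³ satisfying Δφ = −λφ there. Then ∫_{‖x−y‖ ≤ r} φ(y)/‖y−x‖ dy = 4π · (1 − cos(√λ · r))/λ · φ(x), where the integral is the Lebesgue integral over the closed ball B(x, r). -/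
open scoped Real
open MeasureTheory

open Set Filter Topology
open scoped ContDiff

/-- Three-dimensional Euclidean space. -/
abbrev E3 : Type := EuclideanSpace ℝ (Fin 3)
/-- The unit sphere. -/
abbrev S2 : Type := Metric.sphere (0 : E3) 1
/-- The surface measure on the unit sphere. -/
noncomputable abbrev sig : Measure S2 := (volume : Measure E3).toSphere

lemma sig_int_cont {g : S2 → ℝ} (hg : Continuous g) : Integrable g sig :=
  hg.integrable_of_hasCompactSupport (HasCompactSupport.of_compactSpace g)

lemma sig_hasDerivAt {g g' : ℝ → S2 → ℝ} (hg : ∀ t, Continuous (g t))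
    (hg' : Continuous (fun p : ℝ × S2 => g' p.1 p.2))
    (h : ∀ t w, HasDerivAt (fun t => g t w) (g' t w) t) (t : ℝ) :
    HasDerivAt (fun t => ∫ w, g t w ∂sig) (∫ w, g' t w ∂sig) t := by
  obtain ⟨C, hC⟩ := ((isCompact_Icc (a := t - 1) (b := t + 1)).prod
    (isCompact_univ (X := S2))).exists_bound_of_continuousOn hg'.continuousOn
  refine (hasDerivAt_integral_of_dominated_loc_of_deriv_le (F := g) (F' := g') (bound := fun _ => C)
    (s := Icc (t-1) (t+1)) (Icc_mem_nhds (by linarith) (by linarith)) ?_ (sig_int_cont (hg t)) ?_ ?_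
    (integrable_const C) ?_).2
  · exact Eventually.of_forall fun s => (sig_int_cont (hg s)).aestronglyMeasurable
  · exact (sig_int_cont (g := g' t) (by fun_prop)).aestronglyMeasurable
  · exact Eventually.of_forall fun w s hs => hC (s, w) ⟨hs, mem_univ _⟩
  · exact Eventually.of_forall fun w s hs => h s w

lemma polar {f : E3 → ℝ} (hf : Integrable f) :
    ∫ y, f y = ∫ s in Ioi (0:ℝ), s ^ 2 * ∫ w : S2, f (s • (w : E3)) ∂sig := by
  have hd : Module.finrank ℝ E3 - 1 = 2 := by simp
  have mp := (volume : Measure E3).measurePreserving_homeomorphUnitSphereProd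
  rw [hd] at mp
  have emb := (homeomorphUnitSphereProd E3).measurableEmbedding
  let G : S2 × Ioi (0:ℝ) → ℝ := fun p => f ((p.2 : ℝ) • (p.1 : E3))
  have hG : G ∘ (homeomorphUnitSphereProd E3) = fun y : ({0}ᶜ : Set E3) => f y := by
    funext y
    have : (y : E3) ≠ 0 := y.2
    simp [G, smul_smul, this]
  have hGi : Integrable G (sig.prod (.volumeIoiPow 2)) := by
    rw [← mp.integrable_comp_emb emb, hG]
    have := (integrableOn_iff_comap_subtypeVal (measurableSet_singleton (0:E3)).compl (f := f)
      (μ := volume)).1 hf.integrableOn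
    exact this
  calc ∫ y, f y = ∫ y : ({0}ᶜ : Set E3), f y ∂((volume : Measure E3).comap (↑)) := by
        rw [integral_subtype_comap (measurableSet_singleton _).compl f, restrict_compl_singleton]
    _ = ∫ p, G p ∂(sig.prod (.volumeIoiPow 2)) := by
        rw [← mp.integral_comp emb]
        exact integral_congr_ae (Eventually.of_forall fun y => (congrFun hG y).symm)
    _ = ∫ s : Ioi (0:ℝ), (∫ w : S2, f ((s:ℝ) • (w : E3)) ∂sig) ∂(.volumeIoiPow 2) :=
        integral_prod_symm _ hGi
    _ = _ := by
      simp only [Measure.volumeIoiPow, ENNReal.ofReal]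
      rw [integral_withDensity_eq_integral_smul,
        integral_subtype_comap measurableSet_Ioi
          fun a ↦ Real.toNNReal (a ^ 2) • (∫ w : S2, f (a • (w : E3)) ∂sig),
        setIntegral_congr_fun measurableSet_Ioi fun x hx ↦ ?_]
      · simp only [NNReal.smul_def]
        rw [Real.coe_toNNReal _ (pow_nonneg hx.out.le _), smul_eq_mul]
      · exact (measurable_subtype_coe.pow_const _).real_toNNReal

lemma sig_univ : sig.real univ = 4 * π := by
  rw [Measure.toSphere_real_apply_univ, measureReal_def, EuclideanSpace.volume_ball_fin_three]
  have : (0:ℝ) ≤ π * 4 / 3 := by positivity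
  simp [ENNReal.toReal_ofReal this]
  ring

/-- the homeomorphism of the sphere induced by a linear isometry -/
noncomputable def sphMap (e : E3 ≃ₗᵢ[ℝ] E3) (w : S2) : S2 := ⟨e w, by simp⟩

lemma sphMap_cont (e : E3 ≃ₗᵢ[ℝ] E3) : Continuous (sphMap e) := by
  unfold sphMap; fun_prop

open scoped Pointwise in
lemma sphMap_mp (e : E3 ≃ₗᵢ[ℝ] E3) : MeasurePreserving (sphMap e) sig sig := by
  refine ⟨(sphMap_cont e).measurable, ?_⟩
  ext s hs
  rw [Measure.map_apply (sphMap_cont e).measurable hs, Measure.toSphere_apply' _ hs,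
    Measure.toSphere_apply' _ ((sphMap_cont e).measurable hs)]
  congr 1
  have key := e.measurePreserving.measure_preimage_equiv (f := e.toMeasurableEquiv)
    (Ioo (0:ℝ) 1 • (Set.image (fun w : S2 => (w : E3)) s))
  rw [← key]
  congr 1
  ext y
  simp only [Set.mem_smul, mem_preimage, mem_image]
  constructor
  · rintro ⟨t, ht, _, ⟨w, hw, rfl⟩, rfl⟩
    exact ⟨t, ht, e w, ⟨sphMap e w, hw, rfl⟩, by simp⟩
  · rintro ⟨t, ht, _, ⟨w, hw, rfl⟩, h⟩
    refine ⟨t, ht, e.symm w, ⟨sphMap e.symm w, ?_, rfl⟩, ?_⟩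
    · convert hw; ext1; simp [sphMap]
    · apply e.injective; simpa using h

lemma sig_rot (e : E3 ≃ₗᵢ[ℝ] E3) {f : E3 → ℝ} (hf : Continuous f) :
    ∫ w : S2, f (e w) ∂sig = ∫ w : S2, f w ∂sig := by
  have := (sphMap_mp e).map_eq
  conv_rhs => rw [← this]
  rw [integral_map (sphMap_cont e).aemeasurable]
  · rfl
  · exact Continuous.aestronglyMeasurable (by fun_prop)

/-- rotation in the plane spanned by `a`, `b` -/
noncomputable def rotFun (a b : E3) (t : ℝ) (y : E3) : E3 :=
  y + ((Real.cos t - 1) * inner ℝ a y - Real.sin t * inner ℝ b y) • a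
    + ((Real.cos t - 1) * inner ℝ b y + Real.sin t * inner ℝ a y) • b

lemma rotFun_norm {a b : E3} (ha : ‖a‖ = 1) (hb : ‖b‖ = 1) (hab : inner ℝ a b = 0) (t : ℝ)
    (y : E3) : ‖rotFun a b t y‖ = ‖y‖ := by
  have hba : inner ℝ b a = 0 := by rw [real_inner_comm]; exact hab
  have h1 : inner ℝ y a = inner ℝ a y := real_inner_comm _ _
  have h2 : inner ℝ y b = inner ℝ b y := real_inner_comm _ _
  have : ‖rotFun a b t y‖ ^ 2 = ‖y‖ ^ 2 := by
    rw [← real_inner_self_eq_norm_sq, ← real_inner_self_eq_norm_sq, rotFun]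
    simp only [inner_add_left, inner_add_right, inner_smul_left, inner_smul_right, hab, hba, h1, h2,
      real_inner_self_eq_norm_sq, ha, hb, RCLike.conj_to_real]
    have := Real.sin_sq_add_cos_sq t
    linear_combination (inner ℝ a y ^ 2 + inner ℝ b y ^ 2) * this
  exact (sq_eq_sq₀ (norm_nonneg _) (norm_nonneg _)).1 this

/-- rotation as a linear isometry -/
noncomputable def rot {a b : E3} (ha : ‖a‖ = 1) (hb : ‖b‖ = 1) (hab : inner ℝ a b = 0) (t : ℝ) :
    E3 ≃ₗᵢ[ℝ] E3 :=
  LinearIsometry.toLinearIsometryEquiv (li := 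
    { toFun := rotFun a b t
      map_add' := fun y z => by simp only [rotFun, inner_add_right]; module
      map_smul' := fun c y => by
        simp only [rotFun, inner_smul_right, RingHom.id_apply]; module
      norm_map' := rotFun_norm ha hb hab t }) rfl

/-- infinitesimal rotation -/
noncomputable def rotJ (a b : E3) : E3 →L[ℝ] E3 :=
  (innerSL ℝ a).smulRight b - (innerSL ℝ b).smulRight a

lemma rotJ_apply (a b y : E3) : rotJ a b y = (inner ℝ a y) • b - (inner ℝ b y) • a := by
  simp [rotJ]

lemma rotFun_deriv (a b : E3) (t : ℝ) (y : E3) :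
    HasDerivAt (fun t => rotFun a b t y)
     ((-Real.sin t * inner ℝ a y - Real.cos t * inner ℝ b y) • a
      + (-Real.sin t * inner ℝ b y + Real.cos t * inner ℝ a y) • b) t := by
  unfold rotFun
  refine HasDerivAt.add (HasDerivAt.const_add _ ?_) ?_
  · refine HasDerivAt.smul_const ?_ a
    exact (((Real.hasDerivAt_cos t).sub_const 1).mul_const _).sub
      ((Real.hasDerivAt_sin t).mul_const _)
  · refine HasDerivAt.smul_const ?_ b
    exact (((Real.hasDerivAt_cos t).sub_const 1).mul_const _).add
      ((Real.hasDerivAt_sin t).mul_const _)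

lemma sig_rotJ {a b : E3} (ha : ‖a‖ = 1) (hb : ‖b‖ = 1) (hab : inner ℝ a b = 0) {f : E3 → ℝ}
    (hf : ContDiff ℝ 1 f) : ∫ w : S2, fderiv ℝ f w (rotJ a b w) ∂sig = 0 := by
  have hfd := hf.continuous_fderiv (by norm_num)
  have hfc := hf.continuous
  have H := sig_hasDerivAt (g := fun t w => f (rotFun a b t w))
    (g' := fun t w => fderiv ℝ f (rotFun a b t w)
      ((-Real.sin t * inner ℝ a w - Real.cos t * inner ℝ b w) • a
      + (-Real.sin t * inner ℝ b w + Real.cos t * inner ℝ a w) • b))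
    (fun t => by unfold rotFun; fun_prop) (by unfold rotFun; fun_prop)
    (fun t w => ((hf.differentiable (by norm_num)) _).hasFDerivAt.comp_hasDerivAt t
      (rotFun_deriv a b t w)) 0
  have h0 : (fun t => ∫ w : S2, f (rotFun a b t w) ∂sig) = fun _ => ∫ w : S2, f w ∂sig := by
    funext t
    exact sig_rot (rot ha hb hab t) hfc
  rw [h0] at H
  have := H.unique (hasDerivAt_const _ _)
  rw [← this]
  congr 1
  funext w
  have : rotFun a b 0 w = w := by simp [rotFun]
  rw [this]
  congr 1
  simp [rotJ_apply]
  abel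

lemma sig_rotJ2 {a b : E3} (ha : ‖a‖ = 1) (hb : ‖b‖ = 1) (hab : inner ℝ a b = 0) {f : E3 → ℝ}
    (hf : ContDiff ℝ 2 f) :
    ∫ w : S2, (fderiv ℝ (fderiv ℝ f) w (rotJ a b w) (rotJ a b w)
      + fderiv ℝ f w (rotJ a b (rotJ a b w))) ∂sig = 0 := by
  have h1 : ContDiff ℝ 1 (fderiv ℝ f) := hf.fderiv_right (by norm_num)
  have := sig_rotJ ha hb hab (f := fun y => fderiv ℝ f y (rotJ a b y))
    (h1.clm_apply (rotJ a b).contDiff)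
  rw [← this]
  congr 1
  funext w
  have h2 : HasFDerivAt (fderiv ℝ f) (fderiv ℝ (fderiv ℝ f) w) w :=
    ((h1.differentiable (by norm_num)) _).hasFDerivAt
  rw [(h2.clm_apply (rotJ a b).hasFDerivAt).fderiv]
  simp [add_comm]

lemma lap_eq {f : E3 → ℝ} (hf : ContDiff ℝ 2 f) (w : E3) :
    euclidLaplacian f w = ∑ i, fderiv ℝ (fderiv ℝ f) w (EuclideanSpace.single i 1)
      (EuclideanSpace.single i 1) := by
  have h1 : ContDiff ℝ 1 (fderiv ℝ f) := hf.fderiv_right (by norm_num)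
  unfold euclidLaplacian
  refine Finset.sum_congr rfl fun i _ => ?_
  rw [fderiv_clm_apply ((h1.differentiable (by norm_num)) _) (by fun_prop)]
  simp

lemma sphere_identity {f : E3 → ℝ} (hf : ContDiff ℝ 2 f) :
    ∫ w : S2, (euclidLaplacian f w - fderiv ℝ (fderiv ℝ f) w w w - 2 * fderiv ℝ f w w) ∂sig = 0 := by
  have h1 : ContDiff ℝ 1 (fderiv ℝ f) := hf.fderiv_right (by norm_num)
  have c1 := h1.continuous
  have c2 := h1.continuous_fderiv (by norm_num)
  let e : Fin 3 → E3 := fun i => EuclideanSpace.single i 1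
  have he : ∀ i, ‖e i‖ = 1 := fun i => by simp [e]
  have hee : ∀ i j, i ≠ j → inner ℝ (e i) (e j) = 0 := fun i j h => by
    rw [EuclideanSpace.inner_single_left]; simp [e, h]
  have A := sig_rotJ2 (he 0) (he 1) (hee 0 1 (by decide)) hf
  have B := sig_rotJ2 (he 0) (he 2) (hee 0 2 (by decide)) hf
  have C := sig_rotJ2 (he 1) (he 2) (hee 1 2 (by decide)) hf
  have I : ∀ a b : E3, Integrable (fun w : S2 => fderiv ℝ (fderiv ℝ f) w (rotJ a b w) (rotJ a b w)
      + fderiv ℝ f w (rotJ a b (rotJ a b w))) sig := fun a b => sig_int_cont (by fun_prop)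
  have S := integral_add ((I (e 0) (e 1)).add (I (e 0) (e 2))) (I (e 1) (e 2))
  have S' := integral_add (I (e 0) (e 1)) (I (e 0) (e 2))
  simp only [Pi.add_apply] at S
  rw [S', A, B, C] at S
  simp only [add_zero] at S
  rw [← S]
  congr 1
  funext w
  have hL : euclidLaplacian f w = ∑ i, fderiv ℝ (fderiv ℝ f) w (e i) (e i) := lap_eq hf w
  have hw : (w : E3) = (w : E3) 0 • e 0 + (w : E3) 1 • e 1 + (w : E3) 2 • e 2 := by
    ext i; fin_cases i <;> simp [e]
  have hn : (w : E3) 0 ^ 2 + (w : E3) 1 ^ 2 + (w : E3) 2 ^ 2 = 1 := by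
    have : ‖(w : E3)‖ ^ 2 = 1 := by simp
    rw [EuclideanSpace.real_norm_sq_eq, Fin.sum_univ_three] at this
    exact this
  have hin : ∀ i (y : E3), inner ℝ (e i) y = y i := fun i y => by
    rw [EuclideanSpace.inner_single_left]; simp
  have hJ : ∀ i j, rotJ (e i) (e j) w = (w : E3) i • e j - (w : E3) j • e i := fun i j => by
    rw [rotJ_apply, hin, hin]
  have hJJ : ∀ i j, i ≠ j → rotJ (e i) (e j) (rotJ (e i) (e j) w)
      = - ((w : E3) i • e i + (w : E3) j • e j) := fun i j h => by
    rw [rotJ_apply, hin, hin, hJ]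
    simp [e, h, h.symm]
    abel
  rw [hL, Fin.sum_univ_three, hJJ 0 1 (by decide), hJJ 0 2 (by decide), hJJ 1 2 (by decide),
    hJ, hJ, hJ]
  generalize fderiv ℝ (fderiv ℝ f) (w : E3) = D
  generalize fderiv ℝ f (w : E3) = L
  generalize (w : E3) 0 = x at *
  generalize (w : E3) 1 = y at *
  generalize (w : E3) 2 = z at *
  rw [hw]
  simp only [map_add, map_sub, map_smul, map_neg, add_apply, sub_apply, smul_apply,
    smul_eq_mul]
  linear_combination (-(D (e 0) (e 0) + D (e 1) (e 1) + D (e 2) (e 2))) * hn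

lemma sphere_identity_scaled {f : E3 → ℝ} (hf : ContDiff ℝ 2 f) (s : ℝ) :
    ∫ w : S2, (s ^ 2 * euclidLaplacian f (s • (w : E3))
      - s ^ 2 * fderiv ℝ (fderiv ℝ f) (s • (w : E3)) w w
      - 2 * s * fderiv ℝ f (s • (w : E3)) w) ∂sig = 0 := by
  have h1 : ContDiff ℝ 1 (fderiv ℝ f) := hf.fderiv_right (by norm_num)
  have hg : ContDiff ℝ 2 (fun y => f (s • y)) := by fun_prop
  have e1 : fderiv ℝ (fun y => f (s • y)) = fun y => s • fderiv ℝ f (s • y) := by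
    funext y
    have := ((hf.differentiable (by norm_num)) (s • y)).hasFDerivAt.comp y
      ((hasFDerivAt_id y).const_smul s)
    refine (HasFDerivAt.fderiv (f := fun y => f (s • y)) this).trans ?_
    ext v; simp
  have e2 : ∀ y, fderiv ℝ (fun y => s • fderiv ℝ f (s • y)) y =
      (s ^ 2) • fderiv ℝ (fderiv ℝ f) (s • y) := by
    intro y
    have := (((h1.differentiable (by norm_num)) (s • y)).hasFDerivAt.comp y
      ((hasFDerivAt_id y).const_smul s)).const_smul s
    refine (HasFDerivAt.fderiv (f := fun y => s • fderiv ℝ f (s • y)) this).trans ?_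
    ext v u; simp; ring
  rw [← sphere_identity hg]
  congr 1
  funext w
  rw [lap_eq hg, lap_eq hf, e1, e2]
  simp only [smul_apply, smul_eq_mul, Finset.mul_sum]
  ring

lemma const_of_deriv_zero {u : ℝ → ℝ} {r : ℝ} (hr : 0 < r) (hc : Continuous u)
    (hd : ∀ s ∈ Ioo 0 r, HasDerivAt u 0 s) : u r = u 0 := by
  obtain ⟨c, -, h⟩ := exists_hasDerivAt_eq_slope u (fun _ => 0) hr hc.continuousOn hd
  rw [eq_div_iff (by linarith)] at h
  linarith

lemma line_deriv2 {f : E3 → ℝ} (hf : ContDiff ℝ 2 f) (t : ℝ) (w : E3) :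
    HasDerivAt (fun s : ℝ => fderiv ℝ f (s • w) w) (fderiv ℝ (fderiv ℝ f) (t • w) w w) t := by
  have h1 : ContDiff ℝ 1 (fderiv ℝ f) := hf.fderiv_right (by norm_num)
  have hs : HasDerivAt (fun t : ℝ => t • w) w t := by
    simpa using (hasDerivAt_id t).smul_const w
  have h2 : HasDerivAt (fun s : ℝ => fderiv ℝ f (s • w)) (fderiv ℝ (fderiv ℝ f) (t • w) w) t :=
    ((h1.differentiable (by norm_num)) (t • w)).hasFDerivAt.comp_hasDerivAt t hs
  exact ((ContinuousLinearMap.apply ℝ ℝ w).hasFDerivAt).comp_hasDerivAt t h2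

lemma radial_integral {f : E3 → ℝ} (hf : ContDiff ℝ 2 f) {lam r : ℝ} (hlam : 0 < lam)
    (hr : 0 < r) (heig : ∀ y, ‖y‖ ≤ r → euclidLaplacian f y = -lam * f y) :
    ∫ s in (0:ℝ)..r, s * ∫ w : S2, f (s • (w : E3)) ∂sig =
      4 * π * ((1 - Real.cos (Real.sqrt lam * r)) / lam) * f 0 := by
  have h1 : ContDiff ℝ 1 (fderiv ℝ f) := hf.fderiv_right (by norm_num)
  have c0 := hf.continuous
  have c1 := h1.continuous
  have c2 := h1.continuous_fderiv (by norm_num)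
  have hsm : ∀ (t : ℝ) (w : E3), HasDerivAt (fun t : ℝ => t • w) w t := fun t w => by
    simpa using (hasDerivAt_id t).smul_const w
  set M : ℝ → ℝ := fun s => ∫ w : S2, f (s • (w : E3)) ∂sig with hM
  set M1 : ℝ → ℝ := fun s => ∫ w : S2, fderiv ℝ f (s • (w : E3)) w ∂sig with hM1
  set M2 : ℝ → ℝ := fun s => ∫ w : S2, fderiv ℝ (fderiv ℝ f) (s • (w : E3)) w w ∂sig with hM2
  have dM : ∀ s, HasDerivAt M (M1 s) s := fun s =>
    sig_hasDerivAt (g := fun s w => f (s • (w : E3)))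
      (g' := fun s w => fderiv ℝ f (s • (w : E3)) w) (fun t => by fun_prop) (by fun_prop)
      (fun t w => ((hf.differentiable (by norm_num)) _).hasFDerivAt.comp_hasDerivAt t
        (hsm t w)) s
  have dM1 : ∀ s, HasDerivAt M1 (M2 s) s := fun s =>
    sig_hasDerivAt (g := fun s w => fderiv ℝ f (s • (w : E3)) w)
      (g' := fun s w => fderiv ℝ (fderiv ℝ f) (s • (w : E3)) w w) (fun t => by fun_prop)
      (by fun_prop)
      (fun t w => line_deriv2 hf t w) s
  have ode : ∀ s ∈ Ioc 0 r, 2 * M1 s + s * M2 s = - lam * (s * M s) := by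
    intro s hs
    have := sphere_identity_scaled hf s
    have e : ∀ w : S2, euclidLaplacian f (s • (w : E3)) = -lam * f (s • (w : E3)) := fun w =>
      heig _ (by simp [norm_smul, abs_of_pos hs.1, hs.2])
    simp only [e] at this
    rw [integral_sub, integral_sub, integral_const_mul, integral_const_mul, integral_const_mul,
      integral_const_mul] at this
    · change s ^ 2 * (-lam * M s) - s ^ 2 * M2 s - 2 * s * M1 s = 0 at this
      apply mul_left_cancel₀ hs.1.ne'
      linarith
    all_goals exact sig_int_cont (by fun_prop)
  have cM : Continuous M := continuous_iff_continuousAt.2 fun s => (dM s).continuousAt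
  have cM1 : Continuous M1 := continuous_iff_continuousAt.2 fun s => (dM1 s).continuousAt
  have M0 : M 0 = 4 * π * f 0 := by
    simp only [hM, zero_smul, integral_const, sig_univ, smul_eq_mul]
  have dF : ∀ s, HasDerivAt (fun s => s * M s) (M s + s * M1 s) s := fun s => by
    refine ((hasDerivAt_id s).mul (dM s)).congr_deriv ?_
    simp
  have dF1 : ∀ s ∈ Ioo 0 r, HasDerivAt (fun s => M s + s * M1 s) (-lam * (s * M s)) s :=
    fun s hs => by
      rw [← ode s ⟨hs.1, hs.2.le⟩]
      refine ((dM s).add ((hasDerivAt_id s).mul (dM1 s))).congr_deriv ?_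
      simp only [id_eq]; ring
  set k := Real.sqrt lam with hk
  have hk2 : k * k = lam := Real.mul_self_sqrt hlam.le
  have dsin : ∀ s, HasDerivAt (fun s => Real.sin (k * s)) (Real.cos (k * s) * k) s := fun s => by
    simpa using ((hasDerivAt_id s).const_mul k).sin
  have dcos : ∀ s, HasDerivAt (fun s => Real.cos (k * s)) (-Real.sin (k * s) * k) s := fun s => by
    simpa using ((hasDerivAt_id s).const_mul k).cos
  have u := const_of_deriv_zero (r := r) hr
    (u := fun s => (s * M s) * (k * Real.sin (k * s)) + (M s + s * M1 s) * Real.cos (k * s))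
    (by fun_prop) (fun s hs => by
      refine (((dF s).mul ((dsin s).const_mul k)).add ((dF1 s hs).mul (dcos s))).congr_deriv ?_
      rw [← hk2]; ring)
  have v := const_of_deriv_zero (r := r) hr
    (u := fun s => (s * M s) * (k * Real.cos (k * s)) - (M s + s * M1 s) * Real.sin (k * s))
    (by fun_prop) (fun s hs => by
      refine (((dF s).mul ((dcos s).const_mul k)).sub ((dF1 s hs).mul (dsin s))).congr_deriv ?_
      rw [← hk2]; ring)
  simp only [mul_zero, zero_mul, Real.sin_zero, Real.cos_zero, mul_one, zero_add, add_zero,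
    sub_zero] at u v
  have F1r : M r + r * M1 r = M 0 * Real.cos (k * r) := by
    have := Real.sin_sq_add_cos_sq (k * r)
    linear_combination Real.cos (k * r) * u - Real.sin (k * r) * v - (M r + r * M1 r) * this
  have ftc := intervalIntegral.integral_eq_sub_of_hasDerivAt_of_le hr.le
    (f := fun s => M s + s * M1 s) (f' := fun s => -lam * (s * M s)) (by fun_prop) dF1
    (Continuous.intervalIntegrable (by fun_prop) _ _)
  rw [intervalIntegral.integral_const_mul, F1r, zero_mul, add_zero, M0] at ftc
  field_simp
  linarith

lemma centered {f : E3 → ℝ} (hf : ContDiff ℝ 2 f) {lam r : ℝ} (hlam : 0 < lam)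
    (hr : 0 < r) (heig : ∀ y, ‖y‖ ≤ r → euclidLaplacian f y = -lam * f y) :
    ∫ y in Metric.closedBall (0 : E3) r, f y / ‖y‖ =
      4 * π * ((1 - Real.cos (Real.sqrt lam * r)) / lam) * f 0 := by
  rw [← radial_integral hf hlam hr heig]
  have hIntg : Integrable (fun y : E3 => (Iic r).indicator (fun s => s⁻¹) ‖y‖) := by
    rw [integrable_fun_norm_addHaar]
    have : IntegrableOn (fun s : ℝ => s) (Ioc 0 r) := 
      (continuous_id.integrableOn_Icc).mono_set Ioc_subset_Icc_self
    have h2 := (integrable_indicator_iff measurableSet_Ioc).2 this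
    refine (h2.integrableOn (s := Ioi 0)).congr_fun ?_ measurableSet_Ioi
    intro s hs
    have hs' : 0 < s := hs
    by_cases h : s ≤ r
    · simp [indicator, h, hs']; field_simp
    · simp [indicator, h]
  obtain ⟨C, hC⟩ := (isCompact_closedBall (0 : E3) r).exists_bound_of_continuousOn
    hf.continuous.continuousOn
  have hIntg2 : Integrable ((Metric.closedBall (0 : E3) r).indicator fun y => f y / ‖y‖) := by
    refine (hIntg.const_mul C).mono' ?_ ?_
    · refine (Measurable.indicator ?_ measurableSet_closedBall).aestronglyMeasurable
      have := hf.continuous.measurable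
      fun_prop
    · refine Eventually.of_forall fun y => ?_
      by_cases h : ‖y‖ ≤ r
      · have := hC y (by simpa using h)
        simp only [indicator, Metric.mem_closedBall, dist_zero_right, h, if_true, mem_Iic]
        rw [div_eq_mul_inv, norm_mul, norm_inv, norm_norm]
        gcongr
      · simp [indicator, h]
  rw [← integral_indicator measurableSet_closedBall, polar hIntg2,
    intervalIntegral.integral_of_le hr.le, ← integral_indicator measurableSet_Ioi,
    ← integral_indicator measurableSet_Ioc]
  congr 1
  funext s
  by_cases hs : 0 < s
  · by_cases h : s ≤ r
    · simp [indicator, hs, h, norm_smul, abs_of_pos hs, integral_div]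
      field_simp
    · simp [indicator, hs, h, norm_smul, abs_of_pos hs]
  · simp [indicator, hs]

/-- **Theorem 4 (n = 3).** If `−Δφ = λφ` on a neighborhood of the closed ball
`B(x,r) ⊂ ℝ³`, then `∫_{‖x−y‖ ≤ r} φ(y)/‖y−x‖ dy = 4π (1 − cos(√λ·r))/λ · φ(x)`. -/
theorem eigenfunction_coulomb_identity (lam : ℝ) (hlam : 0 < lam)
    (x : EuclideanSpace ℝ (Fin 3)) (r : ℝ) (hr : 0 < r)
    (U : Set (EuclideanSpace ℝ (Fin 3))) (hU : IsOpen U) (hBU : Metric.closedBall x r ⊆ U)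
    (φ : EuclideanSpace ℝ (Fin 3) → ℝ) (hφ : ContDiffOn ℝ (⊤ : ℕ∞) φ U)
    (heig : ∀ y ∈ U, euclidLaplacian φ y = -lam * φ y) :
    ∫ y in Metric.closedBall x r, φ y / ‖y - x‖ =
      4 * π * ((1 - Real.cos (Real.sqrt lam * r)) / lam) * φ x := by
  obtain ⟨δ, hδ, hsub⟩ := (isCompact_closedBall x r).exists_cthickening_subset_open hU hBU
  rw [cthickening_closedBall hδ.le hr.le] at hsub
  let χ : ContDiffBump x := ⟨r + δ / 3, r + δ / 2, by positivity, by linarith⟩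
  have hχout : χ.rOut = r + δ / 2 := rfl
  have hχin : χ.rIn = r + δ / 3 := rfl
  have hg : ContDiff ℝ 2 (fun y => χ y * φ y) := by
    rw [contDiff_iff_contDiffAt]
    intro y
    by_cases hy : y ∈ U
    · exact χ.contDiff.contDiffAt.mul
        ((hφ.contDiffAt (hU.mem_nhds hy)).of_le (by exact_mod_cast le_top))
    · have hev : (fun y => χ y * φ y) =ᶠ[𝓝 y] fun _ => 0 := by
        have hy2 : y ∉ Metric.closedBall x (r + δ / 2) := fun h => hy (hsub
          (Metric.closedBall_subset_closedBall (by linarith) h))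
        filter_upwards [Metric.isClosed_closedBall.isOpen_compl.mem_nhds hy2] with z hz
        have : χ z = 0 := χ.zero_of_le_dist (by
          rw [hχout]; simp only [mem_compl_iff, Metric.mem_closedBall, not_le] at hz; exact hz.le)
        simp [this]
      exact contDiffAt_const.congr_of_eventuallyEq hev
  have heq : ∀ y ∈ Metric.closedBall x r, (fun y => χ y * φ y) =ᶠ[𝓝 y] φ := by
    intro y hy
    have : y ∈ Metric.ball x (r + δ / 3) := Metric.closedBall_subset_ball (by linarith) hy
    filter_upwards [Metric.isOpen_ball.mem_nhds this] with z hz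
    have : χ z = 1 := χ.one_of_mem_closedBall (by rw [hχin]; exact Metric.ball_subset_closedBall hz)
    simp [this]
  have hlap : ∀ f : E3 → ℝ, ∀ y, euclidLaplacian (fun z => f (z + x)) y
      = euclidLaplacian f (y + x) := by
    intro f y
    unfold euclidLaplacian
    refine Finset.sum_congr rfl fun i _ => ?_
    simp only [fderiv_comp_add_right]
    rw [fderiv_comp_add_right (f := fun z => fderiv ℝ f z (EuclideanSpace.single i 1))]
  have hlap2 : ∀ f g : E3 → ℝ, ∀ y, f =ᶠ[𝓝 y] g → euclidLaplacian f y = euclidLaplacian g y := by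
    intro f g y h
    unfold euclidLaplacian
    refine Finset.sum_congr rfl fun i _ => ?_
    have : (fun y => fderiv ℝ f y (EuclideanSpace.single i 1)) =ᶠ[𝓝 y]
        (fun y => fderiv ℝ g y (EuclideanSpace.single i 1)) := by
      filter_upwards [h.fderiv (𝕜 := ℝ)] with z hz
      rw [hz]
    rw [this.fderiv_eq]
  have main := centered (f := fun z => χ (z + x) * φ (z + x))
    (hg.comp (contDiff_id.add contDiff_const)) hlam hr (by
    intro y hy
    have hyx : y + x ∈ Metric.closedBall x r := by simpa [dist_eq_norm] using hy
    have h3 := hlap (fun z => χ z * φ z) y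
    refine h3.trans ?_
    rw [hlap2 _ _ _ (heq _ hyx), heig _ (hBU hyx)]
    congr 1
    exact (heq _ hyx).self_of_nhds.symm)
  have h0 : χ x * φ x = φ x := (heq x (by simp [hr.le])).self_of_nhds
  simp only [zero_add, h0] at main
  rw [← main, ← integral_indicator measurableSet_closedBall,
    ← integral_indicator measurableSet_closedBall, ← integral_add_right_eq_self _ x]
  congr 1
  funext y
  by_cases hy : ‖y‖ ≤ r
  · have hyx : y + x ∈ Metric.closedBall x r := by simpa [dist_eq_norm] using hy
    have : χ (y + x) * φ (y + x) = φ (y + x) := (heq _ hyx).self_of_nhds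
    rw [indicator_of_mem hyx, indicator_of_mem (by simpa using hy), this]
    simp
  · rw [indicator_of_notMem, indicator_of_notMem] <;> simpa [dist_eq_norm] using hy
end
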